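/- arXiv:0911.4041 — 2 statements merged into one kernel-verified Lean document; each statement's English description precedes it below -/
import Mathlib

section
/- Under hypotheses (H1), (H2) and the periodicity of Ã_ε and C̃_ε in τ and θ, for any μ > 0 and ν > 0 there exists a unique S_μ^ν = S_μ^ν(t,τ,θ,x) ∈ C⁰ ∩ L²(ℝ×𝕋²), periodic of period 1 in θ, solving μS_μ^ν + ∂S_μ^ν/∂θ − ∇·((Ã_ε(t,τ,·,·)+ν)∇S_μ^ν) = ∇·C̃_ε(t,τ,·,·), regular in the parameters t and τ. Moreover there is a constant γ₃, depending only on γ and ν, such that sup_θ |∫_{𝕋²} S_μ^ν(θ,x) dx| = 0, ‖∂S_μ^ν/∂θ‖_{L²_#(ℝ×𝕋²)} ≤ γ₃, ‖∇S_μ^ν‖_{L^∞_#(ℝ,L²(𝕋²))} ≤ γ₃, ‖S_μ^ν‖_{L^∞_#(ℝ,L²(𝕋²))} ≤ γ₃, ‖∂S_μ^ν/∂t‖_{L^∞_#(ℝ,L²(𝕋²))} ≤ γ₃ and ‖∂S_μ^ν/∂τ‖_{L^∞_#(ℝ,L²(𝕋²))} ≤ √ε γ₃. -/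
open MeasureTheory Filter

noncomputable section

/-- Fundamental domain of the two-dimensional torus `𝕋² = ℝ²/ℤ²`. -/
def Tsq : Set (ℝ × ℝ) := Set.Icc (0:ℝ) 1 ×ˢ Set.Icc (0:ℝ) 1

/-- Periodicity of period 1 in each space direction: a function on `ℝ²`
defining a function on the torus `𝕋²`. -/
def SpacePeriodic {E : Type*} (f : (ℝ × ℝ) → E) : Prop :=
  ∀ x : ℝ × ℝ, f (x + (1, 0)) = f x ∧ f (x + (0, 1)) = f x

/-- Gradient of a scalar function on `ℝ²`. -/
def grad (f : (ℝ × ℝ) → ℝ) (x : ℝ × ℝ) : ℝ × ℝ :=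
  (fderiv ℝ f x (1, 0), fderiv ℝ f x (0, 1))

/-- Divergence of a vector field on `ℝ²`. -/
def div2 (F : (ℝ × ℝ) → ℝ × ℝ) (x : ℝ × ℝ) : ℝ :=
  fderiv ℝ (fun y => (F y).1) x (1, 0) + fderiv ℝ (fun y => (F y).2) x (0, 1)

/-- Laplacian of a scalar function on `ℝ²`. -/
def lap (f : (ℝ × ℝ) → ℝ) (x : ℝ × ℝ) : ℝ := div2 (grad f) x

/-- `L²(𝕋²)` norm of a scalar function. -/
def L2norm (f : (ℝ × ℝ) → ℝ) : ℝ := (∫ x in Tsq, (f x) ^ 2) ^ (1/2 : ℝ)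

/-- `L^∞(𝕋²)` norm of a (bounded) function. -/
def LinfNorm (f : (ℝ × ℝ) → ℝ) : ℝ := ⨆ x : ℝ × ℝ, |f x|

/-- `L²_#(ℝ×𝕋²)` norm : `(∫₀¹ ∫_{𝕋²} f² dx dθ)^{1/2}` for functions
1-periodic in `θ`. -/
def L2sharpNorm (f : ℝ → (ℝ × ℝ) → ℝ) : ℝ :=
  (∫ θ in Set.Icc (0:ℝ) 1, ∫ x in Tsq, (f θ x) ^ 2) ^ (1/2 : ℝ)

/-- `L^∞_#(ℝ, L²(𝕋²))` norm : `sup_{θ ∈ [0,1]} ‖f(θ,·)‖_{L²(𝕋²)}`. -/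
def LinfL2Norm (f : ℝ → (ℝ × ℝ) → ℝ) : ℝ :=
  ⨆ θ : Set.Icc (0:ℝ) 1, L2norm (f θ.1)

/-- Regular nonnegative scalar coefficient `Ã_ε(t,τ,θ,x)` and regular vector field
`C̃_ε(t,τ,θ,x)`, 1-periodic in `τ` and in `θ` (and in space), together with the
bounds (H1) and (H2) with constant `γ`. -/
def CoeffBasic (γ ε : ℝ)
    (A : ℝ → ℝ → ℝ → (ℝ × ℝ) → ℝ) (C : ℝ → ℝ → ℝ → (ℝ × ℝ) → ℝ × ℝ) : Prop :=
  ContDiff ℝ (⊤ : ℕ∞) (fun p : ℝ × ℝ × ℝ × (ℝ × ℝ) => A p.1 p.2.1 p.2.2.1 p.2.2.2) ∧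
  ContDiff ℝ (⊤ : ℕ∞) (fun p : ℝ × ℝ × ℝ × (ℝ × ℝ) => C p.1 p.2.1 p.2.2.1 p.2.2.2) ∧
  (∀ t τ θ x, 0 ≤ A t τ θ x) ∧
  (∀ t τ θ x, A t (τ + 1) θ x = A t τ θ x ∧ A t τ (θ + 1) x = A t τ θ x ∧
      C t (τ + 1) θ x = C t τ θ x ∧ C t τ (θ + 1) x = C t τ θ x) ∧
  (∀ t τ θ, SpacePeriodic (A t τ θ) ∧ SpacePeriodic (C t τ θ)) ∧
  -- (H1)
  (∀ t τ θ x,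
    |A t τ θ x| ≤ γ ∧ ‖C t τ θ x‖ ≤ γ ∧
    |deriv (fun s => A s τ θ x) t| ≤ γ ∧ ‖deriv (fun s => C s τ θ x) t‖ ≤ γ ∧
    |deriv (fun σ => A t τ σ x) θ| ≤ γ ∧ ‖deriv (fun σ => C t τ σ x) θ‖ ≤ γ ∧
    ‖grad (A t τ θ) x‖ ≤ γ ∧ |div2 (C t τ θ) x| ≤ γ ∧
    ‖deriv (fun s => grad (A s τ θ) x) t‖ ≤ γ ∧
    |deriv (fun s => div2 (C s τ θ) x) t| ≤ γ) ∧
  -- (H2)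
  (∀ t τ θ x,
    |deriv (fun s => A t s θ x) τ| ≤ Real.sqrt ε * γ ∧
    ‖deriv (fun s => C t s θ x) τ‖ ≤ Real.sqrt ε * γ ∧
    ‖deriv (fun s => grad (A t s θ) x) τ‖ ≤ Real.sqrt ε * γ)

/-- The threshold hypotheses (H3), (H4) and (H5). -/
def CoeffThreshold (γ Gthr θa θw ε : ℝ)
    (A : ℝ → ℝ → ℝ → (ℝ × ℝ) → ℝ) (C : ℝ → ℝ → ℝ → (ℝ × ℝ) → ℝ × ℝ) : Prop :=
  -- (H3)
  (0 < Gthr ∧ θa < θw ∧ θa ∈ Set.Icc (0:ℝ) 1 ∧ θw ∈ Set.Icc (0:ℝ) 1 ∧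
    ∀ t τ : ℝ, ∀ x : ℝ × ℝ, ∀ θ ∈ Set.Icc θa θw, Gthr ≤ A t τ θ x) ∧
  -- (H4)
  (∀ t τ θ x, A t τ θ x ≤ Gthr →
    deriv (fun s => A s τ θ x) t = 0 ∧ deriv (fun s => A t s θ x) τ = 0 ∧
    grad (A t τ θ) x = 0 ∧
    deriv (fun s => C s τ θ x) t = 0 ∧ deriv (fun s => C t s θ x) τ = 0 ∧
    div2 (C t τ θ) x = 0) ∧
  -- (H5)
  (∀ t τ θ x,
    ‖C t τ θ x‖ ≤ γ * A t τ θ x ∧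
    ‖C t τ θ x‖ ^ 2 ≤ γ * A t τ θ x ∧
    ‖grad (A t τ θ) x‖ ≤ γ * A t τ θ x ∧
    |deriv (fun s => A s τ θ x) t| ≤ γ * A t τ θ x ∧
    ‖deriv (fun s => grad (A s τ θ) x) t‖ ^ 2 ≤ γ * A t τ θ x ∧
    |deriv (fun s => A t s θ x) τ| ^ 2 ≤ ε * γ * A t τ θ x ∧
    ‖deriv (fun s => grad (A t s θ) x) τ‖ ^ 2 ≤ ε * γ * A t τ θ x ∧
    |div2 (C t τ θ) x| ≤ γ * A t τ θ x ∧
    ‖deriv (fun s => C s τ θ x) t‖ ≤ γ * A t τ θ x ∧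
    ‖deriv (fun s => C s τ θ x) t‖ ^ 2 ≤ γ ^ 2 * A t τ θ x)

/-- `S(t,τ,·,·)` is, for all values of the parameters `t` and `τ`, a classical
solution, 1-periodic in `θ`, of the regularized cell problem
`μ S + ∂S/∂θ − ∇·((Ã_ε(t,τ,·,·) + ν)∇S) = ∇·C̃_ε(t,τ,·,·)`,
depending regularly on `t` and `τ`. -/
def IsRegCellSolP (A : ℝ → ℝ → ℝ → (ℝ × ℝ) → ℝ) (C : ℝ → ℝ → ℝ → (ℝ × ℝ) → ℝ × ℝ)
    (μ ν : ℝ) (S : ℝ → ℝ → ℝ → (ℝ × ℝ) → ℝ) : Prop :=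
  ContDiff ℝ (⊤ : ℕ∞) (fun p : ℝ × ℝ × ℝ × (ℝ × ℝ) => S p.1 p.2.1 p.2.2.1 p.2.2.2) ∧
  (∀ t τ θ x, S t τ (θ + 1) x = S t τ θ x) ∧
  (∀ t τ θ, SpacePeriodic (S t τ θ)) ∧
  (∀ t τ θ x, μ * S t τ θ x + deriv (fun σ => S t τ σ x) θ
      - div2 (fun y => (A t τ θ y + ν) • grad (S t τ θ) y) x = div2 (C t τ θ) x)

/-- `S(t,τ,·,·)` is, for all values of the parameters `t` and `τ`, a classical
solution, 1-periodic in `θ` and with zero spatial mean for every `θ`, of the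
`ν`-regularized cell problem
`∂S/∂θ − ∇·((Ã_ε(t,τ,·,·) + ν)∇S) = ∇·C̃_ε(t,τ,·,·)`. -/
def IsNuCellSolP (A : ℝ → ℝ → ℝ → (ℝ × ℝ) → ℝ) (C : ℝ → ℝ → ℝ → (ℝ × ℝ) → ℝ × ℝ)
    (ν : ℝ) (S : ℝ → ℝ → ℝ → (ℝ × ℝ) → ℝ) : Prop :=
  ContDiff ℝ (⊤ : ℕ∞) (fun p : ℝ × ℝ × ℝ × (ℝ × ℝ) => S p.1 p.2.1 p.2.2.1 p.2.2.2) ∧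
  (∀ t τ θ x, S t τ (θ + 1) x = S t τ θ x) ∧
  (∀ t τ θ, SpacePeriodic (S t τ θ)) ∧
  (∀ t τ θ x, deriv (fun σ => S t τ σ x) θ
      - div2 (fun y => (A t τ θ y + ν) • grad (S t τ θ) y) x = div2 (C t τ θ) x) ∧
  (∀ t τ θ : ℝ, ∫ x in Tsq, S t τ θ x = 0)

namespace CellProof
set_option maxSynthPendingDepth 3

/-! ### Periodic functions lifted to the torus -/

abbrev TT := UnitAddTorus (Fin 3)
abbrev YY := Fin 3 → ℝ

/-- The projection `ℝ³ → 𝕋³`. -/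
def prj (y : YY) : TT := fun i => (y i : UnitAddCircle)

/-- A section of the projection. -/
def rep (y : TT) : YY := fun i => Quotient.out (y i)

lemma prj_rep (y : TT) : prj (rep y) = y := by
  funext i
  exact Quotient.out_eq _

lemma isOpenQuotientMap_prj : IsOpenQuotientMap prj := by
  apply IsOpenQuotientMap.piMap
  intro i
  exact QuotientAddGroup.isOpenQuotientMap_mk

lemma prj_add (a b : YY) : prj (a + b) = prj a + prj b := by
  funext i
  rfl

section lift
variable {Z : Type} [NormedAddCommGroup Z] [NormedSpace ℝ Z] (ι : YY →L[ℝ] Z)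

def Per {F : Type} (f : Z → F) : Prop := ∀ z (n : Fin 3 → ℤ), f (z + ι (fun i => (n i : ℝ))) = f z

lemma rep_prj (y : YY) : ∃ n : Fin 3 → ℤ, rep (prj y) = y + fun i => (n i : ℝ) := by
  have h : ∀ i, ∃ n : ℤ, rep (prj y) i = y i + n := by
    intro i
    have h1 : ((rep (prj y) i : ℝ) : UnitAddCircle) = (y i : UnitAddCircle) :=
      congrFun (prj_rep (prj y)) i
    have h2 := (QuotientAddGroup.eq_iff_sub_mem).1 h1
    obtain ⟨n, hn⟩ := AddSubgroup.mem_zmultiples_iff.1 h2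
    refine ⟨n, ?_⟩
    simp at hn
    linarith
  choose n hn using h
  exact ⟨n, funext hn⟩

variable {ι}
lemma Per.rep_prj {F : Type} {f : Z → F} (hf : Per ι f) (z : Z) (y : YY) :
    f (z + ι (rep (prj y))) = f (z + ι y) := by
  obtain ⟨n, hn⟩ := CellProof.rep_prj y
  rw [hn, map_add, ← add_assoc, hf]

lemma Per.cont {F : Type} [TopologicalSpace F] {f : Z → F} (hf : Per ι f) (hc : Continuous f) :
    Continuous (fun p : Z × TT => f (p.1 + ι (rep p.2))) := by
  have hq : IsOpenQuotientMap (Prod.map (id : Z → Z) prj) :=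
    IsOpenQuotientMap.id.prodMap isOpenQuotientMap_prj
  rw [hq.isQuotientMap.continuous_iff]
  have : ((fun p : Z × TT => f (p.1 + ι (rep p.2))) ∘ Prod.map (id : Z → Z) prj)
      = fun p : Z × YY => f (p.1 + ι p.2) := by
    funext p
    exact hf.rep_prj p.1 p.2
  rw [this]
  fun_prop

variable (ι)
/-- `tl f q` is the function `y ↦ f (q + ι y)` on the torus. -/
def tl {F : Type} [TopologicalSpace F] [Zero F] (f : Z → F) (q : Z) : C(TT, F) :=
  open Classical in
  if h : Continuous (fun y => f (q + ι (rep y))) then ⟨_, h⟩ else 0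

variable {ι}
lemma tl_apply {F : Type} [TopologicalSpace F] [Zero F] {f : Z → F} (hf : Per ι f)
    (hc : Continuous f) (q : Z) (y : TT) : tl ι f q y = f (q + ι (rep y)) := by
  have h : Continuous (fun y => f (q + ι (rep y))) :=
    (hf.cont hc).comp (Continuous.prodMk continuous_const continuous_id)
  simp [tl, h]

lemma tl_apply_prj {F : Type} [TopologicalSpace F] [Zero F] {f : Z → F} (hf : Per ι f)
    (hc : Continuous f) (q : Z) (y : YY) : tl ι f q (prj y) = f (q + ι y) := by
  rw [tl_apply hf hc, hf.rep_prj]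

/-- `C(𝕋³, Z →L F) → (Z →L C(𝕋³, F))`. -/
def swapCLM (F : Type) [NormedAddCommGroup F] [NormedSpace ℝ F] :
    C(TT, Z →L[ℝ] F) →L[ℝ] (Z →L[ℝ] C(TT, F)) :=
  LinearMap.mkContinuous₂
    (LinearMap.mk₂ ℝ (fun (g : C(TT, Z →L[ℝ] F)) (v : Z) =>
        (⟨fun y => g y v, by fun_prop⟩ : C(TT, F)))
      (by intros; ext; simp) (by intros; ext; simp) (by intros; ext; simp) (by intros; ext; simp)) 1
    (by
      intro g v
      rw [ContinuousMap.norm_le _ (by positivity)]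
      intro y
      simp only [LinearMap.mk₂_apply, ContinuousMap.coe_mk, one_mul]
      exact ((g y).le_opNorm v).trans (by gcongr; exact g.norm_coe_le_norm y))

lemma swapCLM_apply (F : Type) [NormedAddCommGroup F] [NormedSpace ℝ F]
    (g : C(TT, Z →L[ℝ] F)) (v : Z) (y : TT) : swapCLM F g v y = g y v := rfl

lemma Per.fderiv {F : Type} [NormedAddCommGroup F] [NormedSpace ℝ F] {f : Z → F}
    (hf : Per ι f) : Per ι (fderiv ℝ f) := by
  intro z n
  rw [← fderiv_comp_add_right]
  congr 1
  funext w
  exact hf w n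

lemma continuous_tl {F : Type} [NormedAddCommGroup F] [NormedSpace ℝ F] {f : Z → F}
    (hf : Per ι f) (hc : Continuous f) : Continuous (tl ι f) := by
  have := (ContinuousMap.curry ⟨_, hf.cont hc⟩).continuous
  convert this using 1
  funext q
  ext y
  rw [tl_apply hf hc]
  rfl

lemma hasFDerivAt_tl {F : Type} [NormedAddCommGroup F] [NormedSpace ℝ F] {f : Z → F}
    (hf : Per ι f) (hc : ContDiff ℝ 1 f) (q : Z) :
    HasFDerivAt (tl ι f) (swapCLM F (tl ι (fderiv ℝ f) q)) q := by
  have hc' : Continuous (fderiv ℝ f) := hc.continuous_fderiv one_ne_zero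
  have hcont := continuous_tl hf.fderiv hc'
  rw [hasFDerivAt_iff_isLittleO, Asymptotics.isLittleO_iff]
  intro c hpos
  have h1 := Metric.continuousAt_iff.1 (hcont.continuousAt (x := q)) c hpos
  obtain ⟨δ, hδ, h1⟩ := h1
  filter_upwards [Metric.ball_mem_nhds q hδ] with q' hq'
  rw [ContinuousMap.norm_le _ (by positivity)]
  intro y
  have h2 : ∀ z ∈ Metric.ball q δ, HasFDerivWithinAt (fun z => f (z + ι (rep y)))
      (_root_.fderiv ℝ f (z + ι (rep y))) (Metric.ball q δ) z := by
    intro z _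
    have h3 : HasFDerivAt f (_root_.fderiv ℝ f (z + ι (rep y))) (z + ι (rep y)) :=
      (hc.differentiable one_ne_zero _).hasFDerivAt
    exact ((hasFDerivAt_comp_add_right (f := f) (ι (rep y))).2 h3).hasFDerivWithinAt
  have h4 : ∀ z ∈ Metric.ball q δ, ‖_root_.fderiv ℝ f (z + ι (rep y))
      - _root_.fderiv ℝ f (q + ι (rep y))‖ ≤ c := by
    intro z hz
    have := h1 hz
    rw [dist_eq_norm] at this
    have h5 := (tl ι (_root_.fderiv ℝ f) z - tl ι (_root_.fderiv ℝ f) q).norm_coe_le_norm y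
    rw [ContinuousMap.sub_apply, tl_apply hf.fderiv hc', tl_apply hf.fderiv hc'] at h5
    exact h5.trans this.le
  have := (convex_ball q δ).norm_image_sub_le_of_norm_hasFDerivWithin_le' h2 h4
    (Metric.mem_ball_self hδ) hq'
  simpa [swapCLM_apply, tl_apply hf.fderiv hc', tl_apply hf hc.continuous] using this

lemma contDiff_tl_nat (n : ℕ) : ∀ {F : Type} [NormedAddCommGroup F] [NormedSpace ℝ F] {f : Z → F},
    Per ι f → ContDiff ℝ (⊤ : ℕ∞) f → ContDiff ℝ n (tl ι f) := by
  induction n with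
  | zero =>
    intro F _ _ f hf hc
    exact contDiff_zero.2 (continuous_tl hf hc.continuous)
  | succ n ih =>
    intro F _ _ f hf hc
    have h1 := (contDiff_infty_iff_fderiv.1 hc).2
    have h2 : ContDiff ℝ n (tl ι (_root_.fderiv ℝ f)) := ih hf.fderiv h1
    have h3 : ContDiff ℝ n (fun g => swapCLM (Z := Z) F g) :=
      ContinuousLinearMap.contDiff (swapCLM (Z := Z) F)
    exact contDiff_succ_iff_hasFDerivAt.2 ⟨fun q => swapCLM F (tl ι (_root_.fderiv ℝ f) q),
      h3.comp h2,
      fun q => hasFDerivAt_tl hf (hc.of_le (by exact_mod_cast le_top)) q⟩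

lemma contDiff_tl {F : Type} [NormedAddCommGroup F] [NormedSpace ℝ F] {f : Z → F}
    (hf : Per ι f) (hc : ContDiff ℝ (⊤ : ℕ∞) f) : ContDiff ℝ (⊤ : ℕ∞) (tl ι f) :=
  contDiff_infty.2 fun n => contDiff_tl_nat n hf hc

/-- directional derivative -/
def pd {F : Type} [NormedAddCommGroup F] [NormedSpace ℝ F] (v : Z) (f : Z → F) (z : Z) : F :=
  fderiv ℝ f z v

lemma pd_contDiff {F : Type} [NormedAddCommGroup F] [NormedSpace ℝ F] (v : Z) {f : Z → F}
    (hc : ContDiff ℝ (⊤ : ℕ∞) f) : ContDiff ℝ (⊤ : ℕ∞) (pd v f) :=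
  (contDiff_infty_iff_fderiv.1 hc).2.clm_apply contDiff_const

lemma pd_per {F : Type} [NormedAddCommGroup F] [NormedSpace ℝ F] (v : Z) {f : Z → F}
    (hf : Per ι f) : Per ι (pd v f) := by
  intro z n
  simp only [pd, hf.fderiv z n]

lemma pd_tl {F : Type} [NormedAddCommGroup F] [NormedSpace ℝ F] (v : Z) {f : Z → F}
    (hf : Per ι f) (hc : ContDiff ℝ (⊤ : ℕ∞) f) (q : Z) :
    pd v (tl ι f) q = tl ι (pd v f) q := by
  rw [pd, (hasFDerivAt_tl hf (hc.of_le (by exact_mod_cast le_top)) q).fderiv]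
  ext y
  rw [swapCLM_apply, tl_apply hf.fderiv (contDiff_infty_iff_fderiv.1 hc).2.continuous,
    tl_apply (pd_per v hf) (pd_contDiff v hc).continuous]
  rfl

end lift
end CellProof

namespace CellProof
set_option maxSynthPendingDepth 3

local instance instMS : MeasureSpace UnitAddCircle := ⟨AddCircle.haarAddCircle⟩
local instance instHaar : Measure.IsAddHaarMeasure (volume : Measure UnitAddCircle) :=
  inferInstanceAs (Measure.IsAddHaarMeasure AddCircle.haarAddCircle)
local instance instProb : IsProbabilityMeasure (volume : Measure UnitAddCircle) :=
  inferInstanceAs (IsProbabilityMeasure AddCircle.haarAddCircle)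

abbrev KK := Fin 3 → ℤ
/-- The Hilbert space of Fourier coefficients. -/
abbrev HH := lp (fun _ : KK => ℂ) 2
abbrev L2T := Lp ℂ 2 (volume : Measure TT)

/-- Fourier transform on `L²(𝕋³)`. -/
def UU : L2T ≃ₗᵢ[ℂ] HH := UnitAddTorus.mFourierBasis.repr

/-- Fourier coefficients of a continuous function. -/
def coef : C(TT, ℂ) →L[ℂ] HH :=
  (UU.toContinuousLinearEquiv : L2T →L[ℂ] HH) ∘L (ContinuousMap.toLp 2 volume ℂ)

lemma coef_def (f : C(TT, ℂ)) : coef f = UU (ContinuousMap.toLp 2 volume ℂ f) := rfl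

lemma coef_apply (f : C(TT, ℂ)) (k : KK) : coef f k = UnitAddTorus.mFourierCoeff f k := by
  rw [coef_def, ← UnitAddTorus.mFourierCoeff_toLp, ← UnitAddTorus.mFourierBasis_repr]
  rfl

lemma coef_injective : Function.Injective coef := by
  intro f g h
  have := UU.injective h
  exact ContinuousMap.toLp_injective volume this

lemma coef_denseRange : DenseRange coef := by
  have h := ContinuousMap.toLp_denseRange ℂ (volume : Measure TT) ℂ (p := 2) (by simp)
  exact UU.surjective.denseRange.comp h UU.continuous

/-- Multiplication by a continuous function, on Fourier coefficients. -/
def Mop : C(TT, ℂ) →L[ℂ] (HH →L[ℂ] HH) :=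
  ((ContinuousLinearMap.compL ℂ HH L2T HH (UU.toContinuousLinearEquiv : L2T →L[ℂ] HH)) ∘L
    ((ContinuousLinearMap.compL ℂ HH L2T L2T).flip
      (UU.symm.toContinuousLinearEquiv : HH →L[ℂ] L2T))) ∘L
    ((ContinuousLinearMap.mul ℂ ℂ).holderL (volume : Measure TT) ⊤ 2 2 ∘L
      ContinuousMap.toLp ⊤ volume ℂ)

lemma Mop_apply (b : C(TT, ℂ)) (v : HH) :
    Mop b v = UU ((ContinuousLinearMap.mul ℂ ℂ).holder 2 (ContinuousMap.toLp ⊤ volume ℂ b)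
      (UU.symm v)) := rfl

lemma Mop_norm_le (b : C(TT, ℂ)) (c : ℝ) (hc : 0 ≤ c) (hb : ∀ y, ‖b y‖ ≤ c) (v : HH) :
    ‖Mop b v‖ ≤ c * ‖v‖ := by
  rw [Mop_apply, UU.norm_map]
  refine (ContinuousLinearMap.norm_holder_apply_apply_le _ _ _).trans ?_
  rw [UU.symm.norm_map]
  gcongr
  have h1 : ‖ContinuousLinearMap.mul ℂ ℂ‖ ≤ 1 := ContinuousLinearMap.opNorm_mul_le ℂ ℂ
  have h2 : ‖ContinuousMap.toLp ⊤ (volume : Measure TT) ℂ b‖ ≤ c := by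
    refine Lp.norm_le_of_ae_bound hc ?_ |>.trans ?_
    · filter_upwards [ContinuousMap.coeFn_toLp (p := ⊤) (volume : Measure TT) (𝕜 := ℂ) b] with y hy
      rw [hy]
      exact hb y
    · simp
  nlinarith [norm_nonneg (ContinuousMap.toLp ⊤ (volume : Measure TT) ℂ b)]

lemma Mop_coef (b g : C(TT, ℂ)) : Mop b (coef g) = coef (b * g) := by
  rw [Mop_apply, coef_def, coef_def, UU.symm_apply_apply]
  congr 1
  apply Lp.ext
  filter_upwards [ContinuousLinearMap.coeFn_holder (r := 2) (ContinuousLinearMap.mul ℂ ℂ)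
    (ContinuousMap.toLp ⊤ (volume : Measure TT) ℂ b) (ContinuousMap.toLp 2 (volume : Measure TT) ℂ g),
    ContinuousMap.coeFn_toLp (p := ⊤) (volume : Measure TT) (𝕜 := ℂ) b,
    ContinuousMap.coeFn_toLp (p := 2) (volume : Measure TT) (𝕜 := ℂ) g,
    ContinuousMap.coeFn_toLp (p := 2) (volume : Measure TT) (𝕜 := ℂ) (b * g)] with y h1 h2 h3 h4
  rw [h1, h2, h3, h4]
  simp

/-- The characters. -/
def ee (k : KK) (h : YY) : ℂ := UnitAddTorus.mFourier k (prj h)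

lemma ee_eq (k : KK) (h : YY) :
    ee k h = Complex.exp (∑ i, 2 * Real.pi * Complex.I * k i * h i) := by
  rw [Complex.exp_sum]
  simp only [ee, UnitAddTorus.mFourier, ContinuousMap.coe_mk, prj]
  refine Finset.prod_congr rfl fun i _ => ?_
  rw [fourier_coe_apply]
  simp

lemma ee_norm (k : KK) (h : YY) : ‖ee k h‖ = 1 := by
  rw [ee_eq, Complex.norm_exp]
  simp

lemma ee_int (k : KK) (n : Fin 3 → ℤ) : ee k (fun i => (n i : ℝ)) = 1 := by
  have : prj (fun i => (n i : ℝ)) = 0 := by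
    funext i
    exact (QuotientAddGroup.eq_zero_iff _).2 (AddSubgroup.mem_zmultiples_iff.2 ⟨n i, by simp⟩)
  rw [ee, this]
  simp [UnitAddTorus.mFourier]

lemma coef_translate (f g : C(TT, ℂ)) (h : YY) (hfg : ∀ y, g y = f (y + prj h)) (k : KK) :
    coef g k = ee k h * coef f k := by
  rw [coef_apply, coef_apply, UnitAddTorus.mFourierCoeff, UnitAddTorus.mFourierCoeff,
    ← integral_add_right_eq_self (fun t => UnitAddTorus.mFourier (-k) t • f t) (prj h),
    ← integral_const_mul]
  congr 1
  funext t
  rw [hfg]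
  have h2 : UnitAddTorus.mFourier (-k) (t + prj h)
      = UnitAddTorus.mFourier (-k) t * UnitAddTorus.mFourier (-k) (prj h) := by
    simp only [UnitAddTorus.mFourier, ContinuousMap.coe_mk, Pi.add_apply, ← Finset.prod_mul_distrib]
    refine Finset.prod_congr rfl fun i _ => ?_
    simp [fourier_apply, AddCircle.toCircle_add]
  have h3 : ee k h * UnitAddTorus.mFourier (-k) (prj h) = 1 := by
    rw [ee, ← UnitAddTorus.mFourier_add]
    simp [UnitAddTorus.mFourier_zero]
  rw [h2]
  simp only [smul_eq_mul]
  linear_combination (-UnitAddTorus.mFourier (-k) t * f (t + prj h)) * h3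

lemma hasSum_sq (v : HH) : HasSum (fun k => ‖v k‖ ^ 2) (‖v‖ ^ 2) := by
  have := lp.hasSum_norm (p := 2) (by simp) v
  simpa using this

lemma memℓp_two {f : KK → ℂ} (hf : Summable fun k => ‖f k‖ ^ 2) : Memℓp f 2 := by
  apply memℓp_gen
  simpa using hf

/-- Fourier multipliers. -/
lemma exists_mult (m : KK → ℂ) (c : ℝ) (hm : ∀ k, ‖m k‖ ≤ c) :
    ∃ T : HH →L[ℂ] HH, ∀ v k, T v k = m k * v k := by
  have hc : 0 ≤ c := (norm_nonneg _).trans (hm 0)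
  have hle : ∀ v : HH, ∀ k, ‖m k * v k‖ ^ 2 ≤ c ^ 2 * ‖v k‖ ^ 2 := by
    intro v k
    rw [norm_mul, mul_pow]
    gcongr
    exact hm k
  have hmem : ∀ v : HH, Memℓp (fun k => m k * v k) 2 := by
    intro v
    apply memℓp_two
    exact Summable.of_nonneg_of_le (fun k => by positivity) (hle v)
      ((hasSum_sq v).summable.mul_left _)
  let T : HH →ₗ[ℂ] HH :=
    { toFun := fun v => ⟨fun k => m k * v k, hmem v⟩
      map_add' := by
        intro v w
        ext k
        exact mul_add _ _ _
      map_smul' := by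
        intro a v
        ext k
        exact mul_left_comm _ _ _ }
  have hT : ∀ v k, T v k = m k * v k := fun v k => rfl
  refine ⟨T.mkContinuous c ?_, fun v k => rfl⟩
  intro v
  have h1 := hasSum_le (hle v) (by simpa only [hT] using hasSum_sq (T v))
    ((hasSum_sq v).mul_left (c ^ 2))
  rw [← mul_pow] at h1
  exact le_of_sq_le_sq h1 (by positivity)

lemma two_mult_bound {T₁ T₂ : HH →L[ℂ] HH} {m₁ m₂ : KK → ℂ} {c : ℝ}
    (h₁ : ∀ v k, T₁ v k = m₁ k * v k) (h₂ : ∀ v k, T₂ v k = m₂ k * v k)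
    (hm : ∀ k (a b : ℂ), ‖m₁ k * a + m₂ k * b‖ ^ 2 ≤ c ^ 2 * (‖a‖ ^ 2 + ‖b‖ ^ 2)) (v w : HH) :
    ‖T₁ v + T₂ w‖ ^ 2 ≤ c ^ 2 * (‖v‖ ^ 2 + ‖w‖ ^ 2) := by
  refine hasSum_le (fun k => ?_) (hasSum_sq (T₁ v + T₂ w))
    (((hasSum_sq v).add (hasSum_sq w)).mul_left (c ^ 2))
  rw [lp.coeFn_add, Pi.add_apply, h₁, h₂]
  exact hm k _ _

lemma two_mult_bound' {T₁ T₂ : HH →L[ℂ] HH} {m₁ m₂ : KK → ℂ}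
    (h₁ : ∀ v k, T₁ v k = m₁ k * v k) (h₂ : ∀ v k, T₂ v k = m₂ k * v k)
    (hm : ∀ k, ‖m₁ k‖ ^ 2 + ‖m₂ k‖ ^ 2 ≤ 1) (v : HH) :
    ‖T₁ v‖ ^ 2 + ‖T₂ v‖ ^ 2 ≤ ‖v‖ ^ 2 := by
  refine hasSum_le (fun k => ?_) ((hasSum_sq (T₁ v)).add (hasSum_sq (T₂ v))) (hasSum_sq v)
  rw [h₁, h₂, norm_mul, norm_mul, mul_pow, mul_pow, ← add_mul]
  exact mul_le_of_le_one_left (by positivity) (hm k)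

/-- weights -/
def wt (k : ℤ) : ℝ := 1 + (2 * Real.pi * k) ^ 2

lemma wt_pos (k : ℤ) : 0 < wt k := by unfold wt; positivity

lemma summable_wt : Summable (fun k : ℤ => (wt k)⁻¹ ^ 2) := by
  have h : Summable (fun k : ℤ => 1 / (k : ℝ) ^ 2) := Real.summable_one_div_int_pow.2 (by norm_num)
  have h0 : Summable (fun k : ℤ => if k = 0 then (1 : ℝ) else 0) :=
    summable_of_hasFiniteSupport (Set.Finite.subset (Set.finite_singleton 0) (by
      intro k hk
      by_contra h
      simp_all))
  refine Summable.of_nonneg_of_le (fun k => by positivity) (fun k => ?_) (h.add h0)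
  have h1 : 1 ≤ wt k := by unfold wt; nlinarith [sq_nonneg (2 * Real.pi * k)]
  have h2 : (wt k)⁻¹ ≤ 1 := inv_le_one_of_one_le₀ h1
  have h3 : 0 < (wt k)⁻¹ := inv_pos.2 (wt_pos k)
  by_cases hk : k = 0
  · subst hk
    simp only [Int.cast_zero, if_true]
    have h7 : (wt 0)⁻¹ ^ 2 ≤ 1 := by nlinarith
    simpa using h7
  · simp only [hk, if_false, add_zero]
    have h4 : (0 : ℝ) < (k : ℝ) ^ 2 := by positivity
    have h5 : (k : ℝ) ^ 2 ≤ wt k := by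
      unfold wt
      have := Real.pi_gt_three
      have h8 : (1 : ℝ) ≤ (2 * Real.pi) ^ 2 := by nlinarith
      rw [mul_pow]
      nlinarith
    have h6 : (wt k)⁻¹ ≤ 1 / (k : ℝ) ^ 2 := by
      rw [one_div]
      gcongr
    nlinarith

lemma summable_wt3 : Summable (fun k : KK => ((wt (k 0))⁻¹ * ((wt (k 1))⁻¹ * (wt (k 2))⁻¹)) ^ 2) := by
  let e : KK ≃ ℤ × ℤ × ℤ :=
    { toFun := fun k => (k 0, k 1, k 2)
      invFun := fun p => ![p.1, p.2.1, p.2.2]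
      left_inv := by
        intro k
        funext i
        fin_cases i <;> rfl
      right_inv := by
        intro p
        rfl }
  have h2 := summable_wt.mul_of_nonneg summable_wt (fun _ => by positivity) (fun _ => by positivity)
  have h3 := summable_wt.mul_of_nonneg h2 (fun _ => by positivity) (fun _ => by positivity)
  have h4 := e.summable_iff.2 h3
  refine h4.congr fun k => ?_
  rw [mul_pow, mul_pow]
  rfl

/-- Evaluation functional: `Λ v = ∑ₖ c_k v_k`. -/
lemma exists_eval : ∃ Λ : HH →L[ℂ] ℂ, ∀ v : HH,
    HasSum (fun k : KK => (((wt (k 0))⁻¹ * ((wt (k 1))⁻¹ * (wt (k 2))⁻¹) : ℝ) : ℂ) * v k) (Λ v) := by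
  have hm : Memℓp (fun k : KK => (((wt (k 0))⁻¹ * ((wt (k 1))⁻¹ * (wt (k 2))⁻¹) : ℝ) : ℂ)) 2 := by
    apply memℓp_two
    refine summable_wt3.congr fun k => ?_
    rw [Complex.norm_real, Real.norm_eq_abs, sq_abs]
  let c : HH := ⟨_, hm⟩
  refine ⟨innerSL ℂ c, fun v => ?_⟩
  have := lp.hasSum_inner (𝕜 := ℂ) c v
  rw [innerSL_apply_apply]
  have h9 : ∀ k : KK, inner ℂ (c k) (v k) = (((wt (k 0))⁻¹ * ((wt (k 1))⁻¹ * (wt (k 2))⁻¹) : ℝ) : ℂ) * v k := by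
    intro k
    rw [RCLike.inner_apply]
    simp only [c, Complex.conj_ofReal, mul_comm]
  simp only [h9] at this
  exact this

/-- coordinate functional -/
lemma exists_coord (k : KK) : ∃ L : HH →L[ℂ] ℂ, ∀ v, L v = v k := by
  classical
  refine ⟨innerSL ℂ (lp.single 2 k (1 : ℂ)), fun v => ?_⟩
  rw [innerSL_apply_apply, lp.inner_single_left]
  simp

/-- coefficients of an absolutely convergent Fourier series -/
lemma coef_of_hasSum (a : HH) (hs : Summable (fun k => ‖a k‖)) (f : C(TT, ℂ))
    (hf : ∀ y : YY, HasSum (fun k => a k * ee k y) (f (prj y))) : coef f = a := by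
  classical
  have h1 : Summable (fun k => a k • (UnitAddTorus.mFourier k : C(TT, ℂ))) := by
    apply Summable.of_norm
    simpa [norm_smul, UnitAddTorus.mFourier_norm] using hs
  have h2 : ∑' k, a k • (UnitAddTorus.mFourier k : C(TT, ℂ)) = f := by
    ext y
    rw [← prj_rep y]
    have h3 := (h1.hasSum.map (ContinuousMap.evalCLM ℂ (prj (rep y)) : C(TT, ℂ) →L[ℂ] ℂ)
      (ContinuousLinearMap.continuous _))
    refine h3.unique ?_
    exact hf (rep y)
  have h4 : HasSum (fun k => a k • (UnitAddTorus.mFourier k : C(TT, ℂ))) f := h2 ▸ h1.hasSum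
  have h5 := coef.hasSum h4
  have h6 : ∀ k, coef (UnitAddTorus.mFourier k : C(TT, ℂ)) = lp.single 2 k (1 : ℂ) := by
    intro k
    have h9 := (UnitAddTorus.mFourierBasis (d := Fin 3)).repr_self k
    rw [UnitAddTorus.coe_mFourierBasis] at h9
    exact h9
  have h7 : HasSum (fun k => lp.single (E := fun _ : KK => ℂ) 2 k (a k)) a :=
    lp.hasSum_single (by simp) a
  refine h5.unique ?_
  have h8 : ∀ k, coef (a k • (UnitAddTorus.mFourier k : C(TT, ℂ)))
      = lp.single (E := fun _ : KK => ℂ) 2 k (a k) := by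
    intro k
    rw [map_smul, h6, ← lp.single_smul, smul_eq_mul, mul_one]
  simp only [h8]
  exact h7

end CellProof

namespace CellProof
set_option maxSynthPendingDepth 3

section solve
variable {Z : Type} [NormedAddCommGroup Z] [NormedSpace ℝ Z]

lemma cd_clm {E F : Type} [NormedAddCommGroup E] [NormedSpace ℂ E] [NormedAddCommGroup F]
    [NormedSpace ℂ F] (T : E →L[ℂ] F) {f : Z → E} (hf : ContDiff ℝ (⊤ : ℕ∞) f) :
    ContDiff ℝ (⊤ : ℕ∞) (fun q => T (f q)) :=
  (T.restrictScalars ℝ).contDiff.comp hf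

lemma cd_apply {E F : Type} [NormedAddCommGroup E] [NormedSpace ℂ E] [NormedAddCommGroup F]
    [NormedSpace ℂ F] {T : Z → (E →L[ℂ] F)} {f : Z → E} (hT : ContDiff ℝ (⊤ : ℕ∞) T)
    (hf : ContDiff ℝ (⊤ : ℕ∞) f) :
    ContDiff ℝ (⊤ : ℕ∞) (fun q => T q (f q)) := by
  have h : ContDiff ℂ (⊤ : ℕ∞) (fun p : (E →L[ℂ] F) × E => p.1 p.2) :=
    isBoundedBilinearMap_apply.contDiff
  exact (h.restrict_scalars ℝ).comp (hT.prodMk hf)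

lemma exists_w {E : Type} [NormedAddCommGroup E] [NormedSpace ℂ E] [CompleteSpace E]
    (K : Z → (E →L[ℂ] E)) (g : Z → E)
    (hK : ContDiff ℝ (⊤ : ℕ∞) K) (hg : ContDiff ℝ (⊤ : ℕ∞) g) (hlt : ∀ q, ‖K q‖ < 1) :
    ∃ w : Z → E, ContDiff ℝ (⊤ : ℕ∞) w ∧ ∀ q, w q + K q (w q) = g q ∧
      ∀ v, v + K q v = g q → v = w q := by
  have hu : ∀ q, IsUnit (1 + K q) := by
    intro q
    have := isUnit_one_sub_of_norm_lt_one (x := -K q) (by rw [norm_neg]; exact hlt q)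
    simpa using this
  have hsm : ContDiff ℝ (⊤ : ℕ∞) (fun q => Ring.inverse (1 + K q)) := by
    rw [contDiff_iff_contDiffAt]
    intro q
    obtain ⟨u, hu⟩ := hu q
    have h1 := ((contDiffAt_ringInverse ℂ u).restrict_scalars ℝ (n := (⊤ : ℕ∞)))
    rw [hu] at h1
    exact ContDiffAt.comp q (g := Ring.inverse) (f := fun q => 1 + K q) h1
      (contDiff_const.add hK).contDiffAt
  refine ⟨fun q => Ring.inverse (1 + K q) (g q), cd_apply hsm hg, fun q => ⟨?_, ?_⟩⟩
  · have := Ring.mul_inverse_cancel _ (hu q)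
    have h2 := congrArg (fun T : E →L[ℂ] E => T (g q)) this
    simpa using h2
  · intro v hv
    have := Ring.inverse_mul_cancel _ (hu q)
    have h2 := congrArg (fun T : E →L[ℂ] E => T v) this
    simp only [ContinuousLinearMap.mul_apply, ContinuousLinearMap.add_apply,
      ContinuousLinearMap.one_apply] at h2
    rw [hv] at h2
    exact h2.symm

variable (ι : YY →L[ℝ] Z)

/-- translation covariance -/
def Cov (s : Z → HH) : Prop := ∀ q h k, s (q + ι h) k = ee k h * s q k

variable {ι}

lemma pd_coord {s : Z → HH} (hc : ContDiff ℝ (⊤ : ℕ∞) s) (hs : Cov ι s) (i : Fin 3) (q : Z) (k : KK) :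
    pd (ι (Pi.single i 1)) s q k = 2 * Real.pi * Complex.I * k i * s q k := by
  obtain ⟨L, hL⟩ := exists_coord k
  have hd : HasFDerivAt s (fderiv ℝ s q) q :=
    (hc.differentiable (by simp) q).hasFDerivAt
  have h0 : HasFDerivAt s (fderiv ℝ s q) (q + (0 : ℝ) • ι (Pi.single i 1)) := by simpa using hd
  have h1 : HasDerivAt (fun r : ℝ => q + r • ι (Pi.single i 1)) (ι (Pi.single i 1)) 0 := by
    have := ((hasDerivAt_id (0 : ℝ)).smul_const (ι (Pi.single i 1))).const_add q
    simpa using this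
  have h2 := h0.comp_hasDerivAt (0 : ℝ) h1
  have h3 := (L.restrictScalars ℝ).hasFDerivAt.comp_hasDerivAt (0 : ℝ) h2
  have h4 : ((L.restrictScalars ℝ) ∘ (s ∘ fun r : ℝ => q + r • ι (Pi.single i 1)))
      = fun r : ℝ => Complex.exp ((2 * Real.pi * Complex.I * k i) * r) * s q k := by
    funext r
    simp only [Function.comp_apply, ContinuousLinearMap.coe_restrictScalars', hL]
    rw [← map_smul, hs q _ k, ee_eq]
    congr 2
    rw [Finset.sum_eq_single i]
    · simp
    · intro j _ hj
      simp [Pi.single_apply, hj]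
    · simp
  rw [h4] at h3
  have h5 : HasDerivAt (fun r : ℝ => Complex.exp ((2 * Real.pi * Complex.I * k i) * r) * s q k)
      (2 * Real.pi * Complex.I * k i * s q k) 0 := by
    have h6 : HasDerivAt (fun r : ℝ => (2 * Real.pi * Complex.I * k i) * (r : ℂ))
      (2 * Real.pi * Complex.I * k i) 0 := by
      have := (Complex.ofRealCLM.hasDerivAt (x := (0 : ℝ))).const_mul (2 * Real.pi * Complex.I * k i)
      simpa using this
    have := h6.cexp.mul_const (s q k)
    simpa using this
  have h7 := h3.unique h5
  simpa [hL, pd] using h7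

lemma pd_cov {s : Z → HH} (hc : ContDiff ℝ (⊤ : ℕ∞) s) (hs : Cov ι s) (i : Fin 3) :
    Cov ι (pd (ι (Pi.single i 1)) s) := by
  intro q h k
  rw [pd_coord hc hs, pd_coord hc hs, hs]
  ring

lemma cov_coef {f : Z → ℂ} (hf : Per ι f) (hc : Continuous f) :
    Cov ι (fun q => coef (tl ι f q)) := by
  intro q h k
  apply coef_translate
  intro y
  rw [← prj_rep y, ← prj_add, tl_apply_prj hf hc, tl_apply_prj hf hc, map_add]
  congr 1
  abel

lemma cd_coef {f : Z → ℂ} (hf : Per ι f) (hc : ContDiff ℝ (⊤ : ℕ∞) f) :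
    ContDiff ℝ (⊤ : ℕ∞) (fun q => coef (tl ι f q)) :=
  cd_clm coef (contDiff_tl hf hc)

lemma coef_pd {f : Z → ℂ} (hf : Per ι f) (hc : ContDiff ℝ (⊤ : ℕ∞) f) (i : Fin 3) (q : Z) (k : KK) :
    coef (tl ι (pd (ι (Pi.single i 1)) f) q) k
      = 2 * Real.pi * Complex.I * k i * coef (tl ι f q) k := by
  rw [← pd_coord (cd_coef hf hc) (cov_coef hf hc.continuous) i q k, ← pd_tl _ hf hc]
  have h1 : HasFDerivAt (tl ι f) (fderiv ℝ (tl ι f) q) q :=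
    ((contDiff_tl hf hc).differentiable (by simp) q).hasFDerivAt
  have h2 := (coef.restrictScalars ℝ).hasFDerivAt.comp q h1
  have h3 : fderiv ℝ (fun q => coef (tl ι f q)) q = _ := h2.fderiv
  simp only [pd]
  rw [h3]
  rfl

/-- uniqueness of Fourier coefficients -/
lemma eq_of_coef {f g : Z → ℂ} (hf : Per ι f) (hc : Continuous f) (hg : Per ι g) (hd : Continuous g)
    (h : ∀ q k, coef (tl ι f q) k = coef (tl ι g q) k) : f = g := by
  funext q
  have h1 : coef (tl ι f q) = coef (tl ι g q) := by
    ext k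
    exact h q k
  have h2 := coef_injective h1
  have h3 := congrArg (fun u : C(TT, ℂ) => u (prj 0)) h2
  simpa [tl_apply_prj hf hc, tl_apply_prj hg hd] using h3

/-- synthesis -/
lemma exists_synth {s : Z → HH} (hc : ContDiff ℝ (⊤ : ℕ∞) s) (hs : Cov ι s) :
    ∃ S : Z → ℂ, ContDiff ℝ (⊤ : ℕ∞) S ∧ Per ι S ∧ ∀ q, coef (tl ι S q) = s q := by
  have step : ∀ (i : Fin 3) (s : Z → HH), ContDiff ℝ (⊤ : ℕ∞) s → Cov ι s →
      ∃ v : Z → HH, ContDiff ℝ (⊤ : ℕ∞) v ∧ Cov ι v ∧ ∀ q k, v q k = (wt (k i) : ℂ) * s q k := by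
    intro i s hc hs
    have hc1 := pd_contDiff (ι (Pi.single i 1)) hc
    have hs1 := pd_cov hc hs i
    have hc2 := pd_contDiff (ι (Pi.single i 1)) hc1
    have hv : ∀ q k, (s q - pd (ι (Pi.single i 1)) (pd (ι (Pi.single i 1)) s) q) k
        = (wt (k i) : ℂ) * s q k := by
      intro q k
      rw [lp.coeFn_sub, Pi.sub_apply, pd_coord hc1 hs1, pd_coord hc hs, wt]
      push_cast
      linear_combination (-(2 * Real.pi * k i) ^ 2 * s q k) * Complex.I_sq
    refine ⟨fun q => s q - pd (ι (Pi.single i 1)) (pd (ι (Pi.single i 1)) s) q, hc.sub hc2, ?_, hv⟩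
    intro q h k
    rw [hv, hv, hs]
    ring
  obtain ⟨v0, c0, s0, h0⟩ := step 0 s hc hs
  obtain ⟨v1, c1, s1, h1⟩ := step 1 v0 c0 s0
  obtain ⟨v, c2, s2, h2⟩ := step 2 v1 c1 s1
  obtain ⟨Λ, hΛ⟩ := exists_eval
  have hk : ∀ q (k : KK), (((wt (k 0))⁻¹ * ((wt (k 1))⁻¹ * (wt (k 2))⁻¹) : ℝ) : ℂ) * v q k = s q k := by
    intro q k
    rw [h2, h1, h0]
    have e0 : (wt (k 0) : ℂ) ≠ 0 := by exact_mod_cast (wt_pos (k 0)).ne'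
    have e1 : (wt (k 1) : ℂ) ≠ 0 := by exact_mod_cast (wt_pos (k 1)).ne'
    have e2 : (wt (k 2) : ℂ) ≠ 0 := by exact_mod_cast (wt_pos (k 2)).ne'
    push_cast
    field_simp
  have hsum : ∀ q, HasSum (fun k => s q k) (Λ (v q)) := by
    intro q
    have := hΛ (v q)
    simpa only [hk] using this
  have hSc : ContDiff ℝ (⊤ : ℕ∞) (fun q => Λ (v q)) := cd_clm Λ c2
  have hSp : Per ι (fun q => Λ (v q)) := by
    intro q n
    have h3 : v (q + ι (fun i => (n i : ℝ))) = v q := by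
      ext k
      rw [s2, ee_int, one_mul]
    simp only [h3]
  refine ⟨fun q => Λ (v q), hSc, hSp, fun q => ?_⟩
  apply coef_of_hasSum
  · exact (hsum q).summable.norm
  · intro y
    rw [tl_apply_prj hSp hSc.continuous]
    have := hsum (q + ι y)
    simp only [hs q y] at this
    simpa only [mul_comm] using this

end solve
end CellProof

namespace CellProof
set_option maxSynthPendingDepth 3

/-! ### Multipliers -/

/-- angular frequency -/
def om (k : KK) (i : Fin 3) : ℝ := 2 * Real.pi * k i
def rho (k : KK) : ℝ := Real.sqrt (om k 1 ^ 2 + om k 2 ^ 2)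
def sig (μ κ : ℝ) (k : KK) : ℂ := μ + Complex.I * om k 0 + κ * rho k ^ 2

lemma rho_sq (k : KK) : rho k ^ 2 = om k 1 ^ 2 + om k 2 ^ 2 := Real.sq_sqrt (by positivity)
lemma rho_nonneg (k : KK) : 0 ≤ rho k := Real.sqrt_nonneg _

lemma sig_re (μ κ : ℝ) (k : KK) : (sig μ κ k).re = μ + κ * rho k ^ 2 := by
  have h : sig μ κ k = ((μ + κ * rho k ^ 2 : ℝ) : ℂ) + (om k 0 : ℝ) * Complex.I := by
    rw [sig]
    push_cast
    ring
  rw [h]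
  simp [-Complex.ofReal_add, -Complex.ofReal_mul]

lemma sig_norm (μ κ : ℝ) (k : KK) : μ + κ * rho k ^ 2 ≤ ‖sig μ κ k‖ := by
  rw [← sig_re]
  exact Complex.re_le_norm _

lemma sig_ne {μ κ : ℝ} (hμ : 0 < μ) (hκ : 0 < κ) (k : KK) : sig μ κ k ≠ 0 := by
  have h := sig_norm μ κ k
  have : 0 < ‖sig μ κ k‖ := lt_of_lt_of_le (by positivity) h
  exact norm_pos_iff.1 this

lemma om_rho (k : KK) (j : Fin 3) (hj : j ≠ 0) : |om k j| ≤ rho k := by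
  have h : om k j ^ 2 ≤ rho k ^ 2 := by
    rw [rho_sq]
    fin_cases j
    · exact absurd rfl hj
    · simp only [Fin.mk_one, Fin.isValue]
      nlinarith [sq_nonneg (om k 2)]
    · simp only [Fin.reduceFinMk, Fin.isValue]
      nlinarith [sq_nonneg (om k 1)]
  exact abs_le_of_sq_le_sq h (rho_nonneg k)

lemma P_bound {μ κ : ℝ} (hμ : 0 < μ) (hκ : 0 < κ) (k : KK) (j : Fin 3) (hj : j ≠ 0) :
    ‖Complex.I * om k j / sig μ κ k‖ ≤ 1 / μ + 1 / κ := by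
  have h := sig_norm μ κ k
  have h0 : 0 < μ + κ * rho k ^ 2 := by positivity
  rw [norm_div, norm_mul, Complex.norm_I, one_mul, Complex.norm_real, Real.norm_eq_abs]
  have h1 : |om k j| / ‖sig μ κ k‖ ≤ rho k / (μ + κ * rho k ^ 2) := by
    have := om_rho k j hj
    have := rho_nonneg k
    gcongr
  refine h1.trans ?_
  rw [div_add_div _ _ hμ.ne' hκ.ne', div_le_div_iff₀ h0 (by positivity)]
  have hr := rho_nonneg k
  have h2 : rho k ≤ 1 + rho k ^ 2 := by nlinarith [sq_nonneg (rho k - 1)]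
  nlinarith [mul_pos hμ hκ, mul_le_mul_of_nonneg_left h2 (mul_pos hμ hκ).le,
    mul_nonneg (mul_pos hκ hκ).le (sq_nonneg (rho k)), mul_pos hμ hμ]

lemma Q_bound2 {μ κ : ℝ} (hμ : 0 < μ) (hκ : 0 < κ) (k : KK) (a b : ℂ) :
    ‖(rho k * (Complex.I * om k 1 / sig μ κ k)) * a
      + (rho k * (Complex.I * om k 2 / sig μ κ k)) * b‖ ^ 2 ≤ (1 / κ) ^ 2 * (‖a‖ ^ 2 + ‖b‖ ^ 2) := by
  have h := sig_norm μ κ k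
  have h0 : 0 < μ + κ * rho k ^ 2 := by positivity
  have hs := sig_ne hμ hκ k
  have e : (rho k * (Complex.I * om k 1 / sig μ κ k)) * a
      + (rho k * (Complex.I * om k 2 / sig μ κ k)) * b
      = (rho k * Complex.I / sig μ κ k) * (om k 1 * a + om k 2 * b) := by ring
  have h1 : ‖(om k 1 : ℂ) * a + om k 2 * b‖ ^ 2 ≤ rho k ^ 2 * (‖a‖ ^ 2 + ‖b‖ ^ 2) := by
    have h2 : ‖(om k 1 : ℂ) * a + om k 2 * b‖ ≤ |om k 1| * ‖a‖ + |om k 2| * ‖b‖ := by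
      refine (norm_add_le _ _).trans ?_
      rw [norm_mul, norm_mul, Complex.norm_real, Complex.norm_real, Real.norm_eq_abs,
        Real.norm_eq_abs]
    calc _ ≤ (|om k 1| * ‖a‖ + |om k 2| * ‖b‖) ^ 2 := by gcongr
      _ ≤ (|om k 1| ^ 2 + |om k 2| ^ 2) * (‖a‖ ^ 2 + ‖b‖ ^ 2) := by
        nlinarith [sq_nonneg (|om k 1| * ‖b‖ - |om k 2| * ‖a‖)]
      _ = _ := by rw [rho_sq, sq_abs, sq_abs]
  have h3 : rho k ^ 2 / ‖sig μ κ k‖ ≤ 1 / κ := by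
    calc _ ≤ rho k ^ 2 / (μ + κ * rho k ^ 2) := by gcongr
      _ ≤ 1 / κ := by
        rw [div_le_div_iff₀ h0 hκ]
        nlinarith
  rw [e, norm_mul, mul_pow, norm_div, norm_mul, Complex.norm_I, mul_one, Complex.norm_real,
    Real.norm_eq_abs, abs_of_nonneg (rho_nonneg k)]
  calc _ ≤ (rho k / ‖sig μ κ k‖) ^ 2 * (rho k ^ 2 * (‖a‖ ^ 2 + ‖b‖ ^ 2)) := by gcongr
    _ = (rho k ^ 2 / ‖sig μ κ k‖) ^ 2 * (‖a‖ ^ 2 + ‖b‖ ^ 2) := by ring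
    _ ≤ _ := by gcongr

lemma R_bound (k : KK) : ‖Complex.I * om k 1 / rho k‖ ^ 2 + ‖Complex.I * om k 2 / rho k‖ ^ 2 ≤ 1 := by
  simp only [norm_div, norm_mul, Complex.norm_I, one_mul, Complex.norm_real, Real.norm_eq_abs,
    div_pow, sq_abs]
  rw [← add_div, ← rho_sq]
  exact div_self_le_one _

section solve
variable {Z : Type} [NormedAddCommGroup Z] [NormedSpace ℝ Z] {ι : YY →L[ℝ] Z}

lemma Mop_tau {b : Z → ℂ} (hb : Per ι b) (hc : Continuous b) (h : YY) (q : Z) (v w : HH)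
    (hvw : ∀ k, w k = ee k h * v k) (k : KK) :
    Mop (tl ι b (q + ι h)) w k = ee k h * Mop (tl ι b q) v k := by
  obtain ⟨T, hT⟩ := exists_mult (fun k => ee k h) 1 (fun k => (ee_norm k h).le)
  have hw : w = T v := by
    ext k
    rw [hvw, hT]
  have key : ∀ v, Mop (tl ι b (q + ι h)) (T v) = T (Mop (tl ι b q) v) := by
    have h1 : Continuous (fun v => Mop (tl ι b (q + ι h)) (T v)) := by fun_prop
    have h2 : Continuous (fun v => T (Mop (tl ι b q) v)) := by fun_prop
    refine fun v => congrFun (coef_denseRange.equalizer h1 h2 ?_) v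
    funext g
    simp only [Function.comp_apply]
    let g' : C(TT, ℂ) := g.comp ⟨fun y => y + prj h, by fun_prop⟩
    have h3 : T (coef g) = coef g' := by
      ext k
      rw [hT]
      exact (coef_translate g g' h (fun y => rfl) k).symm
    rw [h3, Mop_coef, Mop_coef]
    ext k
    rw [hT]
    apply coef_translate
    intro y
    simp only [ContinuousMap.mul_apply]
    congr 1
    rw [← prj_rep y, ← prj_add, tl_apply_prj hb hc, tl_apply_prj hb hc, map_add]
    congr 1
    abel
  rw [hw, key, hT]

theorem exists_sol_complex (μ γ κ : ℝ) (hμ : 0 < μ) (hγ : 0 ≤ γ) (hγκ : γ < κ)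
    (b c₁ c₂ : Z → ℂ) (hb : ContDiff ℝ (⊤ : ℕ∞) b) (hc₁ : ContDiff ℝ (⊤ : ℕ∞) c₁)
    (hc₂ : ContDiff ℝ (⊤ : ℕ∞) c₂) (pb : Per ι b) (p₁ : Per ι c₁) (p₂ : Per ι c₂)
    (hbγ : ∀ z, ‖b z‖ ≤ γ) :
    ∃ S : Z → ℂ, ContDiff ℝ (⊤ : ℕ∞) S ∧ Per ι S ∧ ∀ z,
      μ * S z + pd (ι (Pi.single 0 1)) S z
        - κ * (pd (ι (Pi.single 1 1)) (pd (ι (Pi.single 1 1)) S) z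
          + pd (ι (Pi.single 2 1)) (pd (ι (Pi.single 2 1)) S) z)
      = pd (ι (Pi.single 1 1)) (fun z => c₁ z - b z * pd (ι (Pi.single 1 1)) S z) z
        + pd (ι (Pi.single 2 1)) (fun z => c₂ z - b z * pd (ι (Pi.single 2 1)) S z) z := by
  have hκ : 0 < κ := hγ.trans_lt hγκ
  obtain ⟨P₁, hP₁⟩ := exists_mult _ _ (fun k => P_bound hμ hκ k 1 (by decide))
  obtain ⟨P₂, hP₂⟩ := exists_mult _ _ (fun k => P_bound hμ hκ k 2 (by decide))
  have hQ := fun k => Q_bound2 hμ hκ k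
  obtain ⟨Q₁, hQ₁⟩ := exists_mult (fun k => rho k * (Complex.I * om k 1 / sig μ κ k)) (1 / κ)
    (fun k => by
      have := hQ k 1 0
      simp only [mul_one, mul_zero, add_zero, norm_one, norm_zero] at this
      refine le_of_sq_le_sq ?_ (by positivity)
      simpa using this)
  obtain ⟨Q₂, hQ₂⟩ := exists_mult (fun k => rho k * (Complex.I * om k 2 / sig μ κ k)) (1 / κ)
    (fun k => by
      have := hQ k 0 1
      simp only [mul_one, mul_zero, zero_add, norm_one, norm_zero] at this
      refine le_of_sq_le_sq ?_ (by positivity)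
      simpa using this)
  obtain ⟨R₁, hR₁⟩ := exists_mult (fun k => Complex.I * om k 1 / rho k) 1
    (fun k => by
      have := R_bound k
      refine le_of_sq_le_sq ?_ (by positivity)
      nlinarith [sq_nonneg ‖Complex.I * om k 2 / rho k‖])
  obtain ⟨R₂, hR₂⟩ := exists_mult (fun k => Complex.I * om k 2 / rho k) 1
    (fun k => by
      have := R_bound k
      refine le_of_sq_le_sq ?_ (by positivity)
      nlinarith [sq_nonneg ‖Complex.I * om k 1 / rho k‖])
  let M : Z → (HH →L[ℂ] HH) := fun q => Mop (tl ι b q)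
  have hM : ContDiff ℝ (⊤ : ℕ∞) M := cd_clm Mop (contDiff_tl pb hb)
  have hMb : ∀ q v, ‖M q v‖ ≤ γ * ‖v‖ := fun q v =>
    Mop_norm_le _ _ hγ (fun y => by rw [tl_apply pb hb.continuous]; exact hbγ _) v
  let K : Z → (HH →L[ℂ] HH) := fun q => Q₁ ∘L (M q ∘L R₁) + Q₂ ∘L (M q ∘L R₂)
  have cdK : ∀ Q R : HH →L[ℂ] HH, ContDiff ℝ (⊤ : ℕ∞) (fun q => Q ∘L (M q ∘L R)) := by
    intro Q R
    have h1 := cd_clm ((ContinuousLinearMap.compL ℂ HH HH HH).flip R) hM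
    exact cd_clm (ContinuousLinearMap.compL ℂ HH HH HH Q) h1
  have hK : ContDiff ℝ (⊤ : ℕ∞) K := (cdK Q₁ R₁).add (cdK Q₂ R₂)
  let g : Z → HH := fun q => Q₁ (coef (tl ι c₁ q)) + Q₂ (coef (tl ι c₂ q))
  have hg : ContDiff ℝ (⊤ : ℕ∞) g :=
    (cd_clm Q₁ (cd_coef p₁ hc₁)).add (cd_clm Q₂ (cd_coef p₂ hc₂))
  have hKlt : ∀ q, ‖K q‖ < 1 := by
    intro q
    have h1 : ‖K q‖ ≤ γ / κ := by
      refine ContinuousLinearMap.opNorm_le_bound _ (by positivity) fun v => ?_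
      refine le_of_sq_le_sq ?_ (by positivity)
      have h2 := two_mult_bound hQ₁ hQ₂ hQ (M q (R₁ v)) (M q (R₂ v))
      have h3 := two_mult_bound' hR₁ hR₂ R_bound v
      have h4 : ‖M q (R₁ v)‖ ^ 2 ≤ (γ * ‖R₁ v‖) ^ 2 := by gcongr; exact hMb _ _
      have h5 : ‖M q (R₂ v)‖ ^ 2 ≤ (γ * ‖R₂ v‖) ^ 2 := by gcongr; exact hMb _ _
      calc ‖K q v‖ ^ 2 ≤ (1 / κ) ^ 2 * (‖M q (R₁ v)‖ ^ 2 + ‖M q (R₂ v)‖ ^ 2) := h2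
        _ ≤ (1 / κ) ^ 2 * ((γ * ‖R₁ v‖) ^ 2 + (γ * ‖R₂ v‖) ^ 2) := by gcongr
        _ = (γ / κ) ^ 2 * (‖R₁ v‖ ^ 2 + ‖R₂ v‖ ^ 2) := by ring
        _ ≤ (γ / κ) ^ 2 * ‖v‖ ^ 2 := by gcongr
        _ = _ := by ring
    refine h1.trans_lt ?_
    rw [div_lt_one hκ]
    exact hγκ
  obtain ⟨w, hw, hweq⟩ := exists_w K g hK hg hKlt
  -- covariance of w
  have hwcov : Cov ι w := by
    intro q h
    obtain ⟨T, hT⟩ := exists_mult (fun k => ee k h) 1 (fun k => (ee_norm k h).le)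
    have h1 : T (w q) = w (q + ι h) := by
      refine (hweq (q + ι h)).2 _ ?_
      ext k
      have h2 := congrArg (fun u : HH => u k) (hweq q).1
      have h3 := cov_coef p₁ hc₁.continuous q h k
      have h4 := cov_coef p₂ hc₂.continuous q h k
      have h5 := Mop_tau pb hb.continuous h q (R₁ (w q)) (R₁ (T (w q)))
        (fun k => by rw [hR₁, hR₁, hT]; ring) k
      have h6 := Mop_tau pb hb.continuous h q (R₂ (w q)) (R₂ (T (w q)))
        (fun k => by rw [hR₂, hR₂, hT]; ring) k
      simp only [K, g, M, ContinuousLinearMap.add_apply, ContinuousLinearMap.comp_apply,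
        lp.coeFn_add, Pi.add_apply, hQ₁, hQ₂] at h2 ⊢
      simp only at h3 h4
      rw [h3, h4, h5, h6, hT]
      linear_combination (ee k h) * h2
    intro k
    rw [← h1, hT]
  let s : Z → HH := fun q => P₁ (coef (tl ι c₁ q) - M q (R₁ (w q)))
    + P₂ (coef (tl ι c₂ q) - M q (R₂ (w q)))
  have hs : ContDiff ℝ (⊤ : ℕ∞) s :=
    (cd_clm P₁ ((cd_coef p₁ hc₁).sub (cd_apply hM (cd_clm R₁ hw)))).add
      (cd_clm P₂ ((cd_coef p₂ hc₂).sub (cd_apply hM (cd_clm R₂ hw))))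
  have hsk : ∀ q k, s q k = (Complex.I * om k 1 / sig μ κ k)
        * (coef (tl ι c₁ q) k - Mop (tl ι b q) (R₁ (w q)) k)
      + (Complex.I * om k 2 / sig μ κ k)
        * (coef (tl ι c₂ q) k - Mop (tl ι b q) (R₂ (w q)) k) := by
    intro q k
    simp only [s, lp.coeFn_add, Pi.add_apply, hP₁, hP₂, lp.coeFn_sub, Pi.sub_apply, M]
  have hscov : Cov ι s := by
    intro q h k
    have h3 := cov_coef p₁ hc₁.continuous q h k
    have h4 := cov_coef p₂ hc₂.continuous q h k
    have h5 := Mop_tau pb hb.continuous h q (R₁ (w q)) (R₁ (w (q + ι h)))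
        (fun k => by rw [hR₁, hR₁, hwcov]; ring) k
    have h6 := Mop_tau pb hb.continuous h q (R₂ (w q)) (R₂ (w (q + ι h)))
        (fun k => by rw [hR₂, hR₂, hwcov]; ring) k
    simp only at h3 h4
    rw [hsk, hsk, h3, h4, h5, h6]
    ring
  have hws : ∀ q k, w q k = rho k * s q k := by
    intro q k
    have h2 := congrArg (fun u : HH => u k) (hweq q).1
    simp only [K, g, M, ContinuousLinearMap.add_apply, ContinuousLinearMap.comp_apply,
        lp.coeFn_add, Pi.add_apply, hQ₁, hQ₂] at h2
    rw [hsk]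
    linear_combination h2
  have hRs : ∀ q k (j : Fin 3), j ≠ 0 →
      (Complex.I * om k j / rho k) * w q k = Complex.I * om k j * s q k := by
    intro q k j hj
    rw [hws]
    by_cases h0 : rho k = 0
    · have h1 := om_rho k j hj
      rw [h0] at h1
      have h2 : om k j = 0 := abs_nonpos_iff.1 h1
      simp [h2]
    · have h1 : (rho k : ℂ) ≠ 0 := by exact_mod_cast h0
      field_simp
  obtain ⟨S, hSc, hSp, hSs⟩ := exists_synth hs hscov
  have homc : ∀ (k : KK) (i : Fin 3), (2 * Real.pi * Complex.I * k i : ℂ) = Complex.I * om k i := by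
    intro k i
    simp only [om]
    push_cast
    ring
  have hpd : ∀ {f : Z → ℂ} (_ : Per ι f) (_ : ContDiff ℝ (⊤ : ℕ∞) f) (i : Fin 3) (q : Z) (k : KK),
      coef (tl ι (pd (ι (Pi.single i 1)) f) q) k = Complex.I * om k i * coef (tl ι f q) k := by
    intro f hf hc i q k
    rw [coef_pd hf hc, homc]
  have cS := fun i : Fin 3 => pd_contDiff (ι (Pi.single i 1)) hSc
  have pS := fun i : Fin 3 => pd_per (ι (Pi.single i 1)) hSp
  have cSS := fun i : Fin 3 => pd_contDiff (ι (Pi.single i 1)) (cS i)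
  have pSS := fun i : Fin 3 => pd_per (ι (Pi.single i 1)) (pS i)
  have hflux : ∀ (c : Z → ℂ) (_ : ContDiff ℝ (⊤ : ℕ∞) c) (_ : Per ι c) (i : Fin 3),
      ContDiff ℝ (⊤ : ℕ∞) (fun z => c z - b z * pd (ι (Pi.single i 1)) S z) ∧
      Per ι (fun z => c z - b z * pd (ι (Pi.single i 1)) S z) ∧
      ∀ (R : HH →L[ℂ] HH) (_ : ∀ v k, R v k = Complex.I * om k i / rho k * v k) (_ : i ≠ 0) q k,
        coef (tl ι (fun z => c z - b z * pd (ι (Pi.single i 1)) S z) q) k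
          = coef (tl ι c q) k - Mop (tl ι b q) (R (w q)) k := by
    intro c hc pc i
    have a1 : ContDiff ℝ (⊤ : ℕ∞) (fun z => c z - b z * pd (ι (Pi.single i 1)) S z) :=
      hc.sub (hb.mul (cS i))
    have a2 : Per ι (fun z => c z - b z * pd (ι (Pi.single i 1)) S z) := by
      intro z n
      simp only [pc z n, pb z n, pS i z n]
    refine ⟨a1, a2, ?_⟩
    intro R hR hi q k
    have h1 : R (w q) = coef (tl ι (pd (ι (Pi.single i 1)) S) q) := by
      ext k
      rw [hR, hRs q k i hi, hpd hSp hSc, hSs]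
    rw [h1, Mop_coef]
    have h2 : tl ι (fun z => c z - b z * pd (ι (Pi.single i 1)) S z) q
        = tl ι c q - tl ι b q * tl ι (pd (ι (Pi.single i 1)) S) q := by
      ext y
      rw [ContinuousMap.sub_apply, ContinuousMap.mul_apply, tl_apply a2 a1.continuous,
        tl_apply pc hc.continuous, tl_apply pb hb.continuous, tl_apply (pS i) (cS i).continuous]
    rw [h2, map_sub, lp.coeFn_sub, Pi.sub_apply]
  obtain ⟨f1c, f1p, f1k⟩ := hflux c₁ hc₁ p₁ 1
  obtain ⟨f2c, f2p, f2k⟩ := hflux c₂ hc₂ p₂ 2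
  have cF1 := pd_contDiff (ι (Pi.single 1 1)) f1c
  have pF1 := pd_per (ι (Pi.single 1 1)) f1p
  have cF2 := pd_contDiff (ι (Pi.single 2 1)) f2c
  have pF2 := pd_per (ι (Pi.single 2 1)) f2p
  refine ⟨S, hSc, hSp, ?_⟩
  have hL : ContDiff ℝ (⊤ : ℕ∞) (fun z => μ * S z + pd (ι (Pi.single 0 1)) S z
        - κ * (pd (ι (Pi.single 1 1)) (pd (ι (Pi.single 1 1)) S) z
          + pd (ι (Pi.single 2 1)) (pd (ι (Pi.single 2 1)) S) z)) :=
    ((contDiff_const.mul hSc).add (cS 0)).sub (contDiff_const.mul ((cSS 1).add (cSS 2)))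
  have hLp : Per ι (fun z => μ * S z + pd (ι (Pi.single 0 1)) S z
        - κ * (pd (ι (Pi.single 1 1)) (pd (ι (Pi.single 1 1)) S) z
          + pd (ι (Pi.single 2 1)) (pd (ι (Pi.single 2 1)) S) z)) := by
    intro z n
    simp only [hSp z n, pS 0 z n, pSS 1 z n, pSS 2 z n]
  have hR : ContDiff ℝ (⊤ : ℕ∞) (fun z =>
      pd (ι (Pi.single 1 1)) (fun z => c₁ z - b z * pd (ι (Pi.single 1 1)) S z) z
        + pd (ι (Pi.single 2 1)) (fun z => c₂ z - b z * pd (ι (Pi.single 2 1)) S z) z) :=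
    cF1.add cF2
  have hRp : Per ι (fun z =>
      pd (ι (Pi.single 1 1)) (fun z => c₁ z - b z * pd (ι (Pi.single 1 1)) S z) z
        + pd (ι (Pi.single 2 1)) (fun z => c₂ z - b z * pd (ι (Pi.single 2 1)) S z) z) := by
    intro z n
    simp only [pF1 z n, pF2 z n]
  refine congrFun (eq_of_coef hLp hL.continuous hRp hR.continuous ?_)
  intro q k
  have e1 : tl ι (fun z => μ * S z + pd (ι (Pi.single 0 1)) S z
        - κ * (pd (ι (Pi.single 1 1)) (pd (ι (Pi.single 1 1)) S) z
          + pd (ι (Pi.single 2 1)) (pd (ι (Pi.single 2 1)) S) z)) q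
      = (μ : ℂ) • tl ι S q + tl ι (pd (ι (Pi.single 0 1)) S) q
        - (κ : ℂ) • (tl ι (pd (ι (Pi.single 1 1)) (pd (ι (Pi.single 1 1)) S)) q
          + tl ι (pd (ι (Pi.single 2 1)) (pd (ι (Pi.single 2 1)) S)) q) := by
    ext y
    simp only [ContinuousMap.sub_apply, ContinuousMap.add_apply, ContinuousMap.smul_apply,
      tl_apply hLp hL.continuous, tl_apply hSp hSc.continuous, tl_apply (pS 0) (cS 0).continuous,
      tl_apply (pSS 1) (cSS 1).continuous, tl_apply (pSS 2) (cSS 2).continuous, smul_eq_mul]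
  have e2 : tl ι (fun z =>
      pd (ι (Pi.single 1 1)) (fun z => c₁ z - b z * pd (ι (Pi.single 1 1)) S z) z
        + pd (ι (Pi.single 2 1)) (fun z => c₂ z - b z * pd (ι (Pi.single 2 1)) S z) z) q
      = tl ι (pd (ι (Pi.single 1 1)) (fun z => c₁ z - b z * pd (ι (Pi.single 1 1)) S z)) q
        + tl ι (pd (ι (Pi.single 2 1)) (fun z => c₂ z - b z * pd (ι (Pi.single 2 1)) S z)) q := by
    ext y
    simp only [ContinuousMap.add_apply, tl_apply hRp hR.continuous, tl_apply pF1 cF1.continuous,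
      tl_apply pF2 cF2.continuous]
  rw [e1, e2]
  simp only [map_sub, map_add, map_smul, lp.coeFn_sub, lp.coeFn_add, lp.coeFn_smul, Pi.sub_apply,
    Pi.add_apply, Pi.smul_apply, smul_eq_mul]
  rw [hpd hSp hSc, hpd (pS 1) (cS 1), hpd (pS 2) (cS 2), hpd hSp hSc, hpd hSp hSc, hpd f1p f1c,
    hpd f2p f2c, f1k R₁ hR₁ (by decide), f2k R₂ hR₂ (by decide), hSs]
  have h1 := hsk q k
  have h2 := sig_ne hμ hκ k
  have h3 : sig μ κ k * s q k = (Complex.I * om k 1)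
        * (coef (tl ι c₁ q) k - Mop (tl ι b q) (R₁ (w q)) k)
      + (Complex.I * om k 2)
        * (coef (tl ι c₂ q) k - Mop (tl ι b q) (R₂ (w q)) k) := by
    rw [h1]
    field_simp
  rw [← h3]
  have h4 : (rho k : ℂ) ^ 2 = (om k 1 : ℂ) ^ 2 + (om k 2 : ℂ) ^ 2 := by
    exact_mod_cast rho_sq k
  rw [sig, h4]
  linear_combination (-κ * ((om k 1 : ℂ) ^ 2 + (om k 2 : ℂ) ^ 2) * s q k) * Complex.I_sq

end solve
end CellProof

namespace CellProof
set_option maxSynthPendingDepth 3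

abbrev ZZ := ℝ × ℝ × ℝ × (ℝ × ℝ)

def dT : ZZ := (1, 0, 0, (0, 0))
def dU : ZZ := (0, 1, 0, (0, 0))
def dθ : ZZ := (0, 0, 1, (0, 0))
def d1 : ZZ := (0, 0, 0, (1, 0))
def d2 : ZZ := (0, 0, 0, (0, 1))

/-- inclusion of the periodic variables -/
def iot : YY →L[ℝ] ZZ :=
  (0 : YY →L[ℝ] ℝ).prod ((0 : YY →L[ℝ] ℝ).prod ((ContinuousLinearMap.proj 0).prod
    ((ContinuousLinearMap.proj 1).prod (ContinuousLinearMap.proj 2))))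

lemma iot_apply (y : YY) : iot y = (0, 0, y 0, (y 1, y 2)) := rfl

lemma iot_0 : iot (Pi.single 0 1) = dθ := by simp [iot_apply, dθ]
lemma iot_1 : iot (Pi.single 1 1) = d1 := by simp [iot_apply, d1]
lemma iot_2 : iot (Pi.single 2 1) = d2 := by simp [iot_apply, d2]

/-- smooth periodic functions -/
def Sm (F : ZZ → ℝ) : Prop := ContDiff ℝ (⊤ : ℕ∞) F ∧ Per iot F

lemma Sm.add {F G : ZZ → ℝ} (hF : Sm F) (hG : Sm G) : Sm (fun z => F z + G z) :=
  ⟨hF.1.add hG.1, fun z n => by simp only [hF.2 z n, hG.2 z n]⟩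
lemma Sm.sub {F G : ZZ → ℝ} (hF : Sm F) (hG : Sm G) : Sm (fun z => F z - G z) :=
  ⟨hF.1.sub hG.1, fun z n => by simp only [hF.2 z n, hG.2 z n]⟩
lemma Sm.mul {F G : ZZ → ℝ} (hF : Sm F) (hG : Sm G) : Sm (fun z => F z * G z) :=
  ⟨hF.1.mul hG.1, fun z n => by simp only [hF.2 z n, hG.2 z n]⟩
lemma Sm.pow {F : ZZ → ℝ} (hF : Sm F) (m : ℕ) : Sm (fun z => F z ^ m) :=
  ⟨hF.1.pow m, fun z n => by simp only [hF.2 z n]⟩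
lemma Sm.neg {F : ZZ → ℝ} (hF : Sm F) : Sm (fun z => - F z) :=
  ⟨hF.1.neg, fun z n => by simp only [hF.2 z n]⟩
lemma Sm.const (c : ℝ) : Sm (fun _ => c) := ⟨contDiff_const, fun _ _ => rfl⟩
lemma Sm.pd {F : ZZ → ℝ} (hF : Sm F) (v : ZZ) : Sm (pd v F) :=
  ⟨pd_contDiff v hF.1, pd_per v hF.2⟩

lemma Sm.diff {F : ZZ → ℝ} (hF : Sm F) (z : ZZ) : DifferentiableAt ℝ F z :=
  hF.1.differentiable (by simp) z
lemma Sm.cont {F : ZZ → ℝ} (hF : Sm F) : Continuous F := hF.1.continuous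

lemma pd_add' {F G : ZZ → ℝ} (hF : Sm F) (hG : Sm G) (v z : ZZ) :
    pd v (fun z => F z + G z) z = pd v F z + pd v G z := by
  simp only [pd]
  rw [fderiv_fun_add (hF.diff z) (hG.diff z)]
  rfl
lemma pd_sub' {F G : ZZ → ℝ} (hF : Sm F) (hG : Sm G) (v z : ZZ) :
    pd v (fun z => F z - G z) z = pd v F z - pd v G z := by
  simp only [pd]
  rw [fderiv_fun_sub (hF.diff z) (hG.diff z)]
  rfl
lemma pd_mul' {F G : ZZ → ℝ} (hF : Sm F) (hG : Sm G) (v z : ZZ) :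
    pd v (fun z => F z * G z) z = F z * pd v G z + G z * pd v F z := by
  simp only [pd]
  rw [fderiv_fun_mul (hF.diff z) (hG.diff z)]
  rfl
lemma pd_const' (c : ℝ) (v z : ZZ) : pd v (fun _ : ZZ => c) z = 0 := by
  simp [pd]
lemma pd_comm {F : ZZ → ℝ} (hF : Sm F) (u v z : ZZ) : pd u (pd v F) z = pd v (pd u F) z := by
  have h1 : ContDiff ℝ (⊤ : ℕ∞) (fderiv ℝ F) := (contDiff_infty_iff_fderiv.1 hF.1).2
  have h2 : DifferentiableAt ℝ (fderiv ℝ F) z := h1.differentiable (by simp) z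
  have h3 : ∀ u v, pd u (pd v F) z = fderiv ℝ (fderiv ℝ F) z u v := by
    intro u v
    have : pd v F = fun z => fderiv ℝ F z v := rfl
    rw [this, pd, fderiv_clm_apply h2 (differentiableAt_const v)]
    simp
  rw [h3, h3]
  have h4 : IsSymmSndFDerivAt ℝ F z := hF.1.contDiffAt.isSymmSndFDerivAt (by
    simp only [minSmoothness_of_isRCLikeNormedField]
    exact WithTop.coe_le_coe.2 (le_top : (2 : ℕ∞) ≤ ⊤))
  exact h4.eq u v

/-- directional derivatives along curves -/
lemma hasDerivAt_line {F : ZZ → ℝ} (hF : ContDiff ℝ (⊤ : ℕ∞) F) {c : ℝ → ZZ} {v : ZZ} {r : ℝ}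
    (hc : HasDerivAt c v r) : HasDerivAt (fun r => F (c r)) (pd v F (c r)) r :=
  (hF.differentiable (by simp) (c r)).hasFDerivAt.comp_hasDerivAt r hc

lemma line_T (τ θ : ℝ) (x : ℝ × ℝ) (r : ℝ) : HasDerivAt (fun s : ℝ => ((s, τ, θ, x) : ZZ)) dT r :=
  (hasDerivAt_id r).prodMk (hasDerivAt_const r _)
lemma line_U (t θ : ℝ) (x : ℝ × ℝ) (r : ℝ) : HasDerivAt (fun s : ℝ => ((t, s, θ, x) : ZZ)) dU r :=
  (hasDerivAt_const r _).prodMk ((hasDerivAt_id r).prodMk (hasDerivAt_const r _))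
lemma line_θ (t τ : ℝ) (x : ℝ × ℝ) (r : ℝ) : HasDerivAt (fun s : ℝ => ((t, τ, s, x) : ZZ)) dθ r :=
  (hasDerivAt_const r _).prodMk ((hasDerivAt_const r _).prodMk
    ((hasDerivAt_id r).prodMk (hasDerivAt_const r _)))
lemma line_1 (t τ θ : ℝ) (y : ℝ) (r : ℝ) :
    HasDerivAt (fun s : ℝ => ((t, τ, θ, (s, y)) : ZZ)) d1 r :=
  (hasDerivAt_const r _).prodMk ((hasDerivAt_const r _).prodMk
    ((hasDerivAt_const r _).prodMk ((hasDerivAt_id r).prodMk (hasDerivAt_const r _))))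
lemma line_2 (t τ θ : ℝ) (y : ℝ) (r : ℝ) :
    HasDerivAt (fun s : ℝ => ((t, τ, θ, (y, s)) : ZZ)) d2 r :=
  (hasDerivAt_const r _).prodMk ((hasDerivAt_const r _).prodMk
    ((hasDerivAt_const r _).prodMk ((hasDerivAt_const r _).prodMk (hasDerivAt_id r))))

/-! ### integrals on the square -/

lemma isCompact_Tsq : IsCompact Tsq := isCompact_Icc.prod isCompact_Icc

lemma vol_Tsq : (volume : Measure (ℝ × ℝ)).restrict Tsq
    = (volume.restrict (Set.Icc (0:ℝ) 1)).prod (volume.restrict (Set.Icc (0:ℝ) 1)) := by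
  rw [Tsq, Measure.volume_eq_prod, Measure.prod_restrict]

lemma intOn {f : ℝ × ℝ → ℝ} (hf : Continuous f) : IntegrableOn f Tsq :=
  hf.continuousOn.integrableOn_compact isCompact_Tsq

lemma int_iter {f : ℝ × ℝ → ℝ} (hf : Continuous f) :
    ∫ x in Tsq, f x = ∫ x in (0:ℝ)..1, ∫ y in (0:ℝ)..1, f (x, y) := by
  have h := intOn hf
  rw [IntegrableOn, vol_Tsq] at h
  rw [vol_Tsq, integral_prod _ h]
  simp only [intervalIntegral.integral_of_le zero_le_one, integral_Icc_eq_integral_Ioc]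

lemma int_iter' {f : ℝ × ℝ → ℝ} (hf : Continuous f) :
    ∫ x in Tsq, f x = ∫ y in (0:ℝ)..1, ∫ x in (0:ℝ)..1, f (x, y) := by
  have h := intOn hf
  rw [IntegrableOn, vol_Tsq] at h
  rw [vol_Tsq, integral_prod_symm _ h]
  simp only [intervalIntegral.integral_of_le zero_le_one, integral_Icc_eq_integral_Ioc]

lemma vol_one : (volume : Measure (ℝ × ℝ)).real Tsq = 1 := by
  rw [Measure.real, Tsq, Measure.volume_eq_prod, Measure.prod_prod]
  simp

lemma cs_1d {h : ℝ → ℝ} (hh : Continuous h) {a b : ℝ} (ha : 0 ≤ a) (hab : a ≤ b) (hb : b ≤ 1) :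
    (∫ s in a..b, h s) ^ 2 ≤ ∫ s in (0:ℝ)..1, h s ^ 2 := by
  set I := ∫ s in a..b, h s with hI
  have i1 : ∀ a b, IntervalIntegrable (fun s => h s ^ 2) volume a b :=
    fun a b => (hh.pow 2).intervalIntegrable a b
  have i2 : IntervalIntegrable (fun s => h s) volume a b := hh.intervalIntegrable a b
  have h1 : 0 ≤ ∫ s in a..b, (h s - I) ^ 2 :=
    intervalIntegral.integral_nonneg hab (fun s _ => sq_nonneg _)
  have h2 : ∫ s in a..b, (h s - I) ^ 2 = (∫ s in a..b, h s ^ 2) - 2 * I * I + (b - a) * I ^ 2 := by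
    have : (fun s => (h s - I) ^ 2) = fun s => (h s ^ 2 - 2 * I * h s) + I ^ 2 := by
      funext s
      ring
    rw [this, intervalIntegral.integral_add ((i1 a b).sub (i2.const_mul _)) (by simp),
      intervalIntegral.integral_sub (i1 a b) (i2.const_mul _),
      intervalIntegral.integral_const_mul, intervalIntegral.integral_const, smul_eq_mul]
  have h3 : ∫ s in a..b, h s ^ 2 ≤ ∫ s in (0:ℝ)..1, h s ^ 2 :=
    intervalIntegral.integral_mono_interval ha hab hb
      (Eventually.of_forall fun s => sq_nonneg _) (i1 0 1)
  nlinarith [mul_nonneg (by linarith : 0 ≤ 1 - (b - a)) (sq_nonneg I)]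

lemma diff_1d {g g' : ℝ → ℝ} (hg : ∀ x, HasDerivAt g (g' x) x) (hc : Continuous g') {a b : ℝ}
    (ha : a ∈ Set.Icc (0:ℝ) 1) (hb : b ∈ Set.Icc (0:ℝ) 1) :
    (g a - g b) ^ 2 ≤ ∫ s in (0:ℝ)..1, g' s ^ 2 := by
  have key : ∀ a b, 0 ≤ a → a ≤ b → b ≤ 1 → (g b - g a) ^ 2 ≤ ∫ s in (0:ℝ)..1, g' s ^ 2 := by
    intro a b h1 h2 h3
    rw [← intervalIntegral.integral_eq_sub_of_hasDerivAt (fun x _ => hg x)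
      (hc.intervalIntegrable a b)]
    exact cs_1d hc h1 h2 h3
  rcases le_total a b with h | h
  · have := key a b ha.1 h hb.2
    nlinarith
  · exact key b a hb.1 h ha.2

/-- Poincaré inequality -/
lemma poincare {f f1 f2 : ℝ × ℝ → ℝ} (hf : Continuous f) (h1 : Continuous f1) (h2 : Continuous f2)
    (d1 : ∀ x y, HasDerivAt (fun s => f (s, y)) (f1 (x, y)) x)
    (d2 : ∀ x y, HasDerivAt (fun s => f (x, s)) (f2 (x, y)) y)
    (h0 : ∫ x in Tsq, f x = 0) :
    ∫ x in Tsq, f x ^ 2 ≤ 2 * ∫ x in Tsq, (f1 x ^ 2 + f2 x ^ 2) := by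
  -- one-dimensional energies
  let a : ℝ → ℝ := fun y => ∫ s in (0:ℝ)..1, f1 (s, y) ^ 2
  let b : ℝ → ℝ := fun x => ∫ s in (0:ℝ)..1, f2 (x, s) ^ 2
  have ca : Continuous a := by
    apply intervalIntegral.continuous_parametric_intervalIntegral_of_continuous' (f := fun y s => f1 (s, y) ^ 2)
    simp only [Function.uncurry_def]
    fun_prop
  have cb : Continuous b := by
    apply intervalIntegral.continuous_parametric_intervalIntegral_of_continuous' (f := fun x s => f2 (x, s) ^ 2)
    simp only [Function.uncurry_def]
    fun_prop
  have pw : ∀ p ∈ Tsq, ∀ q ∈ Tsq, (f p - f q) ^ 2 ≤ 2 * a p.2 + 2 * b q.1 := by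
    intro p hp q hq
    have e1 := diff_1d (fun x => d1 x p.2) (by fun_prop) (hp.1 : p.1 ∈ Set.Icc (0:ℝ) 1)
      (hq.1 : q.1 ∈ Set.Icc (0:ℝ) 1)
    have e2 := diff_1d (fun y => d2 q.1 y) (by fun_prop) (hp.2 : p.2 ∈ Set.Icc (0:ℝ) 1)
      (hq.2 : q.2 ∈ Set.Icc (0:ℝ) 1)
    simp only [Prod.mk.eta] at e1 e2
    have e3 : (f p - f q) ^ 2 ≤ 2 * (f p - f (q.1, p.2)) ^ 2 + 2 * (f (q.1, p.2) - f q) ^ 2 := by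
      nlinarith [sq_nonneg ((f p - f (q.1, p.2)) - (f (q.1, p.2) - f q))]
    simp only [a, b]
    linarith
  have iap : ∫ p in Tsq, a p.2 = ∫ x in Tsq, f1 x ^ 2 := by
    rw [int_iter (by fun_prop), int_iter' (by fun_prop)]
    simp [a]
  have ibq : ∫ q in Tsq, b q.1 = ∫ x in Tsq, f2 x ^ 2 := by
    rw [int_iter (by fun_prop), int_iter (by fun_prop)]
    simp [b]
  have s1 : ∀ q ∈ Tsq, ∫ p in Tsq, f p ^ 2 ≤ 2 * (∫ x in Tsq, f1 x ^ 2) + 2 * b q.1 := by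
    intro q hq
    have l1 : ∫ p in Tsq, (f p - f q) ^ 2 ≤ ∫ p in Tsq, (2 * a p.2 + 2 * b q.1) :=
      setIntegral_mono_on (intOn (by fun_prop)) (intOn (by fun_prop)) isCompact_Tsq.measurableSet
        (fun p hp => pw p hp q hq)
    have l2 : ∫ p in Tsq, (f p - f q) ^ 2 = (∫ p in Tsq, f p ^ 2) + f q ^ 2 := by
      have : (fun p => (f p - f q) ^ 2) = fun p => (f p ^ 2 - 2 * f q * f p) + f q ^ 2 := by
        funext p
        ring
      rw [this, integral_add (intOn (by fun_prop)) (intOn (by fun_prop)),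
        integral_sub (intOn (by fun_prop)) (intOn (by fun_prop)), integral_const_mul, h0,
        setIntegral_const, vol_one]
      simp
    have l3 : ∫ p in Tsq, (2 * a p.2 + 2 * b q.1) = 2 * (∫ x in Tsq, f1 x ^ 2) + 2 * b q.1 := by
      rw [integral_add (intOn (by fun_prop)) (intOn (by fun_prop)), integral_const_mul, iap,
        setIntegral_const, vol_one]
      simp
    rw [l2, l3] at l1
    nlinarith [sq_nonneg (f q)]
  have l4 : ∫ q in Tsq, (∫ p in Tsq, f p ^ 2)
      ≤ ∫ q in Tsq, (2 * (∫ x in Tsq, f1 x ^ 2) + 2 * b q.1) :=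
    setIntegral_mono_on (intOn (by fun_prop)) (intOn (by fun_prop)) isCompact_Tsq.measurableSet s1
  rw [integral_add (intOn (by fun_prop)) (intOn (by fun_prop)),
    integral_const_mul 2 (fun q : ℝ × ℝ => b q.1), ibq,
    setIntegral_const, setIntegral_const, vol_one] at l4
  rw [integral_add (intOn (by fun_prop)) (intOn (by fun_prop))]
  simp only [smul_eq_mul, one_mul] at l4
  linarith

/-! ### the functional `J` -/
def J (t τ : ℝ) (F : ZZ → ℝ) (θ : ℝ) : ℝ := ∫ x in Tsq, F (t, τ, θ, x)

variable {t τ : ℝ}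

lemma Sm.sl {F : ZZ → ℝ} (hF : Sm F) (t τ θ : ℝ) : Continuous (fun x : ℝ × ℝ => F (t, τ, θ, x)) := by
  have := hF.cont
  fun_prop

lemma J_add {F G : ZZ → ℝ} (hF : Sm F) (hG : Sm G) (θ : ℝ) :
    J t τ (fun z => F z + G z) θ = J t τ F θ + J t τ G θ :=
  integral_add (intOn (hF.sl t τ θ)) (intOn (hG.sl t τ θ))
lemma J_sub {F G : ZZ → ℝ} (hF : Sm F) (hG : Sm G) (θ : ℝ) :
    J t τ (fun z => F z - G z) θ = J t τ F θ - J t τ G θ :=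
  integral_sub (intOn (hF.sl t τ θ)) (intOn (hG.sl t τ θ))
lemma J_mul (c : ℝ) (F : ZZ → ℝ) (θ : ℝ) : J t τ (fun z => c * F z) θ = c * J t τ F θ :=
  integral_const_mul _ _
lemma J_const (c : ℝ) (θ : ℝ) : J t τ (fun _ => c) θ = c := by
  rw [J, setIntegral_const, vol_one]
  simp
lemma J_mono {F G : ZZ → ℝ} (hF : Sm F) (hG : Sm G) (h : ∀ z, F z ≤ G z) (θ : ℝ) :
    J t τ F θ ≤ J t τ G θ :=
  setIntegral_mono (intOn (hF.sl t τ θ)) (intOn (hG.sl t τ θ)) (fun x => h _)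
lemma J_nonneg {F : ZZ → ℝ} (h : ∀ z, 0 ≤ F z) (θ : ℝ) : 0 ≤ J t τ F θ :=
  integral_nonneg fun x => h _

lemma Sm.per {F : ZZ → ℝ} (hF : Sm F) (t τ θ x y : ℝ) :
    F (t, τ, θ + 1, (x, y)) = F (t, τ, θ, (x, y)) ∧ F (t, τ, θ, (x + 1, y)) = F (t, τ, θ, (x, y)) ∧
      F (t, τ, θ, (x, y + 1)) = F (t, τ, θ, (x, y)) := by
  refine ⟨?_, ?_, ?_⟩
  · have := hF.2 (t, τ, θ, (x, y)) (Pi.single 0 1)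
    simpa [iot_apply] using this
  · have := hF.2 (t, τ, θ, (x, y)) (Pi.single 1 1)
    simpa [iot_apply] using this
  · have := hF.2 (t, τ, θ, (x, y)) (Pi.single 2 1)
    simpa [iot_apply] using this

lemma J_per {F : ZZ → ℝ} (hF : Sm F) (θ : ℝ) : J t τ F (θ + 1) = J t τ F θ := by
  simp only [J]
  congr 1
  funext x
  exact (hF.per t τ θ x.1 x.2).1

lemma J_d1 {F : ZZ → ℝ} (hF : Sm F) (θ : ℝ) : J t τ (pd d1 F) θ = 0 := by
  rw [J, int_iter' ((hF.pd d1).sl t τ θ)]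
  have : ∀ y : ℝ, ∫ x in (0:ℝ)..1, pd d1 F (t, τ, θ, (x, y)) = 0 := by
    intro y
    have hc := (hF.pd d1).cont
    rw [intervalIntegral.integral_eq_sub_of_hasDerivAt
      (fun x _ => hasDerivAt_line hF.1 (line_1 t τ θ y x))
      ((by fun_prop : Continuous fun x : ℝ => pd d1 F (t, τ, θ, (x, y))).intervalIntegrable _ _)]
    have := (hF.per t τ θ 0 y).2.1
    rw [zero_add] at this
    rw [this, sub_self]
  simp [this]

lemma J_d2 {F : ZZ → ℝ} (hF : Sm F) (θ : ℝ) : J t τ (pd d2 F) θ = 0 := by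
  rw [J, int_iter ((hF.pd d2).sl t τ θ)]
  have : ∀ x : ℝ, ∫ y in (0:ℝ)..1, pd d2 F (t, τ, θ, (x, y)) = 0 := by
    intro x
    have hc := (hF.pd d2).cont
    rw [intervalIntegral.integral_eq_sub_of_hasDerivAt
      (fun y _ => hasDerivAt_line hF.1 (line_2 t τ θ x y))
      ((by fun_prop : Continuous fun y : ℝ => pd d2 F (t, τ, θ, (x, y))).intervalIntegrable _ _)]
    have := (hF.per t τ θ x 0).2.2
    rw [zero_add] at this
    rw [this, sub_self]
  simp [this]

lemma J_ibp {F G : ZZ → ℝ} (hF : Sm F) (hG : Sm G) (v : ZZ) (hv : v = d1 ∨ v = d2) (θ : ℝ) :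
    J t τ (fun z => F z * pd v G z) θ = - J t τ (fun z => pd v F z * G z) θ := by
  have h0 : J t τ (pd v (fun z => F z * G z)) θ = 0 := by
    rcases hv with rfl | rfl
    · exact J_d1 (hF.mul hG) θ
    · exact J_d2 (hF.mul hG) θ
  have h1 : pd v (fun z => F z * G z) = fun z => F z * pd v G z + pd v F z * G z := by
    funext z
    rw [pd_mul' hF hG]
    ring
  rw [h1, J_add (hF.mul (hG.pd v)) ((hF.pd v).mul hG)] at h0
  linarith

lemma J_deriv {F : ZZ → ℝ} (hF : Sm F) (θ : ℝ) :
    HasDerivAt (J t τ F) (J t τ (pd dθ F) θ) θ := by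
  have hc := (hF.pd dθ).cont
  obtain ⟨B, hB⟩ := ((isCompact_closedBall θ 1).prod isCompact_Tsq).exists_bound_of_continuousOn
    (f := fun p : ℝ × (ℝ × ℝ) => pd dθ F (t, τ, p.1, p.2)) (by fun_prop)
  have := hasDerivAt_integral_of_dominated_loc_of_deriv_le
    (μ := (volume : Measure (ℝ × ℝ)).restrict Tsq)
    (F := fun θ x => F (t, τ, θ, x)) (F' := fun θ x => pd dθ F (t, τ, θ, x)) (x₀ := θ)
    (s := Metric.closedBall θ 1) (bound := fun _ => B) (Metric.closedBall_mem_nhds θ one_pos)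
    (Eventually.of_forall fun θ => (hF.sl t τ θ).aestronglyMeasurable)
    (intOn (hF.sl t τ θ)) ((hF.pd dθ).sl t τ θ).aestronglyMeasurable
    (by
      filter_upwards [ae_restrict_mem isCompact_Tsq.measurableSet] with x hx
      intro s hs
      exact hB (s, x) ⟨hs, hx⟩)
    (intOn continuous_const)
    (Eventually.of_forall fun x s _ => hasDerivAt_line hF.1 (line_θ t τ x s))
  exact this.2

lemma J_poincare {F : ZZ → ℝ} (hF : Sm F) (θ : ℝ) (h0 : J t τ F θ = 0) :
    J t τ (fun z => F z ^ 2) θ ≤ 2 * J t τ (fun z => pd d1 F z ^ 2 + pd d2 F z ^ 2) θ :=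
  poincare (hF.sl t τ θ) ((hF.pd d1).sl t τ θ) ((hF.pd d2).sl t τ θ)
    (fun x y => hasDerivAt_line hF.1 (line_1 t τ θ y x))
    (fun x y => hasDerivAt_line hF.1 (line_2 t τ θ x y)) h0

/-- periodic maximum lemma -/
lemma per_max {n n' : ℝ → ℝ} (hd : ∀ θ, HasDerivAt n (n' θ) θ) (hp : ∀ θ, n (θ + 1) = n θ)
    {c δ : ℝ} (hδ : 0 < δ) (h : ∀ θ, n' θ ≤ c - δ * n θ) (θ : ℝ) : n θ ≤ c / δ := by
  have hcont : Continuous n := continuous_iff_continuousAt.2 fun θ => (hd θ).continuousAt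
  have hper : Function.Periodic n 1 := hp
  obtain ⟨θ₀, -, hmax⟩ := (isCompact_Icc (a := (0:ℝ)) (b := 1)).exists_isMaxOn
    ⟨0, by simp⟩ hcont.continuousOn
  have hall : ∀ θ, n θ ≤ n θ₀ := by
    intro θ
    obtain ⟨y, hy, hyx⟩ := hper.exists_mem_Ico₀ one_pos θ
    rw [hyx]
    exact hmax ⟨hy.1, hy.2.le⟩
  have h1 : n' θ₀ = 0 := by
    have : IsLocalMax n θ₀ := Eventually.of_forall hall
    exact this.hasDerivAt_eq_zero (hd θ₀)
  have h2 := h θ₀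
  rw [h1] at h2
  refine (hall θ).trans ?_
  rw [le_div_iff₀ hδ]
  linarith

end CellProof

namespace CellProof
set_option maxSynthPendingDepth 3

variable {t τ : ℝ}

/-- The equation `μR + R_θ = ∇·(a∇R + D)`. -/
def Eqn (μ : ℝ) (a R D₁ D₂ : ZZ → ℝ) : Prop := ∀ z, μ * R z + pd dθ R z
  = pd d1 (fun z => a z * pd d1 R z + D₁ z) z + pd d2 (fun z => a z * pd d2 R z + D₂ z) z

/-- weak form -/
lemma weak {μ : ℝ} {a R D₁ D₂ φ : ZZ → ℝ} (ha : Sm a) (hR : Sm R) (h1 : Sm D₁) (h2 : Sm D₂)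
    (hφ : Sm φ) (he : Eqn μ a R D₁ D₂) (θ : ℝ) :
    J t τ (fun z => φ z * pd dθ R z) θ = - μ * J t τ (fun z => φ z * R z) θ
      - J t τ (fun z => pd d1 φ z * (a z * pd d1 R z + D₁ z)) θ
      - J t τ (fun z => pd d2 φ z * (a z * pd d2 R z + D₂ z)) θ := by
  have g1 : Sm (fun z => a z * pd d1 R z + D₁ z) := (ha.mul (hR.pd d1)).add h1
  have g2 : Sm (fun z => a z * pd d2 R z + D₂ z) := (ha.mul (hR.pd d2)).add h2
  have e : (fun z => φ z * pd dθ R z) = fun z => (φ z * pd d1 (fun z => a z * pd d1 R z + D₁ z) z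
      + φ z * pd d2 (fun z => a z * pd d2 R z + D₂ z) z) - μ * (φ z * R z) := by
    funext z
    linear_combination (φ z) * he z
  rw [e, J_sub ((hφ.mul (g1.pd d1)).add (hφ.mul (g2.pd d2))) ((Sm.const μ).mul (hφ.mul hR)),
    J_add (hφ.mul (g1.pd d1)) (hφ.mul (g2.pd d2)), J_mul,
    J_ibp hφ g1 d1 (Or.inl rfl), J_ibp hφ g2 d2 (Or.inr rfl)]
  ring

lemma mean_zero {μ : ℝ} (hμ : 0 < μ) {a R D₁ D₂ : ZZ → ℝ} (ha : Sm a) (hR : Sm R) (h1 : Sm D₁)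
    (h2 : Sm D₂) (he : Eqn μ a R D₁ D₂) (θ : ℝ) : J t τ R θ = 0 := by
  have hw : ∀ θ, J t τ (pd dθ R) θ = - μ * J t τ R θ := by
    intro θ
    have := weak (t := t) (τ := τ) ha hR h1 h2 (Sm.const 1) he θ
    simp only [one_mul, pd_const', zero_mul, J_const, sub_zero] at this
    exact this
  have hd : ∀ θ, HasDerivAt (fun θ => J t τ R θ ^ 2) (2 * J t τ R θ * (- μ * J t τ R θ)) θ := by
    intro θ
    have := (J_deriv (t := t) (τ := τ) hR θ).fun_pow 2
    rw [hw] at this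
    simpa using this
  have := per_max hd (fun θ => by rw [J_per hR]) (c := 0) (δ := μ) hμ
    (fun θ => by nlinarith [mul_nonneg hμ.le (sq_nonneg (J t τ R θ))]) θ
  rw [zero_div] at this
  exact pow_eq_zero_iff (two_ne_zero) |>.1 (le_antisymm this (sq_nonneg _))

/-- energy -/
def En (t τ : ℝ) (a R : ZZ → ℝ) (θ : ℝ) : ℝ :=
  J t τ (fun z => a z * (pd d1 R z ^ 2 + pd d2 R z ^ 2)) θ
def Gn (t τ : ℝ) (R : ZZ → ℝ) (θ : ℝ) : ℝ :=
  J t τ (fun z => pd d1 R z ^ 2 + pd d2 R z ^ 2) θ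
def Nn (t τ : ℝ) (R : ZZ → ℝ) (θ : ℝ) : ℝ := J t τ (fun z => R z ^ 2) θ

lemma Gsm {R : ZZ → ℝ} (hR : Sm R) : Sm (fun z => pd d1 R z ^ 2 + pd d2 R z ^ 2) :=
  ((hR.pd d1).pow 2).add ((hR.pd d2).pow 2)

lemma En_ge {ν : ℝ} {a R : ZZ → ℝ} (ha : Sm a) (hR : Sm R) (hν : ∀ z, ν ≤ a z) (θ : ℝ) :
    ν * Gn t τ R θ ≤ En t τ a R θ := by
  rw [Gn, En, ← J_mul]
  refine J_mono ((Sm.const ν).mul (Gsm hR)) (ha.mul (Gsm hR)) (fun z => ?_) θ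
  have := hν z
  gcongr

lemma energy_deriv {μ ν B : ℝ} (hν : 0 < ν) {a R D₁ D₂ : ZZ → ℝ} (ha : Sm a)
    (hR : Sm R) (h1 : Sm D₁) (h2 : Sm D₂) (he : Eqn μ a R D₁ D₂) (haν : ∀ z, ν ≤ a z)
    (θ : ℝ) (hB : J t τ (fun z => D₁ z ^ 2 + D₂ z ^ 2) θ ≤ B) :
    HasDerivAt (Nn t τ R) (J t τ (pd dθ (fun z => R z ^ 2)) θ) θ ∧
    J t τ (pd dθ (fun z => R z ^ 2)) θ ≤ - 2 * μ * Nn t τ R θ - En t τ a R θ + B / ν := by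
  refine ⟨J_deriv (hR.pow 2) θ, ?_⟩
  have e : pd dθ (fun z => R z ^ 2) = fun z => 2 * (R z * pd dθ R z) := by
    funext z
    have : (fun z => R z ^ 2) = fun z => R z * R z := by
      funext z
      ring
    rw [this, pd_mul' hR hR]
    ring
  have hw := weak (t := t) (τ := τ) ha hR h1 h2 hR he θ
  have g1 : Sm (fun z => pd d1 R z * (a z * pd d1 R z + D₁ z)) :=
    (hR.pd d1).mul ((ha.mul (hR.pd d1)).add h1)
  have g2 : Sm (fun z => pd d2 R z * (a z * pd d2 R z + D₂ z)) :=
    (hR.pd d2).mul ((ha.mul (hR.pd d2)).add h2)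
  have hm : J t τ (fun z => (1 / 2) * (a z * (pd d1 R z ^ 2 + pd d2 R z ^ 2))
        - (1 / (2 * ν)) * (D₁ z ^ 2 + D₂ z ^ 2)) θ
      ≤ J t τ (fun z => pd d1 R z * (a z * pd d1 R z + D₁ z)
        + pd d2 R z * (a z * pd d2 R z + D₂ z)) θ := by
    refine J_mono (((Sm.const _).mul (ha.mul (Gsm hR))).sub
      ((Sm.const _).mul ((h1.pow 2).add (h2.pow 2)))) (g1.add g2) (fun z => ?_) θ
    have key : ∀ p d : ℝ, 0 ≤ (1 / 2) * (ν * p ^ 2) + p * d + (1 / (2 * ν)) * d ^ 2 := by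
      intro p d
      have : (1 / 2) * (ν * p ^ 2) + p * d + (1 / (2 * ν)) * d ^ 2
          = (1 / (2 * ν)) * (ν * p + d) ^ 2 := by
        field_simp
        ring
      rw [this]
      positivity
    have k1 := key (pd d1 R z) (D₁ z)
    have k2 := key (pd d2 R z) (D₂ z)
    nlinarith [mul_nonneg (sub_nonneg.2 (haν z)) (sq_nonneg (pd d1 R z)),
      mul_nonneg (sub_nonneg.2 (haν z)) (sq_nonneg (pd d2 R z))]
  rw [J_sub ((Sm.const _).mul (ha.mul (Gsm hR))) ((Sm.const _).mul ((h1.pow 2).add (h2.pow 2))),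
    J_mul, J_mul, J_add g1 g2] at hm
  have e2 : (fun z => R z * R z) = fun z => R z ^ 2 := by
    funext z
    ring
  rw [e2] at hw
  rw [e, J_mul, hw, Nn, En]
  have hB2 : (1 / (2 * ν)) * J t τ (fun z => D₁ z ^ 2 + D₂ z ^ 2) θ ≤ (1 / (2 * ν)) * B := by
    gcongr
  have hB3 : (1 / (2 * ν)) * B = B / ν / 2 := by
    field_simp
  linarith

lemma energy {μ ν B : ℝ} (hμ : 0 < μ) (hν : 0 < ν) {a R D₁ D₂ : ZZ → ℝ} (ha : Sm a)
    (hR : Sm R) (h1 : Sm D₁) (h2 : Sm D₂) (he : Eqn μ a R D₁ D₂) (haν : ∀ z, ν ≤ a z)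
    (hB : ∀ θ, J t τ (fun z => D₁ z ^ 2 + D₂ z ^ 2) θ ≤ B) (θ : ℝ) :
    Nn t τ R θ ≤ (B / ν) / (ν / 2) := by
  refine per_max (fun θ => (energy_deriv (t := t) (τ := τ) hν ha hR h1 h2 he haν θ (hB θ)).1)
    (fun θ => J_per (hR.pow 2) θ) (by positivity) (fun θ => ?_) θ
  have h3 := (energy_deriv (t := t) (τ := τ) hν ha hR h1 h2 he haν θ (hB θ)).2
  have h4 := J_poincare hR θ (mean_zero (t := t) (τ := τ) hμ ha hR h1 h2 he θ)
  have h5 := En_ge (t := t) (τ := τ) ha hR haν θ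
  have h6 : 0 ≤ Nn t τ R θ := J_nonneg (fun z => sq_nonneg _) θ
  have h7 : Nn t τ R θ ≤ 2 * Gn t τ R θ := h4
  have h8 : 0 ≤ μ * Nn t τ R θ := by positivity
  nlinarith [mul_le_mul_of_nonneg_left h7 hν.le]

/-- gradient and `θ`-derivative estimates -/
lemma grad_est {μ ν γ : ℝ} (hμ : 0 < μ) (hν : 0 < ν) (hγ : 0 ≤ γ) {a R D₁ D₂ : ZZ → ℝ} (ha : Sm a)
    (hR : Sm R) (h1 : Sm D₁) (h2 : Sm D₂) (he : Eqn μ a R D₁ D₂) (haν : ∀ z, ν ≤ a z)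
    (haθ : ∀ z, pd dθ a z ≤ γ) (hD : ∀ z, D₁ z ^ 2 + D₂ z ^ 2 ≤ 2 * γ ^ 2)
    (hdiv : ∀ z, (pd d1 D₁ z + pd d2 D₂ z) ^ 2 ≤ γ ^ 2) :
    let N := (2 * γ ^ 2 / ν) / (ν / 2)
    let c := γ ^ 2 + (γ / ν + 1) * (2 * γ ^ 2 / ν) + (γ / ν + 1) * N
    (∀ θ, Nn t τ R θ ≤ N) ∧ (∀ θ, Gn t τ R θ ≤ c / ν) ∧
      ∫ θ in (0:ℝ)..1, Nn t τ (pd dθ R) θ ≤ γ ^ 2 + (γ / ν) * c := by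
  intro N c
  have hB : ∀ θ, J t τ (fun z => D₁ z ^ 2 + D₂ z ^ 2) θ ≤ 2 * γ ^ 2 := by
    intro θ
    have := J_mono (t := t) (τ := τ) ((h1.pow 2).add (h2.pow 2)) (Sm.const (2 * γ ^ 2)) hD θ
    rwa [J_const] at this
  have hN : ∀ θ, Nn t τ R θ ≤ N := energy hμ hν ha hR h1 h2 he haν hB
  have hRθ := hR.pd dθ
  -- the functional Z
  let zf : ZZ → ℝ := fun z => μ * R z ^ 2 + a z * (pd d1 R z ^ 2 + pd d2 R z ^ 2)
  have zsm : Sm zf := ((Sm.const μ).mul (hR.pow 2)).add (ha.mul (Gsm hR))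
  have zeq : ∀ θ, J t τ zf θ = μ * Nn t τ R θ + En t τ a R θ := by
    intro θ
    rw [Nn, En, ← J_mul]
    exact J_add ((Sm.const μ).mul (hR.pow 2)) (ha.mul (Gsm hR)) θ
  have pdsq : ∀ (F : ZZ → ℝ), Sm F → ∀ z, pd dθ (fun z => F z ^ 2) z = 2 * (F z * pd dθ F z) := by
    intro F hF z
    have : (fun z => F z ^ 2) = fun z => F z * F z := by
      funext z
      ring
    rw [this, pd_mul' hF hF]
    ring
  have zθ : ∀ z, pd dθ zf z = 2 * μ * (R z * pd dθ R z)
      + pd dθ a z * (pd d1 R z ^ 2 + pd d2 R z ^ 2)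
      + 2 * (a z * (pd d1 R z * pd d1 (pd dθ R) z + pd d2 R z * pd d2 (pd dθ R) z)) := by
    intro z
    rw [pd_add' ((Sm.const μ).mul (hR.pow 2)) (ha.mul (Gsm hR)), pd_mul' (Sm.const μ) (hR.pow 2),
      pd_const', pd_mul' ha (Gsm hR), pd_add' ((hR.pd d1).pow 2) ((hR.pd d2).pow 2),
      pdsq _ (hR.pd d1), pdsq _ (hR.pd d2), pdsq _ hR, pd_comm hR dθ d1, pd_comm hR dθ d2]
    ring
  have hZ : ∀ θ, J t τ (pd dθ zf) θ
      ≤ - Nn t τ (pd dθ R) θ + γ ^ 2 + (γ / ν) * En t τ a R θ := by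
    intro θ
    have hw := weak (t := t) (τ := τ) ha hR h1 h2 hRθ he θ
    have i1 := J_ibp (t := t) (τ := τ) hRθ h1 d1 (Or.inl rfl) θ
    have i2 := J_ibp (t := t) (τ := τ) hRθ h2 d2 (Or.inr rfl) θ
    let f1 : ZZ → ℝ := fun z => a z * (pd d1 R z * pd d1 (pd dθ R) z)
    let f2 : ZZ → ℝ := fun z => a z * (pd d2 R z * pd d2 (pd dθ R) z)
    have s1 : Sm f1 := ha.mul ((hR.pd d1).mul (hRθ.pd d1))
    have s2 : Sm f2 := ha.mul ((hR.pd d2).mul (hRθ.pd d2))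
    have e1 : (fun z => pd d1 (pd dθ R) z * (a z * pd d1 R z + D₁ z))
        = fun z => f1 z + pd d1 (pd dθ R) z * D₁ z := by
      funext z
      simp only [f1]
      ring
    have e2 : (fun z => pd d2 (pd dθ R) z * (a z * pd d2 R z + D₂ z))
        = fun z => f2 z + pd d2 (pd dθ R) z * D₂ z := by
      funext z
      simp only [f2]
      ring
    rw [e1, e2, J_add s1 ((hRθ.pd d1).mul h1), J_add s2 ((hRθ.pd d2).mul h2)] at hw
    -- upper bound for Z'
    let gz : ZZ → ℝ := fun z => (2 * μ * (pd dθ R z * R z)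
      + γ / ν * (a z * (pd d1 R z ^ 2 + pd d2 R z ^ 2))) + (2 * f1 z + 2 * f2 z)
    have m1 : J t τ (pd dθ zf) θ ≤ J t τ gz θ := by
      refine J_mono (zsm.pd dθ) ((((Sm.const _).mul (hRθ.mul hR)).add
        ((Sm.const _).mul (ha.mul (Gsm hR)))).add (((Sm.const _).mul s1).add
        ((Sm.const _).mul s2))) (fun z => ?_) θ
      rw [zθ]
      simp only [gz, f1, f2]
      have k1 : pd dθ a z ≤ γ / ν * a z := by
        have : γ ≤ γ / ν * a z := by
          rw [div_mul_eq_mul_div, le_div_iff₀ hν]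
          exact mul_le_mul_of_nonneg_left (haν z) hγ
        exact (haθ z).trans this
      have k2 := mul_le_mul_of_nonneg_right k1
        (by positivity : 0 ≤ pd d1 R z ^ 2 + pd d2 R z ^ 2)
      linarith
    have m2 : J t τ gz θ = 2 * μ * J t τ (fun z => pd dθ R z * R z) θ
        + γ / ν * En t τ a R θ + (2 * J t τ f1 θ + 2 * J t τ f2 θ) := by
      rw [En, ← J_mul, ← J_mul, ← J_mul, ← J_mul]
      rw [← J_add ((Sm.const _).mul (hRθ.mul hR)) ((Sm.const _).mul (ha.mul (Gsm hR))),
        ← J_add ((Sm.const _).mul s1) ((Sm.const _).mul s2),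
        ← J_add (((Sm.const _).mul (hRθ.mul hR)).add ((Sm.const _).mul (ha.mul (Gsm hR))))
          (((Sm.const _).mul s1).add ((Sm.const _).mul s2))]
    have m3 : J t τ (fun z => 2 * (pd dθ R z * pd d1 D₁ z) + 2 * (pd dθ R z * pd d2 D₂ z)) θ
        ≤ J t τ (fun z => pd dθ R z ^ 2 + γ ^ 2) θ := by
      refine J_mono (((Sm.const _).mul (hRθ.mul (h1.pd d1))).add
        ((Sm.const _).mul (hRθ.mul (h2.pd d2)))) ((hRθ.pow 2).add (Sm.const _)) (fun z => ?_) θ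
      have := hdiv z
      nlinarith [sq_nonneg (pd dθ R z - (pd d1 D₁ z + pd d2 D₂ z))]
    rw [J_add ((Sm.const _).mul (hRθ.mul (h1.pd d1))) ((Sm.const _).mul (hRθ.mul (h2.pd d2))),
      J_add (hRθ.pow 2) (Sm.const _), J_mul, J_mul, J_const, i1, i2] at m3
    have m4 : J t τ (fun z => pd dθ R z * pd dθ R z) θ = Nn t τ (pd dθ R) θ := by
      rw [Nn]
      congr 1
      funext z
      ring
    rw [m4] at hw
    have m5 : J t τ (fun z => pd dθ R z ^ 2) θ = Nn t τ (pd dθ R) θ := rfl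
    rw [m5] at m3
    rw [m2] at m1
    linarith
  have hEnn : ∀ θ, 0 ≤ En t τ a R θ := by
    intro θ
    refine J_nonneg (fun z => ?_) θ
    have := haν z
    have : 0 ≤ a z := hν.le.trans this
    positivity
  have hNnn : ∀ (F : ZZ → ℝ) θ, 0 ≤ Nn t τ F θ := fun F θ => J_nonneg (fun z => sq_nonneg _) θ
  have hgν : 0 ≤ γ / ν := by positivity
  have hY : ∀ θ, J t τ zf θ + (γ / ν + 1) * Nn t τ R θ ≤ c / 1 := by
    refine per_max (n := fun θ => J t τ zf θ + (γ / ν + 1) * Nn t τ R θ)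
      (n' := fun θ => J t τ (pd dθ zf) θ + (γ / ν + 1) * J t τ (pd dθ (fun z => R z ^ 2)) θ)
      (fun θ => (J_deriv zsm θ).add ((J_deriv (hR.pow 2) θ).const_mul _))
      (fun θ => by simp only [Nn, J_per zsm, J_per (hR.pow 2)]) one_pos (fun θ => ?_)
    have k1 := (energy_deriv (t := t) (τ := τ) hν ha hR h1 h2 he haν θ (hB θ)).2
    have k2 := hZ θ
    have k3 := hNnn (pd dθ R) θ
    have k4 := hNnn R θ
    have k5 := hN θ
    have k6 := hEnn θ
    have k7 : 0 ≤ μ * Nn t τ R θ := by positivity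
    have k8 : J t τ (pd dθ (fun z => R z ^ 2)) θ ≤ 2 * γ ^ 2 / ν - J t τ zf θ := by
      rw [zeq]
      linarith
    have k9 := mul_le_mul_of_nonneg_left k8 (by positivity : 0 ≤ γ / ν + 1)
    have k10 := mul_le_mul_of_nonneg_left k5 (by positivity : 0 ≤ γ / ν + 1)
    have k11 : (γ / ν) * En t τ a R θ ≤ (γ / ν) * J t τ zf θ := by
      rw [zeq]
      gcongr
      linarith
    simp only [c]
    linarith
  have hE : ∀ θ, En t τ a R θ ≤ c := by
    intro θ
    have := hY θ
    rw [zeq, div_one] at this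
    have k4 := hNnn R θ
    have k7 : 0 ≤ μ * Nn t τ R θ := by positivity
    have k8 : 0 ≤ (γ / ν + 1) * Nn t τ R θ := by positivity
    linarith
  refine ⟨hN, fun θ => ?_, ?_⟩
  · rw [le_div_iff₀ hν]
    have := En_ge (t := t) (τ := τ) ha hR haν θ
    linarith [hE θ]
  · have cont : ∀ F, Sm F → Continuous (J t τ F) := fun F hF =>
      continuous_iff_continuousAt.2 fun θ => (J_deriv hF θ).continuousAt
    have k1 : ∫ θ in (0:ℝ)..1, J t τ (pd dθ zf) θ = 0 := by
      rw [intervalIntegral.integral_eq_sub_of_hasDerivAt (fun θ _ => J_deriv zsm θ)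
        ((cont _ (zsm.pd dθ)).intervalIntegrable _ _)]
      have := J_per (t := t) (τ := τ) zsm 0
      rw [zero_add] at this
      rw [this, sub_self]
    have c1 := (cont _ (zsm.pd dθ)).intervalIntegrable (μ := volume) 0 1
    have c2 : IntervalIntegrable (Nn t τ (pd dθ R)) volume 0 1 :=
      (cont _ (hRθ.pow 2)).intervalIntegrable 0 1
    have k2 : ∫ θ in (0:ℝ)..1, (J t τ (pd dθ zf) θ + Nn t τ (pd dθ R) θ)
        ≤ ∫ θ in (0:ℝ)..1, (γ ^ 2 + (γ / ν) * c) := by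
      refine intervalIntegral.integral_mono_on zero_le_one (c1.add c2) (by simp) (fun θ _ => ?_)
      have := hZ θ
      have := mul_le_mul_of_nonneg_left (hE θ) hgν
      linarith
    rw [intervalIntegral.integral_add c1 c2, k1] at k2
    simpa using k2

lemma eqn_deriv {μ : ℝ} {a R D₁ D₂ : ZZ → ℝ} (ha : Sm a) (hR : Sm R) (h1 : Sm D₁) (h2 : Sm D₂)
    (he : Eqn μ a R D₁ D₂) (v : ZZ) :
    Eqn μ a (pd v R) (fun z => pd v a z * pd d1 R z + pd v D₁ z)
      (fun z => pd v a z * pd d2 R z + pd v D₂ z) := by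
  have key : ∀ (d : ZZ) (D : ZZ → ℝ), Sm D → ∀ z, pd v (pd d (fun z => a z * pd d R z + D z)) z
      = pd d (fun z => a z * pd d (pd v R) z + (pd v a z * pd d R z + pd v D z)) z := by
    intro d D hD z
    rw [pd_comm ((ha.mul (hR.pd d)).add hD)]
    congr 1
    funext z
    rw [pd_add' (ha.mul (hR.pd d)) hD, pd_mul' ha (hR.pd d), pd_comm hR v d]
    ring
  intro z
  have g1 : Sm (fun z => a z * pd d1 R z + D₁ z) := (ha.mul (hR.pd d1)).add h1
  have g2 : Sm (fun z => a z * pd d2 R z + D₂ z) := (ha.mul (hR.pd d2)).add h2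
  rw [← key d1 D₁ h1, ← key d2 D₂ h2, ← pd_add' (g1.pd d1) (g2.pd d2)]
  have e : (fun z => pd d1 (fun z => a z * pd d1 R z + D₁ z) z
      + pd d2 (fun z => a z * pd d2 R z + D₂ z) z) = fun z => μ * R z + pd dθ R z := by
    funext z
    exact (he z).symm
  rw [e, pd_add' ((Sm.const μ).mul hR) (hR.pd dθ), pd_mul' (Sm.const μ) hR, pd_const',
    pd_comm hR v dθ]
  ring

lemma deriv_est {μ ν γ δ G : ℝ} (hμ : 0 < μ) (hν : 0 < ν) {a R D₁ D₂ : ZZ → ℝ}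
    (ha : Sm a) (hR : Sm R) (h1 : Sm D₁) (h2 : Sm D₂) (he : Eqn μ a R D₁ D₂) (haν : ∀ z, ν ≤ a z)
    (v : ZZ) (hav : ∀ z, pd v a z ^ 2 ≤ δ * γ ^ 2) (hv1 : ∀ z, pd v D₁ z ^ 2 ≤ δ * γ ^ 2)
    (hv2 : ∀ z, pd v D₂ z ^ 2 ≤ δ * γ ^ 2) (hδ : 0 ≤ δ) (hG : ∀ θ, Gn t τ R θ ≤ G) (θ : ℝ) :
    Nn t τ (pd v R) θ ≤ δ * (((2 * γ ^ 2 * G + 4 * γ ^ 2) / ν) / (ν / 2)) := by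
  have s1 : Sm (fun z => pd v a z * pd d1 R z + pd v D₁ z) :=
    ((ha.pd v).mul (hR.pd d1)).add (h1.pd v)
  have s2 : Sm (fun z => pd v a z * pd d2 R z + pd v D₂ z) :=
    ((ha.pd v).mul (hR.pd d2)).add (h2.pd v)
  have hB : ∀ θ, J t τ (fun z => (pd v a z * pd d1 R z + pd v D₁ z) ^ 2
      + (pd v a z * pd d2 R z + pd v D₂ z) ^ 2) θ ≤ δ * (2 * γ ^ 2 * G + 4 * γ ^ 2) := by
    intro θ
    have m1 : J t τ (fun z => (pd v a z * pd d1 R z + pd v D₁ z) ^ 2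
      + (pd v a z * pd d2 R z + pd v D₂ z) ^ 2) θ
      ≤ J t τ (fun z => (2 * δ * γ ^ 2) * (pd d1 R z ^ 2 + pd d2 R z ^ 2) + 4 * δ * γ ^ 2) θ := by
      refine J_mono ((s1.pow 2).add (s2.pow 2)) (((Sm.const _).mul (Gsm hR)).add (Sm.const _))
        (fun z => ?_) θ
      have k1 := mul_le_mul_of_nonneg_right (hav z) (sq_nonneg (pd d1 R z))
      have k2 := mul_le_mul_of_nonneg_right (hav z) (sq_nonneg (pd d2 R z))
      have k3 := hv1 z
      have k4 := hv2 z
      nlinarith [sq_nonneg (pd v a z * pd d1 R z - pd v D₁ z),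
        sq_nonneg (pd v a z * pd d2 R z - pd v D₂ z)]
    rw [J_add ((Sm.const _).mul (Gsm hR)) (Sm.const _), J_mul, J_const] at m1
    have m2 := mul_le_mul_of_nonneg_left (hG θ) (by positivity : 0 ≤ 2 * δ * γ ^ 2)
    have m3 : Gn t τ R θ = J t τ (fun z => pd d1 R z ^ 2 + pd d2 R z ^ 2) θ := rfl
    rw [m3] at m2
    linarith
  have := energy (t := t) (τ := τ) hμ hν ha (hR.pd v) s1 s2 (eqn_deriv ha hR h1 h2 he v) haν hB θ
  refine this.trans (le_of_eq ?_)
  ring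

end CellProof

namespace CellProof
set_option maxSynthPendingDepth 3

/-! ### Translation to the curried formulation -/

/-- uncurrying -/
def unc {E : Type} (S : ℝ → ℝ → ℝ → (ℝ × ℝ) → E) (p : ZZ) : E := S p.1 p.2.1 p.2.2.1 p.2.2.2

lemma per_of {E : Type} {S : ℝ → ℝ → ℝ → (ℝ × ℝ) → E} (h1 : ∀ t τ θ x, S t τ (θ + 1) x = S t τ θ x)
    (h2 : ∀ t τ θ, SpacePeriodic (S t τ θ)) : Per iot (unc S) := by
  rintro ⟨t, τ, θ, x, y⟩ n
  simp only [iot_apply, Prod.mk_add_mk, add_zero, unc]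
  have p1 : Function.Periodic (fun θ => S t τ θ (x + n 1, y + n 2)) 1 := fun θ => h1 t τ θ _
  have p2 : Function.Periodic (fun x => S t τ θ (x, y + n 2)) 1 := by
    intro x
    have := (h2 t τ θ (x, y + n 2)).1
    simpa using this
  have p3 : Function.Periodic (fun y => S t τ θ (x, y)) 1 := by
    intro y
    have := (h2 t τ θ (x, y)).2
    simpa using this
  have q1 := p1.int_mul (n 0) θ
  have q2 := p2.int_mul (n 1) x
  have q3 := p3.int_mul (n 2) y
  simp only [mul_one] at q1 q2 q3
  rw [q1, q2, q3]

lemma sp_fderiv {F : ZZ → ℝ} (hF : ContDiff ℝ (⊤ : ℕ∞) F) (t τ θ : ℝ) (x v : ℝ × ℝ) :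
    fderiv ℝ (fun y => F (t, τ, θ, y)) x v = pd (0, 0, 0, v) F (t, τ, θ, x) := by
  have h1 : HasFDerivAt (fun y : ℝ × ℝ => ((t, τ, θ, y) : ZZ))
      ((0 : (ℝ × ℝ) →L[ℝ] ℝ).prod ((0 : (ℝ × ℝ) →L[ℝ] ℝ).prod ((0 : (ℝ × ℝ) →L[ℝ] ℝ).prod
        (ContinuousLinearMap.id ℝ (ℝ × ℝ))))) x :=
    (hasFDerivAt_const t x).prodMk ((hasFDerivAt_const τ x).prodMk ((hasFDerivAt_const θ x).prodMk
      (hasFDerivAt_id x)))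
  have h2 := (hF.differentiable (by simp) (t, τ, θ, x)).hasFDerivAt.comp x h1
  have h3 : fderiv ℝ (fun y => F (t, τ, θ, y)) x = _ := h2.fderiv
  rw [h3]
  rfl

lemma grad_eq {S : ℝ → ℝ → ℝ → (ℝ × ℝ) → ℝ} (hS : ContDiff ℝ (⊤ : ℕ∞) (unc S)) (t τ θ : ℝ)
    (x : ℝ × ℝ) : grad (S t τ θ) x = (pd d1 (unc S) (t, τ, θ, x), pd d2 (unc S) (t, τ, θ, x)) := by
  have h := sp_fderiv hS t τ θ x
  rw [grad]
  exact Prod.ext (h (1, 0)) (h (0, 1))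

lemma div2_eq {G₁ G₂ : ZZ → ℝ} (h1 : ContDiff ℝ (⊤ : ℕ∞) G₁) (h2 : ContDiff ℝ (⊤ : ℕ∞) G₂)
    (t τ θ : ℝ) (V : ℝ × ℝ → ℝ × ℝ) (hV : ∀ y, V y = (G₁ (t, τ, θ, y), G₂ (t, τ, θ, y)))
    (x : ℝ × ℝ) : div2 V x = pd d1 G₁ (t, τ, θ, x) + pd d2 G₂ (t, τ, θ, x) := by
  have e1 : (fun y => (V y).1) = fun y => G₁ (t, τ, θ, y) := by
    funext y
    rw [hV]
  have e2 : (fun y => (V y).2) = fun y => G₂ (t, τ, θ, y) := by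
    funext y
    rw [hV]
  rw [div2, e1, e2, sp_fderiv h1, sp_fderiv h2]
  rfl

/-- translation of the equation -/
lemma sol_iff {A : ℝ → ℝ → ℝ → (ℝ × ℝ) → ℝ} {C : ℝ → ℝ → ℝ → (ℝ × ℝ) → ℝ × ℝ} {μ ν : ℝ}
    (hA : Sm (unc A)) (h1 : Sm (fun z => (unc C z).1)) (h2 : Sm (fun z => (unc C z).2))
    (S : ℝ → ℝ → ℝ → (ℝ × ℝ) → ℝ) :
    IsRegCellSolP A C μ ν S ↔ Sm (unc S) ∧
      Eqn μ (fun z => unc A z + ν) (unc S) (fun z => (unc C z).1) (fun z => (unc C z).2) := by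
  have ha : Sm (fun z => unc A z + ν) := hA.add (Sm.const ν)
  have main : ∀ (hS : Sm (unc S)) t τ θ x,
      (μ * S t τ θ x + deriv (fun σ => S t τ σ x) θ
        - div2 (fun y => (A t τ θ y + ν) • grad (S t τ θ) y) x = div2 (C t τ θ) x) ↔
      μ * unc S (t, τ, θ, x) + pd dθ (unc S) (t, τ, θ, x)
        = pd d1 (fun z => (unc A z + ν) * pd d1 (unc S) z + (unc C z).1) (t, τ, θ, x)
          + pd d2 (fun z => (unc A z + ν) * pd d2 (unc S) z + (unc C z).2) (t, τ, θ, x) := by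
    intro hS t τ θ x
    have g1 : Sm (fun z => (unc A z + ν) * pd d1 (unc S) z) := ha.mul (hS.pd d1)
    have g2 : Sm (fun z => (unc A z + ν) * pd d2 (unc S) z) := ha.mul (hS.pd d2)
    have e1 : deriv (fun σ => S t τ σ x) θ = pd dθ (unc S) (t, τ, θ, x) :=
      (hasDerivAt_line hS.1 (line_θ t τ x θ)).deriv
    have e2 := div2_eq g1.1 g2.1 t τ θ (fun y => (A t τ θ y + ν) • grad (S t τ θ) y)
      (fun y => by
        rw [grad_eq hS.1]
        rfl) x
    have e3 := div2_eq h1.1 h2.1 t τ θ (C t τ θ) (fun y => rfl) x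
    rw [e1, e2, e3, pd_add' g1 h1, pd_add' g2 h2]
    have e4 : unc S (t, τ, θ, x) = S t τ θ x := rfl
    rw [e4]
    constructor <;> intro h <;> linarith
  constructor
  · rintro ⟨a1, a2, a3, a4⟩
    have hS : Sm (unc S) := ⟨a1, per_of a2 a3⟩
    refine ⟨hS, ?_⟩
    rintro ⟨t, τ, θ, x⟩
    exact (main hS t τ θ x).1 (a4 t τ θ x)
  · rintro ⟨hS, he⟩
    refine ⟨hS.1, ?_, ?_, ?_⟩
    · intro t τ θ x
      exact (hS.per t τ θ x.1 x.2).1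
    · intro t τ θ x
      have := hS.per t τ θ x.1 x.2
      refine ⟨?_, ?_⟩
      · have h := this.2.1
        simp only [unc] at h
        convert h using 2
        ext <;> simp
      · have h := this.2.2
        simp only [unc] at h
        convert h using 2
        ext <;> simp
    · intro t τ θ x
      exact (main hS t τ θ x).2 (he _)

lemma pd_re {G : ZZ → ℂ} (hG : ContDiff ℝ (⊤ : ℕ∞) G) (v z : ZZ) :
    pd v (fun z => (G z).re) z = (pd v G z).re := by
  have h1 := (Complex.reCLM.hasFDerivAt (x := G z)).comp z
    (hG.differentiable (by simp) z).hasFDerivAt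
  have h2 : fderiv ℝ (fun z => (G z).re) z = _ := h1.fderiv
  simp only [pd]
  rw [h2]
  rfl

lemma exists_real {μ γ ν : ℝ} (hμ : 0 < μ) (hγ : 0 ≤ γ) (hν : 0 < ν) {A D₁ D₂ : ZZ → ℝ}
    (hA : Sm A) (h1 : Sm D₁) (h2 : Sm D₂) (hA0 : ∀ z, 0 ≤ A z) (hAγ : ∀ z, A z ≤ γ) :
    ∃ F : ZZ → ℝ, Sm F ∧ Eqn μ (fun z => A z + ν) F D₁ D₂ := by
  have cof : ∀ {f : ZZ → ℝ}, Sm f → ContDiff ℝ (⊤ : ℕ∞) (fun z => (f z : ℂ)) := by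
    intro f hf
    exact Complex.ofRealCLM.contDiff.comp hf.1
  have pof : ∀ {f : ZZ → ℝ}, Sm f → Per iot (fun z => (f z : ℂ)) := by
    intro f hf z n
    simp only [hf.2 z n]
  have hb : Sm (fun z => γ - A z) := (Sm.const γ).sub hA
  obtain ⟨S, hS, pS, heq⟩ := exists_sol_complex (ι := iot) μ γ (γ + ν) hμ hγ (by linarith)
    (fun z => ((γ - A z : ℝ) : ℂ)) (fun z => (D₁ z : ℂ)) (fun z => (D₂ z : ℂ)) (cof hb) (cof h1)
    (cof h2) (pof hb) (pof h1) (pof h2) (by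
      intro z
      rw [Complex.norm_real, Real.norm_eq_abs, abs_le]
      constructor <;> linarith [hA0 z, hAγ z])
  let F : ZZ → ℝ := fun z => (S z).re
  have hF : Sm F := ⟨Complex.reCLM.contDiff.comp hS, fun z n => by simp only [F, pS z n]⟩
  refine ⟨F, hF, ?_⟩
  intro z
  have h := congrArg Complex.re (heq z)
  rw [iot_0, iot_1, iot_2] at h
  have pF : ∀ v, pd v F = fun z => (pd v S z).re := fun v => funext fun z => pd_re hS v z
  have pFF : ∀ v, pd v (pd v F) z = (pd v (pd v S) z).re := by
    intro v
    rw [pF]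
    exact pd_re (pd_contDiff v hS) v z
  have fl : ∀ (v : ZZ) (D : ZZ → ℝ), Sm D →
      (pd v (fun z => (D z : ℂ) - ((γ - A z : ℝ) : ℂ) * pd v S z) z).re
        = pd v (fun z => (A z + ν) * pd v F z + D z) z - (γ + ν) * pd v (pd v F) z := by
    intro v D hD
    rw [← pd_re ((cof hD).sub ((cof hb).mul (pd_contDiff v hS)))]
    have e : (fun z => ((D z : ℂ) - ((γ - A z : ℝ) : ℂ) * pd v S z).re)
        = fun z => ((A z + ν) * pd v F z + D z) - (γ + ν) * pd v F z := by
      funext z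
      rw [Complex.sub_re, Complex.re_ofReal_mul, Complex.ofReal_re, pF]
      ring
    rw [e, pd_sub' (((hA.add (Sm.const ν)).mul (hF.pd v)).add hD)
      ((Sm.const (γ + ν)).mul (hF.pd v)), pd_mul' (Sm.const (γ + ν)) (hF.pd v), pd_const']
    ring
  have h5 : (((γ + ν : ℝ) : ℂ) * (pd d1 (pd d1 S) z + pd d2 (pd d2 S) z)).re
      = (γ + ν) * (pd d1 (pd d1 F) z + pd d2 (pd d2 F) z) := by
    rw [Complex.re_ofReal_mul, Complex.add_re, pFF, pFF]
  rw [Complex.sub_re, Complex.add_re, Complex.add_re, h5, Complex.re_ofReal_mul,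
    fl d1 D₁ h1, fl d2 D₂ h2] at h
  have h6 : pd dθ F z = (pd dθ S z).re := pd_re hS dθ z
  have h7 : F z = (S z).re := rfl
  rw [h6, h7]
  linarith

lemma eq_zero_of_Nn {F : ZZ → ℝ} (hF : Sm F) (h : ∀ t τ θ, Nn t τ F θ ≤ 0) (z : ZZ) : F z = 0 := by
  obtain ⟨t, τ, θ, x, y⟩ := z
  have hc := hF.sl t τ θ
  have h0 : ∫ x in Tsq, F (t, τ, θ, x) ^ 2 = 0 :=
    le_antisymm (h t τ θ) (integral_nonneg fun x => sq_nonneg _)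
  rw [integral_eq_zero_iff_of_nonneg (fun x => sq_nonneg _) (intOn (hc.pow 2))] at h0
  have h1 : (fun x : ℝ × ℝ => F (t, τ, θ, x)) =ᵐ[volume.restrict Tsq] fun _ => 0 := by
    filter_upwards [h0] with x hx
    exact pow_eq_zero_iff (two_ne_zero) |>.1 hx
  have hsub : Tsq ⊆ closure (interior Tsq) := by
    rw [Tsq, interior_prod_eq, closure_prod_eq, interior_Icc, closure_Ioo zero_ne_one]
  have h2 := Measure.eqOn_of_ae_eq h1 hc.continuousOn continuousOn_const hsub
  have h3 := hF.2 (t, τ, θ, (x, y)) ![0, -⌊x⌋, -⌊y⌋]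
  have h4 : (t, τ, θ, (x, y)) + iot (fun i => ((![0, -⌊x⌋, -⌊y⌋] : Fin 3 → ℤ) i : ℝ))
      = (t, τ, θ, (Int.fract x, Int.fract y)) := by
    simp [iot_apply, Int.fract, sub_eq_add_neg]
  rw [h4] at h3
  rw [← h3]
  exact h2 (x := (Int.fract x, Int.fract y)) ⟨⟨Int.fract_nonneg x, (Int.fract_lt_one x).le⟩,
    ⟨Int.fract_nonneg y, (Int.fract_lt_one y).le⟩⟩

lemma rpow_half_le {x B : ℝ} (h : x ≤ B) (hB : 0 ≤ B) : x ^ (1 / 2 : ℝ) ≤ 1 + B := by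
  rw [← Real.sqrt_eq_rpow]
  refine Real.sqrt_le_iff.2 ⟨by positivity, ?_⟩
  nlinarith

lemma Linf_le {f : ℝ → ℝ × ℝ → ℝ} {B c : ℝ} (h : ∀ θ, ∫ x in Tsq, f θ x ^ 2 ≤ B) (hB : 0 ≤ B)
    (hc : 1 + B ≤ c) : LinfL2Norm f ≤ c := by
  haveI : Nonempty (Set.Icc (0:ℝ) 1) := ⟨⟨0, by simp⟩⟩
  refine ciSup_le fun θ => ?_
  exact (rpow_half_le (h θ.1) hB).trans hc

lemma Linf_le_eps {f : ℝ → ℝ × ℝ → ℝ} {B c ε : ℝ} (hε : 0 ≤ ε)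
    (h : ∀ θ, ∫ x in Tsq, f θ x ^ 2 ≤ ε * B) (hB : 0 ≤ B)
    (hc : 1 + B ≤ c) : LinfL2Norm f ≤ Real.sqrt ε * c := by
  haveI : Nonempty (Set.Icc (0:ℝ) 1) := ⟨⟨0, by simp⟩⟩
  refine ciSup_le fun θ => ?_
  rw [L2norm, ← Real.sqrt_eq_rpow]
  calc _ ≤ Real.sqrt (ε * B) := Real.sqrt_le_sqrt (h θ.1)
    _ = Real.sqrt ε * Real.sqrt B := Real.sqrt_mul hε B
    _ ≤ Real.sqrt ε * c := by
      gcongr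
      rw [Real.sqrt_eq_rpow]
      exact (rpow_half_le le_rfl hB).trans hc

lemma vec_deriv {G₁ G₂ : ZZ → ℝ} (h1 : ContDiff ℝ (⊤ : ℕ∞) G₁) (h2 : ContDiff ℝ (⊤ : ℕ∞) G₂)
    {c : ℝ → ZZ} {v : ZZ} {r b : ℝ} (hc : HasDerivAt c v r) (hb0 : 0 ≤ b)
    (hb : ‖deriv (fun s => (G₁ (c s), G₂ (c s))) r‖ ≤ b) :
    pd v G₁ (c r) ^ 2 ≤ b ^ 2 ∧ pd v G₂ (c r) ^ 2 ≤ b ^ 2 := by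
  have h := ((hasDerivAt_line h1 hc).prodMk (hasDerivAt_line h2 hc)).deriv
  rw [h] at hb
  have e1 := (norm_fst_le (pd v G₁ (c r), pd v G₂ (c r))).trans hb
  have e2 := (norm_snd_le (pd v G₁ (c r), pd v G₂ (c r))).trans hb
  simp only [Real.norm_eq_abs] at e1 e2
  exact ⟨sq_le_sq' (by linarith [neg_abs_le (pd v G₁ (c r))]) ((le_abs_self _).trans e1),
    sq_le_sq' (by linarith [neg_abs_le (pd v G₂ (c r))]) ((le_abs_self _).trans e2)⟩

theorem main_thm (γ ν : ℝ) (hγ : 0 ≤ γ) (hν : 0 < ν) : ∃ γ₃ : ℝ,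
      ∀ (ε : ℝ) (A : ℝ → ℝ → ℝ → (ℝ × ℝ) → ℝ) (C : ℝ → ℝ → ℝ → (ℝ × ℝ) → ℝ × ℝ)
        (μ : ℝ),
        0 < ε → ε ≤ 1 → CoeffBasic γ ε A C → 0 < μ →
        ∃ S : ℝ → ℝ → ℝ → (ℝ × ℝ) → ℝ,
          IsRegCellSolP A C μ ν S ∧
          (∀ S', IsRegCellSolP A C μ ν S' → S' = S) ∧
          ∀ t τ : ℝ,
            (∀ θ : ℝ, ∫ x in Tsq, S t τ θ x = 0) ∧
            L2sharpNorm (fun θ x => deriv (fun σ => S t τ σ x) θ) ≤ γ₃ ∧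
            LinfL2Norm (fun θ x => ‖grad (S t τ θ) x‖) ≤ γ₃ ∧
            LinfL2Norm (S t τ) ≤ γ₃ ∧
            LinfL2Norm (fun θ x => deriv (fun s => S s τ θ x) t) ≤ γ₃ ∧
            LinfL2Norm (fun θ x => deriv (fun s => S t s θ x) τ) ≤ Real.sqrt ε * γ₃ := by
  obtain ⟨N, hNdef⟩ : ∃ N, N = (2 * γ ^ 2 / ν) / (ν / 2) := ⟨_, rfl⟩
  obtain ⟨c, hcdef⟩ : ∃ c, c = γ ^ 2 + (γ / ν + 1) * (2 * γ ^ 2 / ν) + (γ / ν + 1) * N := ⟨_, rfl⟩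
  obtain ⟨T, hTdef⟩ : ∃ T, T = ((2 * γ ^ 2 * (c / ν) + 4 * γ ^ 2) / ν) / (ν / 2) := ⟨_, rfl⟩
  have hN : 0 ≤ N := by rw [hNdef]; positivity
  have hc : 0 ≤ c := by rw [hcdef]; positivity
  have hT : 0 ≤ T := by rw [hTdef]; positivity
  have hcν : 0 ≤ c / ν := by positivity
  have hL : 0 ≤ γ ^ 2 + (γ / ν) * c := by positivity
  refine ⟨1 + (N + c / ν + (γ ^ 2 + (γ / ν) * c) + T), ?_⟩
  intro ε A C μ hε _ hcoef hμ
  obtain ⟨cA, cC, A0, per, sper, H1, H2⟩ := hcoef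
  have hA : Sm (unc A) := ⟨cA, per_of (fun t τ θ x => (per t τ θ x).2.1) (fun t τ θ => (sper t τ θ).1)⟩
  have pC : Per iot (unc C) :=
    per_of (fun t τ θ x => (per t τ θ x).2.2.2) (fun t τ θ => (sper t τ θ).2)
  have h1 : Sm (fun z => (unc C z).1) := ⟨cC.fst, fun z n => by simp only [pC z n]⟩
  have h2 : Sm (fun z => (unc C z).2) := ⟨cC.snd, fun z n => by simp only [pC z n]⟩
  have ha : Sm (fun z => unc A z + ν) := hA.add (Sm.const ν)
  have haν : ∀ z, ν ≤ unc A z + ν := fun z => by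
    have : 0 ≤ unc A z := A0 _ _ _ _
    linarith
  have pda : ∀ v z, pd v (fun z => unc A z + ν) z = pd v (unc A) z := by
    intro v z
    rw [pd_add' hA (Sm.const ν), pd_const', add_zero]
  obtain ⟨F, hF, he⟩ := exists_real hμ hγ hν hA h1 h2 (fun z => A0 _ _ _ _)
    (fun z => (le_abs_self _).trans (H1 _ _ _ _).1)
  let S : ℝ → ℝ → ℝ → (ℝ × ℝ) → ℝ := fun t τ θ x => F (t, τ, θ, x)
  have hSF : unc S = F := rfl
  refine ⟨S, (sol_iff hA h1 h2 S).2 ⟨hF, he⟩, ?_, ?_⟩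
  · -- uniqueness
    intro S' hS'
    obtain ⟨hF', he'⟩ := (sol_iff hA h1 h2 S').1 hS'
    have hR : Sm (fun z => unc S' z - F z) := hF'.sub hF
    have heR : Eqn μ (fun z => unc A z + ν) (fun z => unc S' z - F z) (fun _ => 0) (fun _ => 0) := by
      intro z
      have k := he' z
      have k' := he z
      have fl : ∀ (v : ZZ) (D : ZZ → ℝ), Sm D →
          pd v (fun z => (unc A z + ν) * pd v (fun z => unc S' z - F z) z + 0) z
          = pd v (fun z => (unc A z + ν) * pd v (unc S') z + D z) z
            - pd v (fun z => (unc A z + ν) * pd v F z + D z) z := by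
        intro v D hD
        rw [← pd_sub' ((ha.mul (hF'.pd v)).add hD) ((ha.mul (hF.pd v)).add hD)]
        congr 1
        funext z
        rw [pd_sub' hF' hF]
        ring
      rw [fl d1 _ h1, fl d2 _ h2, pd_sub' hF' hF]
      linarith
    have hz := eq_zero_of_Nn hR (fun t τ θ => by
      have := energy (t := t) (τ := τ) (B := 0) hμ hν ha hR (Sm.const 0) (Sm.const 0) heR haν
        (fun θ => by
          have : (fun _ : ZZ => (0:ℝ) ^ 2 + 0 ^ 2) = fun _ => 0 := by
            funext
            norm_num
          rw [this, J_const]) θ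
      simpa using this)
    funext t τ θ x
    have := hz (t, τ, θ, x)
    exact sub_eq_zero.1 this
  · intro t τ
    have haθ : ∀ z, pd dθ (fun z => unc A z + ν) z ≤ γ := by
      rintro ⟨t, τ, θ, x⟩
      rw [pda]
      have := (H1 t τ θ x).2.2.2.2.1
      have e : deriv (fun σ => A t τ σ x) θ = pd dθ (unc A) (t, τ, θ, x) :=
        (hasDerivAt_line hA.1 (line_θ t τ x θ)).deriv
      rw [e] at this
      exact (le_abs_self _).trans this
    have hD : ∀ z, (unc C z).1 ^ 2 + (unc C z).2 ^ 2 ≤ 2 * γ ^ 2 := by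
      intro z
      have h := (H1 z.1 z.2.1 z.2.2.1 z.2.2.2).2.1
      have e1 := (norm_fst_le (unc C z)).trans h
      have e2 := (norm_snd_le (unc C z)).trans h
      rw [Real.norm_eq_abs] at e1 e2
      have f1 := sq_le_sq' (by linarith [neg_abs_le (unc C z).1]) ((le_abs_self _).trans e1)
      have f2 := sq_le_sq' (by linarith [neg_abs_le (unc C z).2]) ((le_abs_self _).trans e2)
      linarith
    have hdiv : ∀ z, (pd d1 (fun z => (unc C z).1) z + pd d2 (fun z => (unc C z).2) z) ^ 2
        ≤ γ ^ 2 := by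
      rintro ⟨t, τ, θ, x⟩
      have h := (H1 t τ θ x).2.2.2.2.2.2.2.1
      rw [div2_eq h1.1 h2.1 t τ θ (C t τ θ) (fun y => rfl) x] at h
      exact sq_le_sq' (by linarith [neg_abs_le (pd d1 (fun z => (unc C z).1) (t, τ, θ, x)
        + pd d2 (fun z => (unc C z).2) (t, τ, θ, x))]) ((le_abs_self _).trans h)
    obtain ⟨eN, eG, eθ⟩ := grad_est (t := t) (τ := τ) hμ hν hγ ha hF h1 h2 he haν haθ hD hdiv
    rw [← hNdef, ← hcdef] at eG eθ
    rw [← hNdef] at eN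
    have hsq : ∀ {u b : ℝ}, |u| ≤ b → u ^ 2 ≤ b ^ 2 := fun {u b} h =>
      sq_le_sq' (by linarith [neg_abs_le u]) ((le_abs_self _).trans h)
    have eT : ∀ θ, Nn t τ (pd dT F) θ ≤ 1 * T := by
      rw [hTdef]
      refine deriv_est hμ hν ha hF h1 h2 he haν dT ?_ ?_ ?_ zero_le_one eG
      · rintro ⟨t, τ, θ, x⟩
        rw [pda, one_mul]
        have := (H1 t τ θ x).2.2.1
        have e : deriv (fun s => A s τ θ x) t = pd dT (unc A) (t, τ, θ, x) :=
          (hasDerivAt_line hA.1 (line_T τ θ x t)).deriv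
        rw [e] at this
        exact hsq this
      · rintro ⟨t, τ, θ, x⟩
        rw [one_mul]
        exact (vec_deriv h1.1 h2.1 (line_T τ θ x t) hγ (H1 t τ θ x).2.2.2.1).1
      · rintro ⟨t, τ, θ, x⟩
        rw [one_mul]
        exact (vec_deriv h1.1 h2.1 (line_T τ θ x t) hγ (H1 t τ θ x).2.2.2.1).2
    have hεγ : (Real.sqrt ε * γ) ^ 2 = ε * γ ^ 2 := by
      rw [mul_pow, Real.sq_sqrt hε.le]
    have hεγ0 : 0 ≤ Real.sqrt ε * γ := by positivity
    have eU : ∀ θ, Nn t τ (pd dU F) θ ≤ ε * T := by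
      rw [hTdef]
      refine deriv_est hμ hν ha hF h1 h2 he haν dU ?_ ?_ ?_ hε.le eG
      · rintro ⟨t, τ, θ, x⟩
        rw [pda, ← hεγ]
        have := (H2 t τ θ x).1
        have e : deriv (fun s => A t s θ x) τ = pd dU (unc A) (t, τ, θ, x) :=
          (hasDerivAt_line hA.1 (line_U t θ x τ)).deriv
        rw [e] at this
        exact hsq this
      · rintro ⟨t, τ, θ, x⟩
        rw [← hεγ]
        exact (vec_deriv h1.1 h2.1 (line_U t θ x τ) hεγ0 (H2 t τ θ x).2.1).1
      · rintro ⟨t, τ, θ, x⟩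
        rw [← hεγ]
        exact (vec_deriv h1.1 h2.1 (line_U t θ x τ) hεγ0 (H2 t τ θ x).2.1).2
    refine ⟨?_, ?_, ?_, ?_, ?_, ?_⟩
    · exact fun θ => mean_zero (t := t) (τ := τ) hμ ha hF h1 h2 he θ
    · have e1 : (fun θ x => deriv (fun σ => S t τ σ x) θ) = fun θ x => pd dθ F (t, τ, θ, x) := by
        funext θ x
        exact (hasDerivAt_line hF.1 (line_θ t τ x θ)).deriv
      rw [e1, L2sharpNorm, integral_Icc_eq_integral_Ioc,
        ← intervalIntegral.integral_of_le zero_le_one]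
      exact (rpow_half_le eθ hL).trans (by linarith)
    · refine Linf_le (B := c / ν) (fun θ => ?_) hcν (by linarith)
      refine le_trans ?_ (eG θ)
      refine integral_mono_of_nonneg (Eventually.of_forall fun x => sq_nonneg _)
        (intOn ((Gsm hF).sl t τ θ)) (Eventually.of_forall fun x => ?_)
      have e1 : grad (S t τ θ) x = (pd d1 F (t, τ, θ, x), pd d2 F (t, τ, θ, x)) :=
        grad_eq (S := S) hF.1 t τ θ x
      simp only [e1, Prod.norm_def, Real.norm_eq_abs]
      rcases max_choice |pd d1 F (t, τ, θ, x)| |pd d2 F (t, τ, θ, x)| with h | h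
      · rw [h, sq_abs]
        linarith [sq_nonneg (pd d2 F (t, τ, θ, x))]
      · rw [h, sq_abs]
        linarith [sq_nonneg (pd d1 F (t, τ, θ, x))]
    · exact Linf_le (B := N) eN hN (by linarith)
    · have e1 : (fun θ x => deriv (fun s => S s τ θ x) t) = fun θ x => pd dT F (t, τ, θ, x) := by
        funext θ x
        exact (hasDerivAt_line hF.1 (line_T τ θ x t)).deriv
      rw [e1]
      refine Linf_le (B := T) (fun θ => ?_) hT (by linarith)
      have := eT θ
      rw [one_mul] at this
      exact this
    · have e1 : (fun θ x => deriv (fun s => S t s θ x) τ) = fun θ x => pd dU F (t, τ, θ, x) := by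
        funext θ x
        exact (hasDerivAt_line hF.1 (line_U t θ x τ)).deriv
      rw [e1]
      exact Linf_le_eps (B := T) hε.le (fun θ => eU θ) hT (by linarith)

end CellProof

/-- Theorem 3.5: under (H1), (H2) and the periodicity of `Ã_ε` and `C̃_ε` in `τ`
and `θ`, for any `μ > 0` and `ν > 0` there exists a unique `θ`-periodic solution
`S_μ^ν(t,τ,θ,x)` of `μS + ∂S/∂θ − ∇·((Ã_ε+ν)∇S) = ∇·C̃_ε`, regular in the
parameters `t` and `τ`, and there is a constant `γ₃` depending only on `γ` and
`ν` such that `∫_{𝕋²} S_μ^ν dx = 0`, `‖∂S_μ^ν/∂θ‖_{L²_#} ≤ γ₃`,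
`‖∇S_μ^ν‖_{L^∞_#L²} ≤ γ₃`, `‖S_μ^ν‖_{L^∞_#L²} ≤ γ₃`,
`‖∂S_μ^ν/∂t‖_{L^∞_#L²} ≤ γ₃` and `‖∂S_μ^ν/∂τ‖_{L^∞_#L²} ≤ √ε γ₃`. -/
theorem regularized_cell_problem_wellposedness :
    ∀ γ ν : ℝ, 0 ≤ γ → 0 < ν → ∃ γ₃ : ℝ,
      ∀ (ε : ℝ) (A : ℝ → ℝ → ℝ → (ℝ × ℝ) → ℝ) (C : ℝ → ℝ → ℝ → (ℝ × ℝ) → ℝ × ℝ)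
        (μ : ℝ),
        0 < ε → ε ≤ 1 → CoeffBasic γ ε A C → 0 < μ →
        ∃ S : ℝ → ℝ → ℝ → (ℝ × ℝ) → ℝ,
          IsRegCellSolP A C μ ν S ∧
          (∀ S', IsRegCellSolP A C μ ν S' → S' = S) ∧
          ∀ t τ : ℝ,
            (∀ θ : ℝ, ∫ x in Tsq, S t τ θ x = 0) ∧
            L2sharpNorm (fun θ x => deriv (fun σ => S t τ σ x) θ) ≤ γ₃ ∧
            LinfL2Norm (fun θ x => ‖grad (S t τ θ) x‖) ≤ γ₃ ∧
            LinfL2Norm (S t τ) ≤ γ₃ ∧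
            LinfL2Norm (fun θ x => deriv (fun s => S s τ θ x) t) ≤ γ₃ ∧
            LinfL2Norm (fun θ x => deriv (fun s => S t s θ x) τ) ≤ Real.sqrt ε * γ₃ := by
  intro γ ν hγ hν
  exact CellProof.main_thm γ ν hγ hν
end
end

section
/- For any μ > 0, ν > 0 and ε > 0, the θ-periodic solution S_μ^ν of the regularized cell problem satisfies ‖∇S_μ^ν‖_{L²_#(ℝ×𝕋²)} ≤ γ/ν and ‖∂S_μ^ν/∂θ‖_{L²_#(ℝ×𝕋²)} ≤ γ₃, where γ₃ depends only on γ and ν. -/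
open MeasureTheory Filter

noncomputable section

/-- The coefficients of the cell problem: a nonnegative regular scalar `Ã_ε(θ,x)`
and a regular vector field `C̃_ε(θ,x)`, both 1-periodic in `θ` and in space. -/
def CellCoeff (A : ℝ → (ℝ × ℝ) → ℝ) (C : ℝ → (ℝ × ℝ) → ℝ × ℝ) : Prop :=
  ContDiff ℝ (⊤ : ℕ∞) (fun p : ℝ × (ℝ × ℝ) => A p.1 p.2) ∧
  ContDiff ℝ (⊤ : ℕ∞) (fun p : ℝ × (ℝ × ℝ) => C p.1 p.2) ∧
  (∀ θ x, 0 ≤ A θ x) ∧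
  (∀ θ x, A (θ + 1) x = A θ x) ∧ (∀ θ x, C (θ + 1) x = C θ x) ∧
  (∀ θ, SpacePeriodic (A θ)) ∧ (∀ θ, SpacePeriodic (C θ))

/-- `S` is a classical solution, 1-periodic in `θ`, of the regularized cell problem
`μ S + ∂S/∂θ − ∇·((Ã_ε + ν)∇S) = ∇·C̃_ε` on `ℝ × 𝕋²`. -/
def IsRegCellSol (A : ℝ → (ℝ × ℝ) → ℝ) (C : ℝ → (ℝ × ℝ) → ℝ × ℝ)
    (μ ν : ℝ) (S : ℝ → (ℝ × ℝ) → ℝ) : Prop :=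
  ContDiff ℝ (⊤ : ℕ∞) (fun p : ℝ × (ℝ × ℝ) => S p.1 p.2) ∧
  (∀ θ x, S (θ + 1) x = S θ x) ∧
  (∀ θ, SpacePeriodic (S θ)) ∧
  (∀ θ x, μ * S θ x + deriv (fun σ => S σ x) θ
      - div2 (fun y => (A θ y + ν) • grad (S θ) y) x = div2 (C θ) x)

/-- Lebesgue measure on the unit interval. -/
def lam : Measure ℝ := volume.restrict (Set.Icc (0:ℝ) 1)

/-- Lebesgue measure on the unit square. -/
def mtwo : Measure (ℝ × ℝ) := lam.prod lam

/-- Lebesgue measure on the unit cube. -/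
def mthree : Measure (ℝ × (ℝ × ℝ)) := lam.prod mtwo

instance lam_prob : IsProbabilityMeasure lam := ⟨by simp [lam]⟩

instance mtwo_prob : IsProbabilityMeasure mtwo := by unfold mtwo; infer_instance

instance mthree_prob : IsProbabilityMeasure mthree := by unfold mthree; infer_instance

lemma mtwo_eq : mtwo = volume.restrict Tsq := by
  unfold mtwo lam Tsq
  rw [Measure.prod_restrict]; rfl

lemma mthree_eq : mthree = volume.restrict (Set.Icc (0:ℝ) 1 ×ˢ Tsq) := by
  unfold mthree
  rw [mtwo_eq]; unfold lam
  rw [Measure.prod_restrict]; rfl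

lemma isCompact_Tsq : IsCompact Tsq := isCompact_Icc.prod isCompact_Icc

lemma int_lam {f : ℝ → ℝ} (hf : Continuous f) : Integrable f lam :=
  hf.continuousOn.integrableOn_compact isCompact_Icc

lemma int_mtwo {f : ℝ × ℝ → ℝ} (hf : Continuous f) : Integrable f mtwo := by
  rw [mtwo_eq]
  exact hf.continuousOn.integrableOn_compact isCompact_Tsq

lemma int_mthree {f : ℝ × (ℝ × ℝ) → ℝ} (hf : Continuous f) : Integrable f mthree := by
  rw [mthree_eq]
  exact hf.continuousOn.integrableOn_compact (isCompact_Icc.prod isCompact_Tsq)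

lemma lam_eq_interval (f : ℝ → ℝ) : ∫ x, f x ∂lam = ∫ x in (0:ℝ)..1, f x := by
  unfold lam
  rw [intervalIntegral.integral_of_le zero_le_one, integral_Icc_eq_integral_Ioc]

lemma lam_deriv_zero {f f' : ℝ → ℝ} (h : ∀ x, HasDerivAt f (f' x) x) (hc : Continuous f')
    (hp : f 1 = f 0) : ∫ x, f' x ∂lam = 0 := by
  rw [lam_eq_interval, intervalIntegral.integral_eq_sub_of_hasDerivAt (fun x _ => h x)
    (hc.intervalIntegrable _ _), hp, sub_self]

lemma osc_one_aux {f f' : ℝ → ℝ} (h : ∀ x, HasDerivAt f (f' x) x) (hc : Continuous f')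
    (hp : f 1 = f 0) {x y : ℝ} (hx : 0 ≤ x) (hxy : x ≤ y) (hy : y ≤ 1) :
    |f x - f y| ≤ (1/2) * ∫ t, |f' t| ∂lam := by
  have key : ∀ a b : ℝ, a ≤ b → |f b - f a| ≤ ∫ t in a..b, |f' t| := by
    intro a b hab
    rw [← intervalIntegral.integral_eq_sub_of_hasDerivAt (fun x _ => h x)
      (hc.intervalIntegrable a b)]
    exact intervalIntegral.abs_integral_le_integral_abs hab
  have h1 := key 0 x hx
  have h2 := key x y hxy
  have h3 := key y 1 hy
  have hi : ∀ a b : ℝ, IntervalIntegrable (fun t => |f' t|) volume a b :=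
    fun a b => hc.abs.intervalIntegrable a b
  have e : ∫ t, |f' t| ∂lam = (∫ t in (0:ℝ)..x, |f' t|) + (∫ t in x..y, |f' t|)
      + ∫ t in y..1, |f' t| := by
    rw [lam_eq_interval, intervalIntegral.integral_add_adjacent_intervals (hi _ _) (hi _ _),
      intervalIntegral.integral_add_adjacent_intervals (hi _ _) (hi _ _)]
  have h4 : |f x - f y| ≤ |f x - f 0| + |f 1 - f y| := by
    have : f x - f y = (f x - f 0) + (f 1 - f y) := by rw [hp]; ring
    rw [this]; exact abs_add_le _ _
  have h5 : |f x - f y| = |f y - f x| := abs_sub_comm _ _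
  rw [e]; linarith

lemma osc_one {f f' : ℝ → ℝ} (h : ∀ x, HasDerivAt f (f' x) x) (hc : Continuous f')
    (hp : f 1 = f 0) {x y : ℝ} (hx : x ∈ Set.Icc (0:ℝ) 1) (hy : y ∈ Set.Icc (0:ℝ) 1) :
    |f x - f y| ≤ (1/2) * ∫ t, |f' t| ∂lam := by
  rcases le_total x y with hxy | hxy
  · exact osc_one_aux h hc hp hx.1 hxy hy.2
  · rw [abs_sub_comm]; exact osc_one_aux h hc hp hy.1 hxy hx.2

lemma ae_lam : ∀ᵐ x ∂lam, x ∈ Set.Icc (0:ℝ) 1 := ae_restrict_mem measurableSet_Icc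

lemma ae_mtwo : ∀ᵐ x ∂mtwo, x ∈ Tsq := by
  rw [mtwo_eq]; exact ae_restrict_mem isCompact_Tsq.measurableSet

/-- A two-dimensional `L¹` Poincaré-type inequality tested against a mean-zero function. -/
lemma poincare_two {s s1 s2 g : ℝ × ℝ → ℝ} {γ : ℝ} (hγ : 0 ≤ γ)
    (hs : Continuous s) (hg : Continuous g) (hs1 : Continuous s1) (hs2 : Continuous s2)
    (h1 : ∀ x y, HasDerivAt (fun t => s (t, y)) (s1 (x, y)) x)
    (h2 : ∀ x y, HasDerivAt (fun t => s (x, t)) (s2 (x, y)) y)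
    (p1 : ∀ y, s (1, y) = s (0, y)) (p2 : ∀ x, s (x, 1) = s (x, 0))
    (hgb : ∀ x, |g x| ≤ γ) (hg0 : ∫ x, g x ∂mtwo = 0) :
    ∫ x, g x * s x ∂mtwo ≤ γ / 2 * ((∫ x, |s1 x| ∂mtwo) + ∫ x, |s2 x| ∂mtwo) := by
  have ca : Continuous fun y => ∫ t, |s1 (t, y)| ∂lam := by
    simp_rw [lam_eq_interval]
    apply intervalIntegral.continuous_parametric_intervalIntegral_of_continuous'
    exact (hs1.comp continuous_swap).abs
  have e1 : ∫ x, |s1 x| ∂mtwo = ∫ y, ∫ t, |s1 (t, y)| ∂lam ∂lam :=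
    integral_prod_symm _ (int_mtwo hs1.abs)
  have e2 : ∫ x, |s2 x| ∂mtwo = ∫ y, ∫ t, |s2 (y, t)| ∂lam ∂lam :=
    integral_prod _ (int_mtwo hs2.abs)
  have cb : Continuous fun x => ∫ t, |s2 (x, t)| ∂lam := by
    simp_rw [lam_eq_interval]
    apply intervalIntegral.continuous_parametric_intervalIntegral_of_continuous'
    exact hs2.abs
  have main : ∀ x' ∈ Set.Icc (0:ℝ) 1, ∫ x, g x * s x ∂mtwo ≤
      γ / 2 * ((∫ x, |s1 x| ∂mtwo) + ∫ t, |s2 (x', t)| ∂lam) := by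
    intro x' hx'
    have e : ∫ x, g x * s x ∂mtwo = ∫ x, g x * (s x - s (x', 0)) ∂mtwo := by
      simp_rw [mul_sub]
      have i1 : Integrable (fun x => g x * s x) mtwo := int_mtwo (hg.mul hs)
      rw [integral_sub i1 ((int_mtwo hg).mul_const _), integral_mul_const, hg0]; simp
    have e3 : ∫ x : ℝ × ℝ, (∫ t, |s1 (t, x.2)| ∂lam) ∂mtwo = ∫ x, |s1 x| ∂mtwo := by
      rw [e1]
      have := integral_prod (μ := lam) (ν := lam)
        (fun x : ℝ × ℝ => ∫ t, |s1 (t, x.2)| ∂lam) (int_mtwo (ca.comp continuous_snd))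
      rw [mtwo, this]; simp
    have e4 : γ / 2 * ((∫ x, |s1 x| ∂mtwo) + ∫ t, |s2 (x', t)| ∂lam) =
        ∫ x : ℝ × ℝ, γ / 2 * ((∫ t, |s1 (t, x.2)| ∂lam) + ∫ t, |s2 (x', t)| ∂lam) ∂mtwo := by
      have i1 : Integrable (fun x : ℝ × ℝ => ∫ t, |s1 (t, x.2)| ∂lam) mtwo :=
        int_mtwo (ca.comp continuous_snd)
      rw [integral_const_mul, integral_add i1 (integrable_const _), e3]; simp
    rw [e, e4]
    refine integral_mono_ae (int_mtwo (by fun_prop)) (int_mtwo ?_) ?_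
    · exact continuous_const.mul ((ca.comp continuous_snd).add continuous_const)
    filter_upwards [ae_mtwo] with p hp
    obtain ⟨hpx, hpy⟩ := hp
    have b1 := osc_one (fun x => h1 x p.2) (hs1.comp (by fun_prop : Continuous fun t : ℝ => (t, p.2)))
      (p1 p.2) hpx hx'
    have b2 := osc_one (fun y => h2 x' y) (hs2.comp (by fun_prop : Continuous fun t : ℝ => (x', t)))
      (p2 x') hpy (Set.left_mem_Icc.2 zero_le_one)
    have b3 : |s p - s (x', 0)| ≤ |s (p.1, p.2) - s (x', p.2)| + |s (x', p.2) - s (x', 0)| :=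
      abs_sub_le _ _ _
    calc g p * (s p - s (x', 0)) ≤ |g p| * |s p - s (x', 0)| := by
          rw [← abs_mul]; exact le_abs_self _
      _ ≤ γ * ((1/2) * ((∫ t, |s1 (t, p.2)| ∂lam) + ∫ t, |s2 (x', t)| ∂lam)) := by
          apply mul_le_mul (hgb p) _ (abs_nonneg _) hγ
          linarith
      _ = _ := by ring
  have := integral_mono_ae (μ := lam) (f := fun _ => ∫ x, g x * s x ∂mtwo)
    (g := fun x' => γ / 2 * ((∫ x, |s1 x| ∂mtwo) + ∫ t, |s2 (x', t)| ∂lam))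
    (integrable_const _) (int_lam (by fun_prop)) (by
      filter_upwards [ae_lam] with x hx using main x hx)
  rw [integral_const_mul, integral_add (integrable_const _) (int_lam cb), ← e2] at this
  simpa using this

/-- Directional derivative. -/
def Dv (v : ℝ × (ℝ × ℝ)) (F : ℝ × (ℝ × ℝ) → ℝ) (p : ℝ × (ℝ × ℝ)) : ℝ := fderiv ℝ F p v

/-- Smoothness and periodicity in all three variables. -/
def SP (F : ℝ × (ℝ × ℝ) → ℝ) : Prop :=
  ContDiff ℝ (⊤ : ℕ∞) F ∧ (∀ p, F (p + (1, (0, 0))) = F p) ∧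
    (∀ p, F (p + (0, (1, 0))) = F p) ∧ (∀ p, F (p + (0, (0, 1))) = F p)

lemma SP.cont {F : ℝ × (ℝ × ℝ) → ℝ} (h : SP F) : Continuous F := h.1.continuous

lemma SP.diff {F : ℝ × (ℝ × ℝ) → ℝ} (h : SP F) : Differentiable ℝ F :=
  h.1.differentiable (by simp)

lemma SP.dv {F : ℝ × (ℝ × ℝ) → ℝ} (h : SP F) (v : ℝ × (ℝ × ℝ)) : SP (Dv v F) := by
  have key : ∀ a, (∀ p, F (p + a) = F p) → ∀ p, Dv v F (p + a) = Dv v F p := by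
    intro a ha p
    unfold Dv
    rw [← fderiv_comp_add_right]
    simp_rw [ha]
  refine ⟨?_, key _ h.2.1, key _ h.2.2.1, key _ h.2.2.2⟩
  have : ContDiff ℝ (⊤ : ℕ∞) (fderiv ℝ F) := h.1.fderiv_right (by simp)
  exact this.clm_apply contDiff_const

lemma SP.mul {F G : ℝ × (ℝ × ℝ) → ℝ} (h : SP F) (h' : SP G) : SP (fun p => F p * G p) := by
  refine ⟨h.1.mul h'.1, fun p => ?_, fun p => ?_, fun p => ?_⟩
  · simp only [h.2.1, h'.2.1]
  · simp only [h.2.2.1, h'.2.2.1]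
  · simp only [h.2.2.2, h'.2.2.2]

lemma SP.add_const {F : ℝ × (ℝ × ℝ) → ℝ} (h : SP F) (c : ℝ) : SP (fun p => F p + c) := by
  refine ⟨h.1.add contDiff_const, fun p => ?_, fun p => ?_, fun p => ?_⟩
  · simp only [h.2.1]
  · simp only [h.2.2.1]
  · simp only [h.2.2.2]

lemma Dv_mul {F G : ℝ × (ℝ × ℝ) → ℝ} (h : SP F) (h' : SP G) (v p : ℝ × (ℝ × ℝ)) :
    Dv v (fun p => F p * G p) p = F p * Dv v G p + G p * Dv v F p := by
  unfold Dv
  rw [fderiv_fun_mul (h.diff p) (h'.diff p)]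
  simp

lemma Dv_add_const {F : ℝ × (ℝ × ℝ) → ℝ} (c : ℝ) (v p : ℝ × (ℝ × ℝ)) :
    Dv v (fun p => F p + c) p = Dv v F p := by
  unfold Dv
  rw [fderiv_add_const]

lemma Dv_comm {F : ℝ × (ℝ × ℝ) → ℝ} (h : SP F) (v w p : ℝ × (ℝ × ℝ)) :
    Dv v (Dv w F) p = Dv w (Dv v F) p := by
  have hs : IsSymmSndFDerivAt ℝ F p :=
    h.1.contDiffAt.isSymmSndFDerivAt (by
      simp only [minSmoothness_of_isRCLikeNormedField]
      exact WithTop.coe_le_coe.2 (le_top : (2 : ℕ∞) ≤ ⊤))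
  have hd : Differentiable ℝ (fderiv ℝ F) :=
    (h.1.fderiv_right (m := (⊤ : ℕ∞)) (by simp)).differentiable (by simp)
  have key : ∀ a b, Dv a (Dv b F) p = fderiv ℝ (fderiv ℝ F) p a b := by
    intro a b
    unfold Dv
    rw [fderiv_clm_apply (hd p) (differentiableAt_const b)]
    simp
  rw [key, key, hs.eq]

lemma hasDerivAt_line {F : ℝ × (ℝ × ℝ) → ℝ} (h : SP F) {c : ℝ → ℝ × (ℝ × ℝ)}
    {v : ℝ × (ℝ × ℝ)} {t : ℝ} (hc : HasDerivAt c v t) :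
    HasDerivAt (fun t => F (c t)) (Dv v F (c t)) t :=
  ((h.diff (c t)).hasFDerivAt).comp_hasDerivAt t hc

lemma line0 {F : ℝ × (ℝ × ℝ) → ℝ} (h : SP F) (θ : ℝ) (x : ℝ × ℝ) :
    HasDerivAt (fun t => F (t, x)) (Dv (1, (0, 0)) F (θ, x)) θ :=
  hasDerivAt_line h (c := fun t => (t, x)) ((hasDerivAt_id θ).prodMk (hasDerivAt_const θ x))

lemma line1 {F : ℝ × (ℝ × ℝ) → ℝ} (h : SP F) (θ x y : ℝ) :
    HasDerivAt (fun t => F (θ, (t, y))) (Dv (0, (1, 0)) F (θ, (x, y))) x :=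
  hasDerivAt_line h (c := fun t => (θ, (t, y)))
    ((hasDerivAt_const x θ).prodMk ((hasDerivAt_id x).prodMk (hasDerivAt_const x y)))

lemma line2 {F : ℝ × (ℝ × ℝ) → ℝ} (h : SP F) (θ x y : ℝ) :
    HasDerivAt (fun t => F (θ, (x, t))) (Dv (0, (0, 1)) F (θ, (x, y))) y :=
  hasDerivAt_line h (c := fun t => (θ, (x, t)))
    ((hasDerivAt_const y θ).prodMk ((hasDerivAt_const y x).prodMk (hasDerivAt_id y)))

lemma per1 {F : ℝ × (ℝ × ℝ) → ℝ} (h : SP F) (θ y : ℝ) : F (θ, (1, y)) = F (θ, (0, y)) := by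
  have := h.2.2.1 (θ, (0, y)); simpa using this

lemma per2 {F : ℝ × (ℝ × ℝ) → ℝ} (h : SP F) (θ x : ℝ) : F (θ, (x, 1)) = F (θ, (x, 0)) := by
  have := h.2.2.2 (θ, (x, 0)); simpa using this

lemma per0 {F : ℝ × (ℝ × ℝ) → ℝ} (h : SP F) (x : ℝ × ℝ) : F (1, x) = F (0, x) := by
  have := h.2.1 (0, x)
  simpa [← Prod.zero_eq_mk] using this

lemma mtwo_D1 {F : ℝ × (ℝ × ℝ) → ℝ} (h : SP F) (θ : ℝ) :
    ∫ x, Dv (0, (1, 0)) F (θ, x) ∂mtwo = 0 := by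
  have c := (h.dv (0, (1, 0))).cont
  have e := integral_prod_symm (μ := lam) (ν := lam) (fun x => Dv (0, (1, 0)) F (θ, x))
    (int_mtwo (by fun_prop))
  rw [mtwo, e]
  have : ∀ y, ∫ x, Dv (0, (1, 0)) F (θ, (x, y)) ∂lam = 0 := fun y =>
    lam_deriv_zero (f := fun t => F (θ, (t, y))) (fun x => line1 h θ x y) (by fun_prop) (per1 h θ y)
  simp [this]

lemma mtwo_D2 {F : ℝ × (ℝ × ℝ) → ℝ} (h : SP F) (θ : ℝ) :
    ∫ x, Dv (0, (0, 1)) F (θ, x) ∂mtwo = 0 := by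
  have c := (h.dv (0, (0, 1))).cont
  have e := integral_prod (μ := lam) (ν := lam) (fun x => Dv (0, (0, 1)) F (θ, x))
    (int_mtwo (by fun_prop))
  rw [mtwo, e]
  have : ∀ x, ∫ y, Dv (0, (0, 1)) F (θ, (x, y)) ∂lam = 0 := fun x =>
    lam_deriv_zero (f := fun t => F (θ, (x, t))) (fun y => line2 h θ x y) (by fun_prop) (per2 h θ x)
  simp [this]

lemma mthree_prod {F : ℝ × (ℝ × ℝ) → ℝ} (h : Continuous F) :
    ∫ p, F p ∂mthree = ∫ θ, ∫ x, F (θ, x) ∂mtwo ∂lam :=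
  integral_prod (μ := lam) (ν := mtwo) F (int_mthree h)

lemma mthree_D0 {F : ℝ × (ℝ × ℝ) → ℝ} (h : SP F) :
    ∫ p, Dv (1, (0, 0)) F p ∂mthree = 0 := by
  have c := (h.dv (1, (0, 0))).cont
  have e := integral_prod_symm (μ := lam) (ν := mtwo) (Dv (1, (0, 0)) F) (int_mthree c)
  rw [mthree, e]
  have : ∀ x, ∫ θ, Dv (1, (0, 0)) F (θ, x) ∂lam = 0 := fun x =>
    lam_deriv_zero (f := fun t => F (t, x)) (fun θ => line0 h θ x) (by fun_prop) (per0 h x)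
  simp [this]

lemma mthree_D1 {F : ℝ × (ℝ × ℝ) → ℝ} (h : SP F) :
    ∫ p, Dv (0, (1, 0)) F p ∂mthree = 0 := by
  rw [mthree_prod (h.dv _).cont]; simp [mtwo_D1 h]

lemma mthree_D2 {F : ℝ × (ℝ × ℝ) → ℝ} (h : SP F) :
    ∫ p, Dv (0, (0, 1)) F p ∂mthree = 0 := by
  rw [mthree_prod (h.dv _).cont]; simp [mtwo_D2 h]

lemma poincare_three {S c1 c2 : ℝ × (ℝ × ℝ) → ℝ} {γ : ℝ} (hγ : 0 ≤ γ)
    (hS : SP S) (h1 : SP c1) (h2 : SP c2)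
    (hb : ∀ p, |Dv (0, (1, 0)) c1 p + Dv (0, (0, 1)) c2 p| ≤ γ) :
    ∫ p, (Dv (0, (1, 0)) c1 p + Dv (0, (0, 1)) c2 p) * S p ∂mthree ≤
      ∫ p, γ / 2 * (|Dv (0, (1, 0)) S p| + |Dv (0, (0, 1)) S p|) ∂mthree := by
  have k := hS.cont
  have k1 := (h1.dv (0, (1, 0))).cont
  have k2 := (h2.dv (0, (0, 1))).cont
  have l1 := (hS.dv (0, (1, 0))).cont
  have l2 := (hS.dv (0, (0, 1))).cont
  have i1 := int_mthree (f := fun p => (Dv (0, (1, 0)) c1 p + Dv (0, (0, 1)) c2 p) * S p)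
    (by fun_prop)
  have i2 := int_mthree (f := fun p => γ / 2 * (|Dv (0, (1, 0)) S p| + |Dv (0, (0, 1)) S p|))
    (by fun_prop)
  rw [mthree_prod (by fun_prop), mthree_prod (by fun_prop)]
  refine integral_mono i1.integral_prod_left i2.integral_prod_left ?_
  intro θ
  have := poincare_two (s := fun x => S (θ, x)) (s1 := fun x => Dv (0, (1, 0)) S (θ, x))
    (s2 := fun x => Dv (0, (0, 1)) S (θ, x))
    (g := fun x => Dv (0, (1, 0)) c1 (θ, x) + Dv (0, (0, 1)) c2 (θ, x)) hγ
    (by fun_prop) (by fun_prop) (by fun_prop) (by fun_prop)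
    (fun x y => line1 hS θ x y) (fun x y => line2 hS θ x y) (per1 hS θ) (per2 hS θ)
    (fun x => hb (θ, x)) (by
      rw [integral_add (int_mtwo (by fun_prop)) (int_mtwo (by fun_prop)), mtwo_D1 h1, mtwo_D2 h2,
        add_zero])
  refine this.trans (le_of_eq ?_)
  simp only
  rw [integral_const_mul, integral_add (int_mtwo (by fun_prop)) (int_mtwo (by fun_prop))]

lemma core {a S c1 c2 : ℝ × (ℝ × ℝ) → ℝ} {γ ν μ : ℝ} (hγ : 0 ≤ γ) (hν : 0 < ν) (hμ : 0 < μ)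
    (ha : SP a) (hS : SP S) (h1 : SP c1) (h2 : SP c2) (ha0 : ∀ p, 0 ≤ a p)
    (hat : ∀ p, |Dv (1, (0, 0)) a p| ≤ γ)
    (hb : ∀ p, |Dv (0, (1, 0)) c1 p + Dv (0, (0, 1)) c2 p| ≤ γ)
    (heq : ∀ p, μ * S p + Dv (1, (0, 0)) S p
      - (Dv (0, (1, 0)) (fun q => (a q + ν) * Dv (0, (1, 0)) S q) p
        + Dv (0, (0, 1)) (fun q => (a q + ν) * Dv (0, (0, 1)) S q) p)
      = Dv (0, (1, 0)) c1 p + Dv (0, (0, 1)) c2 p) :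
    ∫ p, ((Dv (0, (1, 0)) S p) ^ 2 + (Dv (0, (0, 1)) S p) ^ 2) ∂mthree ≤ γ ^ 2 / (2 * ν ^ 2) ∧
    ∫ p, (Dv (1, (0, 0)) S p) ^ 2 ∂mthree ≤ γ ^ 3 / (2 * ν ^ 2) + γ ^ 2 := by
  have hK : SP (fun q => a q + ν) := ha.add_const ν
  have s0 := hS.dv (1, (0, 0))
  have s1 := hS.dv (0, (1, 0))
  have s2 := hS.dv (0, (0, 1))
  have f1 := hK.mul s1
  have f2 := hK.mul s2
  have k := hS.cont
  have ka := ha.cont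
  have ka0 := (ha.dv (1, (0, 0))).cont
  have k0 := s0.cont
  have k1 := s1.cont
  have k2 := s2.cont
  have g1 := (h1.dv (0, (1, 0))).cont
  have g2 := (h2.dv (0, (0, 1))).cont
  have z1 := mthree_D0 (hS.mul hS)
  have z2 := mthree_D1 (hS.mul f1)
  have z3 := mthree_D2 (hS.mul f2)
  have z4 := mthree_D1 (s0.mul f1)
  have z5 := mthree_D2 (s0.mul f2)
  have z6 := mthree_D0 (f1.mul s1)
  have z7 := mthree_D0 (f2.mul s2)
  have y1 := int_mthree ((hS.mul hS).dv (1, (0, 0))).cont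
  have y2 := int_mthree ((hS.mul f1).dv (0, (1, 0))).cont
  have y3 := int_mthree ((hS.mul f2).dv (0, (0, 1))).cont
  have y4 := int_mthree ((s0.mul f1).dv (0, (1, 0))).cont
  have y5 := int_mthree ((s0.mul f2).dv (0, (0, 1))).cont
  have y6 := int_mthree ((f1.mul s1).dv (1, (0, 0))).cont
  have y7 := int_mthree ((f2.mul s2).dv (1, (0, 0))).cont
  have P := poincare_three hγ hS h1 h2 hb
  have iP := int_mthree (f := fun p => (Dv (0, (1, 0)) c1 p + Dv (0, (0, 1)) c2 p) * S p)
    (by fun_prop)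
  have iQ := int_mthree (f := fun p => γ / 2 * (|Dv (0, (1, 0)) S p| + |Dv (0, (0, 1)) S p|))
    (by fun_prop)
  have iG := int_mthree (f := fun p => (Dv (0, (1, 0)) S p) ^ 2 + (Dv (0, (0, 1)) S p) ^ 2)
    (by fun_prop)
  have iT := int_mthree (f := fun p => (Dv (1, (0, 0)) S p) ^ 2) (by fun_prop)
  have E1 : ∫ p, ((Dv (0, (1, 0)) S p) ^ 2 + (Dv (0, (0, 1)) S p) ^ 2) ∂mthree
      ≤ γ ^ 2 / (2 * ν ^ 2) := by
    -- pointwise bound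
    have pt : ∀ p, ν * ((Dv (0, (1, 0)) S p) ^ 2 + (Dv (0, (0, 1)) S p) ^ 2) ≤
        (Dv (0, (1, 0)) c1 p + Dv (0, (0, 1)) c2 p) * S p
        + (-(1/2)) * Dv (1, (0, 0)) (fun q => S q * S q) p
        + Dv (0, (1, 0)) (fun q => S q * ((a q + ν) * Dv (0, (1, 0)) S q)) p
        + Dv (0, (0, 1)) (fun q => S q * ((a q + ν) * Dv (0, (0, 1)) S q)) p := by
      intro p
      rw [Dv_mul hS hS, Dv_mul hS f1, Dv_mul hS f2, ← heq p]
      have u1 := mul_nonneg (ha0 p) (sq_nonneg (Dv (0, (1, 0)) S p))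
      have u2 := mul_nonneg (ha0 p) (sq_nonneg (Dv (0, (0, 1)) S p))
      have u3 := mul_nonneg hμ.le (sq_nonneg (S p))
      nlinarith
    have I := integral_mono (iG.const_mul ν) (((iP.add (y1.const_mul (-(1/2)))).add y2).add y3) pt
    rw [integral_add' ((iP.add (y1.const_mul (-(1/2)))).add y2) y3,
      integral_add' (iP.add (y1.const_mul (-(1/2)))) y2, integral_add' iP (y1.const_mul (-(1/2))),
      integral_const_mul, integral_const_mul, z1, z2, z3] at I
    have pt2 : ∀ p, γ / 2 * (|Dv (0, (1, 0)) S p| + |Dv (0, (0, 1)) S p|) ≤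
        ν / 2 * ((Dv (0, (1, 0)) S p) ^ 2 + (Dv (0, (0, 1)) S p) ^ 2) + γ ^ 2 / (4 * ν) := by
      intro p
      have yo : ∀ x : ℝ, γ / 2 * |x| ≤ ν / 2 * x ^ 2 + γ ^ 2 / (8 * ν) := by
        intro x
        have e : ν / 2 * x ^ 2 + γ ^ 2 / (8 * ν) - γ / 2 * |x|
            = (2 * ν * |x| - γ) ^ 2 / (8 * ν) := by
          rw [← sq_abs x]; field_simp; ring
        have : 0 ≤ (2 * ν * |x| - γ) ^ 2 / (8 * ν) := by positivity
        linarith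
      have e : γ ^ 2 / (4 * ν) = γ ^ 2 / (8 * ν) + γ ^ 2 / (8 * ν) := by field_simp; ring
      have := yo (Dv (0, (1, 0)) S p)
      have := yo (Dv (0, (0, 1)) S p)
      rw [e]; linarith
    have J := integral_mono iQ ((iG.const_mul (ν / 2)).add (integrable_const (γ ^ 2 / (4 * ν)))) pt2
    rw [integral_add' (iG.const_mul (ν / 2)) (integrable_const (γ ^ 2 / (4 * ν))),
      integral_const_mul, integral_const_mul] at J
    rw [integral_const_mul] at P
    simp only [integral_const, probReal_univ, smul_eq_mul, one_mul] at J
    have fin : ν / 2 * ∫ p, ((Dv (0, (1, 0)) S p) ^ 2 + (Dv (0, (0, 1)) S p) ^ 2) ∂mthree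
      ≤ γ ^ 2 / (4 * ν) := by linarith
    have e : γ ^ 2 / (4 * ν) = ν / 2 * (γ ^ 2 / (2 * ν ^ 2)) := by field_simp; ring
    rw [e] at fin
    exact le_of_mul_le_mul_left fin (by positivity)
  refine ⟨E1, ?_⟩
  have pt : ∀ p, (Dv (1, (0, 0)) S p) ^ 2 ≤
      (1/2) * (Dv (1, (0, 0)) S p) ^ 2 + γ ^ 2 / 2
      + γ / 2 * ((Dv (0, (1, 0)) S p) ^ 2 + (Dv (0, (0, 1)) S p) ^ 2)
      + (-(μ/2)) * Dv (1, (0, 0)) (fun q => S q * S q) p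
      + Dv (0, (1, 0)) (fun q => Dv (1, (0, 0)) S q * ((a q + ν) * Dv (0, (1, 0)) S q)) p
      + Dv (0, (0, 1)) (fun q => Dv (1, (0, 0)) S q * ((a q + ν) * Dv (0, (0, 1)) S q)) p
      + (-(1/2)) * Dv (1, (0, 0)) (fun q => ((a q + ν) * Dv (0, (1, 0)) S q) * Dv (0, (1, 0)) S q) p
      + (-(1/2)) * Dv (1, (0, 0)) (fun q => ((a q + ν) * Dv (0, (0, 1)) S q) * Dv (0, (0, 1)) S q) p
      := by
    intro p
    rw [Dv_mul hS hS, Dv_mul s0 f1, Dv_mul s0 f2, Dv_mul f1 s1, Dv_mul f2 s2,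
      Dv_mul hK s1 (1, (0, 0)), Dv_mul hK s2 (1, (0, 0)), Dv_add_const,
      Dv_comm hS (1, (0, 0)) (0, (1, 0)), Dv_comm hS (1, (0, 0)) (0, (0, 1))]
    have q1 := heq p
    have q2 := hb p
    rw [← q1] at q2
    have q3 := hat p
    set X1 := Dv (0, (1, 0)) (fun q => (a q + ν) * Dv (0, (1, 0)) S q) p
    set X2 := Dv (0, (0, 1)) (fun q => (a q + ν) * Dv (0, (0, 1)) S q) p
    set t := Dv (1, (0, 0)) S p
    set G := μ * S p + t - (X1 + X2) with hG
    have w1 : t * G ≤ (1/2) * t ^ 2 + γ ^ 2 / 2 := by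
      have : G ^ 2 ≤ γ ^ 2 := sq_le_sq' (abs_le.1 q2).1 (abs_le.1 q2).2
      nlinarith [sq_nonneg (t - G)]
    have w2 : ∀ x : ℝ, (1/2) * (Dv (1, (0, 0)) a p * x ^ 2) ≤ γ / 2 * x ^ 2 := by
      intro x
      have := mul_le_mul_of_nonneg_right (abs_le.1 q3).2 (sq_nonneg x)
      linarith
    have w3 := w2 (Dv (0, (1, 0)) S p)
    have w4 := w2 (Dv (0, (0, 1)) S p)
    have w5 : t * G = μ * S p * t + t ^ 2 - t * X1 - t * X2 := by rw [hG]; ring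
    linarith
  have j1 := iT.const_mul (1/2)
  have j2 := j1.add (integrable_const (γ ^ 2 / 2))
  have j3 := j2.add (iG.const_mul (γ / 2))
  have j4 := j3.add (y1.const_mul (-(μ/2)))
  have j5 := j4.add y4
  have j6 := j5.add y5
  have j7 := j6.add (y6.const_mul (-(1/2)))
  have j8 := j7.add (y7.const_mul (-(1/2)))
  have I := integral_mono iT j8 pt
  rw [integral_add' j7 (y7.const_mul (-(1/2))), integral_add' j6 (y6.const_mul (-(1/2))),
    integral_add' j5 y5, integral_add' j4 y4, integral_add' j3 (y1.const_mul (-(μ/2))),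
    integral_add' j2 (iG.const_mul (γ / 2)), integral_add' j1 (integrable_const (γ ^ 2 / 2))] at I
  simp only [integral_const_mul, z1, z4, z5, z6, z7] at I
  simp only [integral_const, probReal_univ, smul_eq_mul, one_mul] at I
  have w := mul_le_mul_of_nonneg_left E1 (by positivity : 0 ≤ γ / 2)
  have e : γ ^ 3 / (2 * ν ^ 2) = 2 * (γ / 2 * (γ ^ 2 / (2 * ν ^ 2))) := by ring
  rw [e]
  linarith

lemma fderiv_slice {F : ℝ × (ℝ × ℝ) → ℝ} (h : SP F) (θ : ℝ) (x v : ℝ × ℝ) :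
    fderiv ℝ (fun y => F (θ, y)) x v = Dv (0, v) F (θ, x) := by
  have := ((h.diff (θ, x)).hasFDerivAt).comp x (hasFDerivAt_prodMk_right θ x)
  rw [show (fun y => F (θ, y)) = F ∘ (fun y => (θ, y)) from rfl, this.fderiv]
  simp [Dv]

lemma mk_SP {f : ℝ → ℝ × ℝ → ℝ} (h : ContDiff ℝ (⊤ : ℕ∞) (fun p : ℝ × (ℝ × ℝ) => f p.1 p.2))
    (h0 : ∀ θ x, f (θ + 1) x = f θ x) (h1 : ∀ θ, SpacePeriodic (f θ)) :
    SP (fun p : ℝ × (ℝ × ℝ) => f p.1 p.2) := by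
  refine ⟨h, ?_, ?_, ?_⟩
  · rintro ⟨θ, x⟩
    have := h0 θ x
    simpa [← Prod.zero_eq_mk] using this
  · rintro ⟨θ, x⟩
    have := (h1 θ x).1
    simpa using this
  · rintro ⟨θ, x⟩
    have := (h1 θ x).2
    simpa using this

lemma sharp_eq {f : ℝ → ℝ × ℝ → ℝ} (h : Continuous (fun p : ℝ × (ℝ × ℝ) => f p.1 p.2)) :
    L2sharpNorm f = (∫ p : ℝ × (ℝ × ℝ), (f p.1 p.2) ^ 2 ∂mthree) ^ (1/2 : ℝ) := by
  rw [mthree_prod (by fun_prop), mtwo_eq]; rfl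

/-- Lemma 3.8: for any `μ > 0`, `ν > 0` and `ε > 0`, the `θ`-periodic solution
`S_μ^ν` of the regularized cell problem satisfies
`‖∇S_μ^ν‖_{L²_#(ℝ×𝕋²)} ≤ γ/ν` and `‖∂S_μ^ν/∂θ‖_{L²_#(ℝ×𝕋²)} ≤ γ₃`
for a constant `γ₃` depending only on `γ` and `ν`. -/
theorem regularized_cell_solution_gradient_estimates :
    ∀ γ ν : ℝ, 0 ≤ γ → 0 < ν → ∃ γ₃ : ℝ,
      ∀ (A : ℝ → (ℝ × ℝ) → ℝ) (C : ℝ → (ℝ × ℝ) → ℝ × ℝ) (μ ε : ℝ)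
        (S : ℝ → (ℝ × ℝ) → ℝ),
        0 < μ → 0 < ε → CellCoeff A C →
        (∀ θ x, |A θ x| ≤ γ) → (∀ θ x, ‖C θ x‖ ≤ γ) →
        (∀ θ x, |deriv (fun σ => A σ x) θ| ≤ γ) →
        (∀ θ x, ‖deriv (fun σ => C σ x) θ‖ ≤ γ) →
        (∀ θ x, |div2 (C θ) x| ≤ γ) →
        IsRegCellSol A C μ ν S →
        L2sharpNorm (fun θ x => ‖grad (S θ) x‖) ≤ γ / ν ∧
        L2sharpNorm (fun θ x => deriv (fun σ => S σ x) θ) ≤ γ₃ := by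
  intro γ ν hγ hν
  refine ⟨(γ ^ 3 / (2 * ν ^ 2) + γ ^ 2) ^ (1/2 : ℝ), ?_⟩
  intro A C μ ε S hμ _ hAC _ _ hAt _ hdiv hS
  obtain ⟨hA, hC, hA0, hAp, hCp, hAs, hCs⟩ := hAC
  obtain ⟨hSc, hSp, hSs, heq⟩ := hS
  have sA := mk_SP hA hAp hAs
  have sS := mk_SP hSc hSp hSs
  have sc1 : SP (fun p : ℝ × (ℝ × ℝ) => (C p.1 p.2).1) :=
    mk_SP (f := fun θ x => (C θ x).1) hC.fst (fun θ x => by rw [hCp])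
      (fun θ x => ⟨congrArg Prod.fst (hCs θ x).1, congrArg Prod.fst (hCs θ x).2⟩)
  have sc2 : SP (fun p : ℝ × (ℝ × ℝ) => (C p.1 p.2).2) :=
    mk_SP (f := fun θ x => (C θ x).2) hC.snd (fun θ x => by rw [hCp])
      (fun θ x => ⟨congrArg Prod.snd (hCs θ x).1, congrArg Prod.snd (hCs θ x).2⟩)
  have dC : ∀ θ x, div2 (C θ) x = Dv (0, (1, 0)) (fun p : ℝ × (ℝ × ℝ) => (C p.1 p.2).1) (θ, x)
      + Dv (0, (0, 1)) (fun p : ℝ × (ℝ × ℝ) => (C p.1 p.2).2) (θ, x) := by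
    intro θ x
    rw [← fderiv_slice sc1, ← fderiv_slice sc2]; rfl
  have gS : ∀ θ x, grad (S θ) x = (Dv (0, (1, 0)) (fun p : ℝ × (ℝ × ℝ) => S p.1 p.2) (θ, x),
      Dv (0, (0, 1)) (fun p : ℝ × (ℝ × ℝ) => S p.1 p.2) (θ, x)) := by
    intro θ x
    rw [← fderiv_slice sS, ← fderiv_slice sS]; rfl
  have tS : ∀ θ x, deriv (fun σ => S σ x) θ =
      Dv (1, (0, 0)) (fun p : ℝ × (ℝ × ℝ) => S p.1 p.2) (θ, x) :=
    fun θ x => (line0 sS θ x).deriv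
  have tA : ∀ θ x, deriv (fun σ => A σ x) θ =
      Dv (1, (0, 0)) (fun p : ℝ × (ℝ × ℝ) => A p.1 p.2) (θ, x) :=
    fun θ x => (line0 sA θ x).deriv
  have fl1 := (sA.add_const ν).mul (sS.dv (0, (1, 0)))
  have fl2 := (sA.add_const ν).mul (sS.dv (0, (0, 1)))
  have dF : ∀ θ x, div2 (fun y => (A θ y + ν) • grad (S θ) y) x =
      Dv (0, (1, 0)) (fun q : ℝ × (ℝ × ℝ) => (A q.1 q.2 + ν) *
        Dv (0, (1, 0)) (fun p : ℝ × (ℝ × ℝ) => S p.1 p.2) q) (θ, x)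
      + Dv (0, (0, 1)) (fun q : ℝ × (ℝ × ℝ) => (A q.1 q.2 + ν) *
        Dv (0, (0, 1)) (fun p : ℝ × (ℝ × ℝ) => S p.1 p.2) q) (θ, x) := by
    intro θ x
    rw [← fderiv_slice fl1, ← fderiv_slice fl2]
    simp only [div2, gS, Prod.smul_mk, smul_eq_mul]
  obtain ⟨R1, R2⟩ := core hγ hν hμ sA sS sc1 sc2 (fun p => hA0 p.1 p.2)
    (fun p => by have := hAt p.1 p.2; rwa [tA] at this)
    (fun p => by have := hdiv p.1 p.2; rwa [dC] at this)
    (fun p => by have := heq p.1 p.2; rwa [dC, dF, tS] at this)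
  have k0 := (sS.dv (1, (0, 0))).cont
  have k1 := (sS.dv (0, (1, 0))).cont
  have k2 := (sS.dv (0, (0, 1))).cont
  simp only [gS, tS]
  constructor
  · rw [sharp_eq (by fun_prop)]
    have le : ∫ p : ℝ × (ℝ × ℝ), ‖(Dv (0, (1, 0)) (fun p : ℝ × (ℝ × ℝ) => S p.1 p.2) (p.1, p.2),
        Dv (0, (0, 1)) (fun p : ℝ × (ℝ × ℝ) => S p.1 p.2) (p.1, p.2))‖ ^ 2 ∂mthree
        ≤ (γ / ν) ^ 2 := by
      refine (integral_mono (int_mthree (by fun_prop)) (int_mthree (by fun_prop)) ?_).trans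
        (R1.trans ?_)
      · intro p
        simp only [Prod.norm_def, Real.norm_eq_abs]
        rcases max_choice |Dv (0, (1, 0)) (fun p : ℝ × (ℝ × ℝ) => S p.1 p.2) p|
          |Dv (0, (0, 1)) (fun p : ℝ × (ℝ × ℝ) => S p.1 p.2) p| with h | h <;>
        · rw [h, sq_abs]
          nlinarith [sq_nonneg (Dv (0, (1, 0)) (fun p : ℝ × (ℝ × ℝ) => S p.1 p.2) p),
            sq_nonneg (Dv (0, (0, 1)) (fun p : ℝ × (ℝ × ℝ) => S p.1 p.2) p)]
      · rw [div_pow]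
        apply div_le_div_of_nonneg_left (by positivity) (by positivity)
        nlinarith [sq_nonneg ν]
    calc _ ≤ ((γ / ν) ^ 2) ^ (1/2 : ℝ) :=
          Real.rpow_le_rpow (integral_nonneg fun p => sq_nonneg _) le (by norm_num)
      _ = γ / ν := by
          rw [← Real.sqrt_eq_rpow, Real.sqrt_sq (by positivity)]
  · rw [sharp_eq (by fun_prop)]
    exact Real.rpow_le_rpow (integral_nonneg fun p => sq_nonneg _) R2 (by norm_num)
end
end
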